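/- arXiv:2401.10427 — 2 statements merged into one kernel-verified Lean document; each statement's English description precedes it below -/
import Mathlib

section
/- There is an absolute constant C > 0 and a real number y₀ such that for all x ≥ 1 and all y ≥ y₀, the number N(x,y) of positive integers n ≤ x with ω*(n) ≥ y satisfies N(x,y) ≤ C·x·(log y)/y. -/
open Filter Real

/-- `ω*(n)`: the number of divisors `d` of `n` such that `d + 1` is prime. -/
def omegaStar (n : ℕ) : ℕ := (n.divisors.filter (fun d => Nat.Prime (d + 1))).card

/-!
Writing `n = d * m`, one has to count pairs `(d, m)` with `d + 1` prime and `d * m ≤ N`. First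
discard the irregular `n`, which have too many prime factors, or too many repeated ones, at some
scale `i ≥ k`, where `k` is a large multiple of `log y`; by Rankin's trick there are `O(N / y)` of
them. They would spoil the average: over all `n ≤ N`, the average of `ω*` is about `log log N`.

Over the remaining `n ≤ N`, the total of `ω*` is `O(N * k)`, so Markov's inequality concludes. Pairs
with `d < 2 ^ 2 ^ k` contribute `O(N * k)`, because the reciprocals of the shifted primes up to `x`
sum to `O(log log x)`; pairs with `m < 2 ^ 2 ^ k` contribute `O(N)` by Chebyshev's bound. For
`2 ^ 2 ^ i ≤ min d m < 2 ^ 2 ^ (i + 1)` let `S` be the sum of `1 / q` over the sieving primes `q`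
of scale `i`, so that `S` is about `i * log 2`. As `d * m` is regular, `d` and `m` have together at
most `(5 / 4) * S` sieving prime divisors. Hence the pair is counted at least once by the weight
`2 ^ ((5 / 4) * S) * 2 ^ (-ω(d)) * 2 ^ (-ω(m))`, where `ω` counts sieving prime divisors. By Brun's
pure sieve the sum of `2 ^ (-ω(d))` over the `d ≤ X` with `d + 1` free of sieving primes is
`O(X * exp (-(3 / 2) * S))`, and that of `2 ^ (-ω(m))` over all `m ≤ X` is
`O(X * exp (-(1 / 2) * S))`. So there are `O(2 ^ i * N * exp ((5 / 4) * S * log 2 - 2 * S))` such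
pairs, a bound that decays geometrically in `i`.
-/

section

open Finset

/-- The sum of the reciprocals of the elements of `P`. For a set of primes it is the expected number
of prime factors in `P` of an integer, and it governs the sieve by `P`. -/
noncomputable def reciprocalSum (P : Finset ℕ) : ℝ := ∑ q ∈ P, 1 / (q : ℝ)

lemma reciprocalSum_nonneg (P : Finset ℕ) : 0 ≤ reciprocalSum P :=
  sum_nonneg fun q _ => by positivity

/-! ### Dyadic summation and shifted primes -/

lemma sum_Ico_two_pow_div_le {f c : ℕ → ℝ} (hf : ∀ n, 0 ≤ f n) {a b : ℕ} (hab : a ≤ b)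
    (h : ∀ s ∈ Ico a b, ∑ d ∈ range (2 ^ (s + 1)), f d ≤ c s * 2 ^ s) :
    ∑ d ∈ Ico (2 ^ a) (2 ^ b), f d / d ≤ ∑ s ∈ Ico a b, c s := by
  induction b, hab using Nat.le_induction with
  | base => simp
  | succ b hab ih =>
    have block : ∑ d ∈ Ico (2 ^ b) (2 ^ (b + 1)), f d / d ≤ c b := by
      calc ∑ d ∈ Ico (2 ^ b) (2 ^ (b + 1)), f d / d
          ≤ ∑ d ∈ Ico (2 ^ b) (2 ^ (b + 1)), f d / 2 ^ b := by
            refine sum_le_sum fun d hd => ?_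
            have : (2 : ℝ) ^ b ≤ d := mod_cast (mem_Ico.1 hd).1
            exact div_le_div_of_nonneg_left (hf d) (by positivity) this
        _ = (∑ d ∈ Ico (2 ^ b) (2 ^ (b + 1)), f d) / 2 ^ b := by rw [sum_div]
        _ ≤ (∑ d ∈ range (2 ^ (b + 1)), f d) / 2 ^ b := by
            gcongr
            · exact fun _ _ _ => hf _
            · rw [range_eq_Ico]
              exact Ico_subset_Ico_left zero_le
        _ ≤ c b := (div_le_iff₀ (by positivity)).2 (h b (mem_Ico.2 ⟨hab, b.lt_succ_self⟩))
    rw [sum_Ico_succ_top hab, ← sum_Ico_consecutive _ (Nat.pow_le_pow_right two_pos hab)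
      (Nat.pow_le_pow_right two_pos b.le_succ)]
    exact add_le_add (ih fun s hs => h s (Ico_subset_Ico_right b.le_succ hs)) block

lemma primeCounting_le {n : ℕ} (hn : 2 ≤ n) : (Nat.primeCounting n : ℝ) ≤ 8 * n / log n := by
  have hn' : (2 : ℝ) ≤ n := mod_cast hn
  have hlog : 0 < log n := log_pos (by linarith)
  have hlog4 : log 4 ≤ 2 := by
    rw [show (4 : ℝ) = 2 ^ 2 by norm_num, log_pow]
    push_cast
    linarith [log_two_lt_d9]
  have hlog_sqrt : log √n = log n / 2 := log_sqrt (by linarith)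
  have hlog_le : log n ≤ 2 * √n := by linarith [log_le_self (sqrt_nonneg (n : ℝ))]
  calc (Nat.primeCounting n : ℝ)
      ≤ log 4 * n / log √n + √n := by
        simpa using Chebyshev.pi_le_log4_mul_div (x := (n : ℝ)) (by linarith)
    _ = (2 * log 4 * n + √n * log n) / log n := by
        rw [hlog_sqrt]
        field_simp
    _ ≤ (2 * 2 * n + √n * (2 * √n)) / log n := by gcongr
    _ = (4 * n + 2 * (√n * √n)) / log n := by ring
    _ ≤ 8 * n / log n := by
        rw [mul_self_sqrt (by linarith)]
        gcongr
        linarith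

lemma card_filter_range_succ_prime (n : ℕ) :
    #{d ∈ range n | (d + 1).Prime} = Nat.primeCounting n := by
  rw [Nat.primeCounting, Nat.primeCounting', Nat.count_succ', Nat.count_eq_card_filter_range]
  simp [Nat.not_prime_zero]

lemma reciprocalSum_filter_succ_prime_le (k : ℕ) :
    reciprocalSum {d ∈ Ico 1 (2 ^ 2 ^ k) | (d + 1).Prime} ≤ 24 * (k + 1) := by
  have chebyshev (s : ℕ) :
      ∑ d ∈ range (2 ^ (s + 1)), (if (d + 1).Prime then (1 : ℝ) else 0)
        ≤ 24 / (s + 1) * 2 ^ s := by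
    rw [sum_boole, card_filter_range_succ_prime]
    refine (primeCounting_le (by rw [pow_succ]; linarith [s.one_le_two_pow])).trans ?_
    push_cast
    rw [log_pow, pow_succ, div_mul_eq_mul_div, div_le_div_iff₀ (by positivity) (by positivity)]
    push_cast
    have : (0 : ℝ) < 2 ^ s * (s + 1) := by positivity
    nlinarith [log_two_gt_d9]
  calc reciprocalSum {d ∈ Ico 1 (2 ^ 2 ^ k) | (d + 1).Prime}
      = ∑ d ∈ Ico (2 ^ 0) (2 ^ 2 ^ k), (if Nat.Prime (d + 1) then 1 else 0) / (d : ℝ) := by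
        simp [reciprocalSum, sum_filter, ite_div]
    _ ≤ ∑ s ∈ Ico (0 : ℕ) (2 ^ k), 24 / ((s : ℝ) + 1) :=
        sum_Ico_two_pow_div_le (fun _ => by positivity) zero_le fun s _ => chebyshev s
    _ = 24 * (harmonic (2 ^ k) : ℝ) := by
        simp [harmonic, mul_sum, div_eq_mul_inv]
    _ ≤ 24 * (1 + log (2 ^ k : ℕ)) := by gcongr; exact harmonic_le_one_add_log _
    _ ≤ 24 * (k + 1) := by
        push_cast
        rw [log_pow]
        nlinarith [log_two_lt_d9, (Nat.cast_nonneg k : (0 : ℝ) ≤ k)]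

lemma sum_Icc_filter_mul_le {G : ℕ → ℝ} (hG : ∀ n, 0 ≤ G n) {b : ℝ} (hb : 0 ≤ b) {M : ℕ}
    (hM : 0 < M) (hGb : ∀ X : ℕ, M ≤ X → ∑ m ∈ range X, G m ≤ b * X) {d : ℕ} (hd : 0 < d)
    (N : ℕ) : ∑ m ∈ Icc M N with d * m ≤ N, G m ≤ 2 * b * N / d := by
  have mem_le {m : ℕ} (hm : m ∈ {m ∈ Icc M N | d * m ≤ N}) : M ≤ m ∧ m ≤ N / d := by
    rw [mem_filter, mem_Icc] at hm
    exact ⟨hm.1.1, (Nat.le_div_iff_mul_le hd).2 (mul_comm d m ▸ hm.2)⟩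
  obtain hlt | hle := lt_or_ge (N / d) M
  · rw [sum_eq_zero fun m hm => absurd (mem_le hm) (by omega)]
    positivity
  calc ∑ m ∈ Icc M N with d * m ≤ N, G m
      ≤ ∑ m ∈ range (N / d + 1), G m :=
        sum_le_sum_of_subset_of_nonneg
          (fun m hm => mem_range.2 (Nat.lt_succ_of_le (mem_le hm).2)) fun _ _ _ => hG _
    _ ≤ b * (N / d + 1 : ℕ) := hGb _ (by omega)
    _ ≤ b * (2 * (N / d : ℝ)) := by
        have h1 : (1 : ℝ) ≤ (N / d : ℕ) := mod_cast hM.trans_le hle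
        have h2 : ((N / d : ℕ) : ℝ) ≤ N / d := Nat.cast_div_le
        gcongr
        push_cast
        linarith
    _ = 2 * b * N / d := by ring

lemma sum_filter_mul_le {F G : ℕ → ℝ} (hF : ∀ n, 0 ≤ F n) (hG : ∀ n, 0 ≤ G n) {bF bG : ℝ}
    (hbG : 0 ≤ bG) {U V M : ℕ} (hUV : U ≤ V) (hM : 0 < M)
    (hFb : ∀ X : ℕ, 2 ^ U ≤ X → ∑ d ∈ range X, F d ≤ bF * X)
    (hGb : ∀ X : ℕ, M ≤ X → ∑ m ∈ range X, G m ≤ bG * X) (N : ℕ) :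
    ∑ p ∈ Ico (2 ^ U) (2 ^ V) ×ˢ Icc M N with p.1 * p.2 ≤ N, F p.1 * G p.2
      ≤ 4 * (V - U : ℕ) * bF * bG * N := by
  have inner {d : ℕ} (hd : d ∈ Ico (2 ^ U) (2 ^ V)) :
      ∑ m ∈ Icc M N, (if d * m ≤ N then F d * G m else 0) ≤ 2 * bG * N * (F d / d) := by
    rw [← sum_filter, ← mul_sum]
    calc F d * ∑ m ∈ Icc M N with d * m ≤ N, G m ≤ F d * (2 * bG * N / d) := by
          gcongr
          · exact hF d
          · exact sum_Icc_filter_mul_le hG hbG hM hGb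
              (Nat.two_pow_pos U |>.trans_le (mem_Ico.1 hd).1) N
      _ = 2 * bG * N * (F d / d) := by ring
  have outer : ∑ d ∈ Ico (2 ^ U) (2 ^ V), F d / d ≤ ∑ _s ∈ Ico U V, 2 * bF := by
    refine sum_Ico_two_pow_div_le hF hUV fun s hs => ?_
    refine (hFb _ (Nat.pow_le_pow_right two_pos ?_)).trans_eq (by push_cast; ring)
    exact (mem_Ico.1 hs).1.trans s.le_succ
  calc ∑ p ∈ Ico (2 ^ U) (2 ^ V) ×ˢ Icc M N with p.1 * p.2 ≤ N, F p.1 * G p.2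
      ≤ ∑ d ∈ Ico (2 ^ U) (2 ^ V), 2 * bG * N * (F d / d) := by
        rw [sum_filter, sum_product]
        exact sum_le_sum fun d hd => inner hd
    _ ≤ 2 * bG * N * ∑ _s ∈ Ico U V, 2 * bF := by
        rw [← mul_sum]
        gcongr
    _ = 4 * (V - U : ℕ) * bF * bG * N := by
        rw [sum_const, Nat.card_Ico, nsmul_eq_mul]
        ring

lemma sum_filter_min_mem_Ico_mul_le {F G : ℕ → ℝ} (hF : ∀ n, 0 ≤ F n) (hG : ∀ n, 0 ≤ G n)
    {bF bG : ℝ} (hbF : 0 ≤ bF) (hbG : 0 ≤ bG) {U V : ℕ} (hUV : U ≤ V)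
    (hFb : ∀ X : ℕ, 2 ^ U ≤ X → ∑ d ∈ range X, F d ≤ bF * X)
    (hGb : ∀ X : ℕ, 2 ^ U ≤ X → ∑ m ∈ range X, G m ≤ bG * X) (N : ℕ) :
    ∑ p ∈ Icc 1 N ×ˢ Icc 1 N with p.1 * p.2 ≤ N ∧ min p.1 p.2 ∈ Ico (2 ^ U) (2 ^ V),
      F p.1 * G p.2 ≤ 8 * (V - U : ℕ) * bF * bG * N := by
  have hM : 0 < 2 ^ U := Nat.two_pow_pos U
  have hFG (p : ℕ × ℕ) : 0 ≤ F p.1 * G p.2 := mul_nonneg (hF _) (hG _)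
  set A := {p ∈ Ico (2 ^ U) (2 ^ V) ×ˢ Icc (2 ^ U) N | p.1 * p.2 ≤ N} with hA
  have subset_union : {p ∈ Icc 1 N ×ˢ Icc 1 N | p.1 * p.2 ≤ N ∧
      min p.1 p.2 ∈ Ico (2 ^ U) (2 ^ V)} ⊆ A ∪ A.image Prod.swap := by
    rintro ⟨d, m⟩ h
    simp only [mem_filter, mem_product, mem_Icc, mem_Ico, le_min_iff, min_lt_iff] at h
    obtain ⟨⟨⟨-, hd⟩, -, hm⟩, hdm, ⟨hUd, hUm⟩, hV | hV⟩ := h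
    · exact mem_union_left _ (by simp [hA, hUd, hUm, hV, hm, hdm])
    · exact mem_union_right _
        (mem_image.2 ⟨(m, d), by simp [hA, hUd, hUm, hV, hd, mul_comm m d, hdm], rfl⟩)
  calc ∑ p ∈ Icc 1 N ×ˢ Icc 1 N with p.1 * p.2 ≤ N ∧ min p.1 p.2 ∈ Ico (2 ^ U) (2 ^ V),
        F p.1 * G p.2
      ≤ ∑ p ∈ A ∪ A.image Prod.swap, F p.1 * G p.2 :=
        sum_le_sum_of_subset_of_nonneg subset_union fun p _ _ => hFG p
    _ ≤ ∑ p ∈ A, F p.1 * G p.2 + ∑ p ∈ A.image Prod.swap, F p.1 * G p.2 := by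
        rw [← sum_union_inter]
        exact le_add_of_nonneg_right (sum_nonneg fun p _ => hFG p)
    _ = ∑ p ∈ A, F p.1 * G p.2 + ∑ p ∈ A, G p.1 * F p.2 := by
        rw [sum_image Prod.swap_injective.injOn]
        simp only [Prod.fst_swap, Prod.snd_swap, mul_comm]
    _ ≤ 4 * (V - U : ℕ) * bF * bG * N + 4 * (V - U : ℕ) * bG * bF * N :=
        add_le_add (sum_filter_mul_le hF hG hbG hUV hM hFb hGb N)
          (sum_filter_mul_le hG hF hbF hUV hM hGb hFb N)
    _ = 8 * (V - U : ℕ) * bF * bG * N := by ring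

/-! ### Truncated inclusion–exclusion -/

/-- The inclusion–exclusion expansion of `∏ i ∈ s, (1 - g i)`, truncated to the terms of degree
at most `r` in `g`. -/
noncomputable def truncInclExcl {ι : Type*} (g : ι → ℝ) (s : Finset ι) (r : ℕ) : ℝ :=
  ∑ j ∈ range (r + 1), (-1) ^ j * ∑ S ∈ s.powersetCard j, ∏ i ∈ S, g i

section TruncInclExcl

variable {ι : Type*} {g : ι → ℝ} {s : Finset ι}

lemma sum_powersetCard_insert_prod [DecidableEq ι] {a : ι} (ha : a ∉ s) (j : ℕ) :
    ∑ S ∈ (insert a s).powersetCard (j + 1), ∏ i ∈ S, g i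
      = ∑ S ∈ s.powersetCard (j + 1), ∏ i ∈ S, g i
        + g a * ∑ S ∈ s.powersetCard j, ∏ i ∈ S, g i := by
  have notMem {n : ℕ} {S : Finset ι} (hS : S ∈ s.powersetCard n) : a ∉ S :=
    fun h => ha ((mem_powersetCard.1 hS).1 h)
  rw [powersetCard_succ_insert ha, sum_union, sum_image, mul_sum]
  · congr 1
    exact sum_congr rfl fun S hS => prod_insert (notMem hS)
  · intro S hS T hT hST
    rw [← erase_insert (notMem hS), hST, erase_insert (notMem hT)]
  · refine disjoint_left.2 fun S hS hS' => ?_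
    obtain ⟨T, -, rfl⟩ := mem_image.1 hS'
    exact notMem hS (mem_insert_self a T)

lemma truncInclExcl_zero : truncInclExcl g s 0 = 1 := by
  simp [truncInclExcl]

lemma truncInclExcl_succ (r : ℕ) : truncInclExcl g s (r + 1)
    = truncInclExcl g s r + (-1) ^ (r + 1) * ∑ S ∈ s.powersetCard (r + 1), ∏ i ∈ S, g i :=
  sum_range_succ _ _

lemma truncInclExcl_empty (r : ℕ) : truncInclExcl g ∅ r = 1 := by
  induction r with
  | zero => exact truncInclExcl_zero
  | succ r ih =>
    rw [truncInclExcl_succ, ih, powersetCard_eq_empty.2 (by simp)]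
    simp

lemma truncInclExcl_insert [DecidableEq ι] {a : ι} (ha : a ∉ s) (r : ℕ) :
    truncInclExcl g (insert a s) (r + 1)
      = truncInclExcl g s (r + 1) - g a * truncInclExcl g s r := by
  induction r with
  | zero =>
    simp only [truncInclExcl_succ, truncInclExcl_zero, sum_powersetCard_insert_prod ha]
    simp
    ring
  | succ r ih =>
    rw [truncInclExcl_succ, ih, sum_powersetCard_insert_prod ha, truncInclExcl_succ (r + 1),
      truncInclExcl_succ r]
    ring

/-- The Bonferroni inequalities, in a form that covers both parities at once. -/
lemma neg_one_pow_mul_truncInclExcl_sub_nonneg (h0 : ∀ i ∈ s, 0 ≤ g i) (h1 : ∀ i ∈ s, g i ≤ 1)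
    (r : ℕ) : 0 ≤ (-1) ^ r * (truncInclExcl g s r - ∏ i ∈ s, (1 - g i)) := by
  classical
  induction s using Finset.induction_on generalizing r with
  | empty => simp [truncInclExcl_empty]
  | insert a s ha ih =>
    rw [forall_mem_insert] at h0 h1
    cases r with
    | zero =>
      simp only [truncInclExcl_zero, pow_zero, one_mul, sub_nonneg]
      refine prod_le_one ?_ ?_ <;> simp only [forall_mem_insert]
      · exact ⟨by linarith, fun i hi => by linarith [h1.2 i hi]⟩
      · exact ⟨by linarith, fun i hi => by linarith [h0.2 i hi]⟩
    | succ r =>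
      have ih₁ := ih h0.2 h1.2 (r + 1)
      have ih₀ := mul_nonneg h0.1 (ih h0.2 h1.2 r)
      rw [truncInclExcl_insert ha, prod_insert ha]
      rw [pow_succ] at ih₁ ⊢
      linear_combination ih₁ + ih₀

lemma prod_one_sub_le_truncInclExcl (h0 : ∀ i ∈ s, 0 ≤ g i) (h1 : ∀ i ∈ s, g i ≤ 1) {r : ℕ}
    (hr : Even r) : ∏ i ∈ s, (1 - g i) ≤ truncInclExcl g s r := by
  simpa [hr.neg_one_pow] using neg_one_pow_mul_truncInclExcl_sub_nonneg h0 h1 r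

lemma truncInclExcl_le_prod_one_sub (h0 : ∀ i ∈ s, 0 ≤ g i) (h1 : ∀ i ∈ s, g i ≤ 1) {r : ℕ}
    (hr : Odd r) : truncInclExcl g s r ≤ ∏ i ∈ s, (1 - g i) := by
  simpa [hr.neg_one_pow] using neg_one_pow_mul_truncInclExcl_sub_nonneg h0 h1 r

/-- Rankin's trick: on sets of size `j`, weigh each element by an extra factor `t`. -/
lemma pow_mul_sum_powersetCard_prod_le_exp (h0 : ∀ i ∈ s, 0 ≤ g i) {t : ℝ} (ht : 0 ≤ t) (j : ℕ) :
    t ^ j * ∑ S ∈ s.powersetCard j, ∏ i ∈ S, g i ≤ exp (t * ∑ i ∈ s, g i) := by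
  calc t ^ j * ∑ S ∈ s.powersetCard j, ∏ i ∈ S, g i
      = ∑ S ∈ s.powersetCard j, ∏ i ∈ S, t * g i := by
        rw [mul_sum]
        refine sum_congr rfl fun S hS => ?_
        rw [prod_mul_distrib, prod_const, (mem_powersetCard.1 hS).2]
    _ ≤ ∑ S ∈ s.powerset, ∏ i ∈ S, t * g i :=
        sum_le_sum_of_subset_of_nonneg
          (fun S hS => mem_powerset.2 (mem_powersetCard.1 hS).1)
          fun S hS _ => prod_nonneg fun i hi => mul_nonneg ht (h0 i (mem_powerset.1 hS hi))
    _ = ∏ i ∈ s, (1 + t * g i) := (prod_one_add s).symm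
    _ ≤ ∏ i ∈ s, exp (t * g i) :=
        prod_le_prod (fun i hi => by have := h0 i hi; positivity)
          fun i _ => by linarith [add_one_le_exp (t * g i)]
    _ = exp (t * ∑ i ∈ s, g i) := by rw [← exp_sum, mul_sum]

lemma truncInclExcl_le_two_mul_exp (h0 : ∀ i ∈ s, 0 ≤ g i) (h1 : ∀ i ∈ s, g i ≤ 1) {r : ℕ}
    (hr : 4 * ∑ i ∈ s, g i ≤ 2 * r + 1) :
    truncInclExcl g s (2 * r) ≤ 2 * exp (-∑ i ∈ s, g i) := by
  set A := ∑ i ∈ s, g i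
  set E := ∑ S ∈ s.powersetCard (2 * r + 1), ∏ i ∈ S, g i
  have product_le : ∏ i ∈ s, (1 - g i) ≤ exp (-A) := by
    rw [← sum_neg_distrib, exp_sum]
    exact prod_le_prod (fun i hi => by linarith [h1 i hi]) fun i _ => one_sub_le_exp_neg _
  have next_term_le : E ≤ exp (-A) := by
    have rankin : exp 1 ^ (2 * r + 1) * E ≤ exp (exp 1 * A) :=
      pow_mul_sum_powersetCard_prod_le_exp h0 (exp_pos 1).le _
    have hA : 0 ≤ A := sum_nonneg h0
    rw [← exp_nat_mul, mul_one, ← le_div_iff₀' (exp_pos _), ← exp_sub] at rankin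
    refine rankin.trans (exp_le_exp.2 ?_)
    push_cast
    nlinarith [exp_one_lt_three]
  have odd_trunc : truncInclExcl g s (2 * r) - E ≤ ∏ i ∈ s, (1 - g i) := by
    have hodd : Odd (2 * r + 1) := odd_two_mul_add_one r
    have h := truncInclExcl_le_prod_one_sub h0 h1 hodd
    rwa [truncInclExcl_succ, hodd.neg_one_pow, neg_one_mul, ← sub_eq_add_neg] at h
  linarith

end TruncInclExcl

/-! ### Counting in residue classes -/

lemma abs_card_filter_modEq_sub_le {M : ℕ} (hM : 0 < M) (v X : ℕ) :
    |(#{d ∈ range X | d ≡ v [MOD M]} : ℝ) - X / M| ≤ 1 := by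
  have floor_le : ((X / M : ℕ) : ℝ) ≤ X / M := Nat.cast_div_le
  have lt_floor : (X : ℝ) / M < (X / M : ℕ) + 1 := by
    simpa [Nat.floor_div_eq_div] using Nat.lt_floor_add_one ((X : ℝ) / M)
  rw [← Nat.count_eq_card_filter_range, Nat.count_modEq_card X hM v, abs_le]
  split_ifs <;> push_cast <;> constructor <;> linarith

lemma exists_forall_dvd_and_dvd_succ_iff_modEq {a b : ℕ} (hb : 0 < b) (hab : a.Coprime b) :
    ∃ v, ∀ d, a ∣ d ∧ b ∣ d + 1 ↔ d ≡ v [MOD a * b] := by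
  obtain ⟨v, hva, hvb⟩ := Nat.chineseRemainder hab 0 (b - 1)
  have hbv : v + 1 ≡ 0 [MOD b] :=
    (hvb.add_right 1).trans (by simp [Nat.sub_add_cancel hb])
  refine ⟨v, fun d => ?_⟩
  rw [← Nat.modEq_and_modEq_iff_modEq_mul hab, ← Nat.modEq_zero_iff_dvd, ← Nat.modEq_zero_iff_dvd]
  exact and_congr ⟨fun h => h.trans hva.symm, fun h => h.trans hva⟩
    ⟨fun h => (h.trans hbv.symm).add_right_cancel' 1, fun h => (h.add_right 1).trans hbv⟩

lemma abs_card_filter_dvd_and_dvd_succ_sub_le {a b : ℕ} (ha : 0 < a) (hb : 0 < b)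
    (hab : a.Coprime b) (X : ℕ) :
    |(#{d ∈ range X | a ∣ d ∧ b ∣ d + 1} : ℝ) - X / (a * b)| ≤ 1 := by
  obtain ⟨v, hv⟩ := exists_forall_dvd_and_dvd_succ_iff_modEq hb hab
  simpa [hv] using abs_card_filter_modEq_sub_le (Nat.mul_pos ha hb) v X

/-! ### Brun's pure sieve -/

/-- The weight given by a prime `q` to the integer `d` in a sieve that removes a proportion `α`
of the multiples `d` of `q` and a proportion `β` of those with `q ∣ d + 1`. -/
noncomputable def localWeight (α β : ℝ) (d q : ℕ) : ℝ :=
  α * (if q ∣ d then 1 else 0) + β * (if q ∣ d + 1 then 1 else 0)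

/-- The proportion of `d` surviving the sieve by all primes of `P`, see `localWeight`. -/
noncomputable def sieveWeight (α β : ℝ) (P : Finset ℕ) (d : ℕ) : ℝ :=
  ∏ q ∈ P, (1 - localWeight α β d q)

section Sieve

variable {α β : ℝ} {P : Finset ℕ}

lemma localWeight_mem_Icc (hα : α ∈ Set.Icc 0 1) (hβ : β ∈ Set.Icc 0 1) {q : ℕ} (hq : q ≠ 1)
    (d : ℕ) : localWeight α β d q ∈ Set.Icc 0 1 := by
  have not_both (h : q ∣ d) : ¬ q ∣ d + 1 := fun h' =>
    hq (Nat.dvd_one.1 ((Nat.dvd_add_right h).1 h'))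
  rw [Set.mem_Icc] at hα hβ
  by_cases h : q ∣ d
  · simp [localWeight, h, not_both h, hα]
  · by_cases h' : q ∣ d + 1 <;> simp [localWeight, h, h', hβ]

lemma sieveWeight_nonneg (hα : α ∈ Set.Icc 0 1) (hβ : β ∈ Set.Icc 0 1) (hP : ∀ q ∈ P, q.Prime)
    (d : ℕ) : 0 ≤ sieveWeight α β P d :=
  prod_nonneg fun q hq => sub_nonneg.2 (localWeight_mem_Icc hα hβ (hP q hq).ne_one d).2

lemma prod_dvd_iff_forall_prime_dvd (hP : ∀ q ∈ P, q.Prime) {n : ℕ} :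
    ∏ q ∈ P, q ∣ n ↔ ∀ q ∈ P, q ∣ n :=
  ⟨fun h _ hq => (dvd_prod_of_mem _ hq).trans h, prod_primes_dvd n fun q hq => (hP q hq).prime⟩

lemma coprime_prod_prod_sdiff (hP : ∀ q ∈ P, q.Prime) {A : Finset ℕ} (hA : A ⊆ P) :
    (∏ q ∈ A, q).Coprime (∏ q ∈ P \ A, q) := by
  refine Nat.Coprime.prod_left fun p hp => Nat.Coprime.prod_right fun q hq => ?_
  obtain ⟨hqP, hqA⟩ := mem_sdiff.1 hq
  exact (Nat.coprime_primes (hP p (hA hp)) (hP q hqP)).2 fun h => hqA (h ▸ hp)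

lemma prod_localWeight_eq_sum_powerset (hP : ∀ q ∈ P, q.Prime) (d : ℕ) :
    ∏ q ∈ P, localWeight α β d q = ∑ A ∈ P.powerset, α ^ #A * β ^ #(P \ A) *
      (if ∏ q ∈ A, q ∣ d ∧ ∏ q ∈ P \ A, q ∣ d + 1 then 1 else 0) := by
  simp only [localWeight, prod_add]
  refine sum_congr rfl fun A hA => ?_
  have hA' : ∀ q ∈ A, q.Prime := fun q hq => hP q (mem_powerset.1 hA hq)
  have hsdiff : ∀ q ∈ P \ A, q.Prime := fun q hq => hP q (mem_sdiff.1 hq).1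
  rw [prod_mul_distrib, prod_mul_distrib, prod_const, prod_const, prod_boole, prod_boole,
    mul_mul_mul_comm, boole_mul, ← ite_and]
  simp only [prod_dvd_iff_forall_prime_dvd hA', prod_dvd_iff_forall_prime_dvd hsdiff]

lemma abs_sum_prod_localWeight_sub_le (hα : α ∈ Set.Icc 0 1) (hβ : β ∈ Set.Icc 0 1)
    (hP : ∀ q ∈ P, q.Prime) (X : ℕ) :
    |∑ d ∈ range X, ∏ q ∈ P, localWeight α β d q - X * ∏ q ∈ P, ((α + β) / q)| ≤ 2 ^ #P := by
  have main_term : X * ∏ q ∈ P, ((α + β) / q) = ∑ A ∈ P.powerset, α ^ #A * β ^ #(P \ A) *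
      (X / ((∏ q ∈ A, q : ℕ) * (∏ q ∈ P \ A, q : ℕ))) := by
    simp only [add_div, prod_add, mul_sum, prod_div_distrib, prod_const]
    refine sum_congr rfl fun A _ => ?_
    push_cast
    rw [div_mul_div_comm]
    ring
  have coeff_le {A : Finset ℕ} : |α ^ #A * β ^ #(P \ A)| ≤ 1 := by
    rw [abs_mul, abs_pow, abs_pow, abs_of_nonneg hα.1, abs_of_nonneg hβ.1]
    exact mul_le_one₀ (pow_le_one₀ hα.1 hα.2) (pow_nonneg hβ.1 _) (pow_le_one₀ hβ.1 hβ.2)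
  have prod_pos {A : Finset ℕ} (hA : A ⊆ P) : 0 < ∏ q ∈ A, q :=
    prod_pos fun q hq => (hP q (hA hq)).pos
  simp only [prod_localWeight_eq_sum_powerset hP, main_term]
  rw [sum_comm, ← sum_sub_distrib]
  calc _ ≤ ∑ A ∈ P.powerset, |_| := abs_sum_le_sum_abs _ _
    _ ≤ ∑ _A ∈ P.powerset, (1 : ℝ) := sum_le_sum fun A hA => ?_
    _ = 2 ^ #P := by simp
  rw [mem_powerset] at hA
  rw [← mul_sum, sum_boole, ← mul_sub, abs_mul]
  exact mul_le_one₀ coeff_le (abs_nonneg _) (abs_card_filter_dvd_and_dvd_succ_sub_le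
    (prod_pos hA) (prod_pos sdiff_subset) (coprime_prod_prod_sdiff hP hA) X)

lemma sum_truncInclExcl_localWeight_le (hα : α ∈ Set.Icc 0 1) (hβ : β ∈ Set.Icc 0 1)
    (hP : ∀ q ∈ P, q.Prime) (r X : ℕ) :
    ∑ d ∈ range X, truncInclExcl (localWeight α β d) P r
      ≤ X * truncInclExcl (fun q : ℕ => (α + β) / q) P r + (r + 1) * (2 * (#P + 1)) ^ r := by
  set error : Finset ℕ → ℝ := fun S =>
    ∑ d ∈ range X, ∏ q ∈ S, localWeight α β d q - X * ∏ q ∈ S, ((α + β) / q)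
  have sum_sub_eq : ∑ d ∈ range X, truncInclExcl (localWeight α β d) P r
      - X * truncInclExcl (fun q : ℕ => (α + β) / q) P r
      = ∑ j ∈ range (r + 1), (-1) ^ j * ∑ S ∈ P.powersetCard j, error S := by
    simp only [truncInclExcl, error]
    rw [sum_comm, mul_sum, ← sum_sub_distrib]
    refine sum_congr rfl fun j _ => ?_
    rw [← mul_sum, sum_comm, mul_left_comm, ← mul_sub, mul_sum (a := (X : ℝ)), sum_sub_distrib]
  have degree_le {j : ℕ} (hj : j ∈ range (r + 1)) :
      (-1) ^ j * ∑ S ∈ P.powersetCard j, error S ≤ (2 * (#P + 1)) ^ r := by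
    calc (-1) ^ j * ∑ S ∈ P.powersetCard j, error S
        ≤ |∑ S ∈ P.powersetCard j, error S| := by
          refine (le_abs_self _).trans_eq ?_
          rw [abs_mul, abs_neg_one_pow, one_mul]
      _ ≤ ∑ S ∈ P.powersetCard j, |error S| := abs_sum_le_sum_abs _ _
      _ ≤ ∑ _S ∈ P.powersetCard j, (2 : ℝ) ^ j := by
          refine sum_le_sum fun S hS => ?_
          obtain ⟨hSP, rfl⟩ := mem_powersetCard.1 hS
          exact abs_sum_prod_localWeight_sub_le hα hβ (fun q hq => hP q (hSP hq)) X
      _ = (#P).choose j * 2 ^ j := by simp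
      _ ≤ #P ^ j * 2 ^ j := by gcongr; exact_mod_cast Nat.choose_le_pow _ _
      _ ≤ (#P + 1) ^ j * 2 ^ j := by gcongr; linarith
      _ = (2 * (#P + 1)) ^ j := by rw [mul_pow, mul_comm]
      _ ≤ (2 * (#P + 1)) ^ r :=
          pow_le_pow_right₀ (by linarith [(#P).cast_nonneg (α := ℝ)])
            (Nat.lt_succ_iff.1 (mem_range.1 hj))
  have sum_error_le := sum_le_sum fun j (hj : j ∈ range (r + 1)) => degree_le hj
  rw [← sum_sub_eq, sum_const, card_range, nsmul_eq_mul] at sum_error_le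
  push_cast at sum_error_le
  linarith

lemma sum_sieveWeight_le (hα : α ∈ Set.Icc 0 1) (hβ : β ∈ Set.Icc 0 1)
    (hP : ∀ q ∈ P, q.Prime) {r : ℕ} (hr : 4 * ((α + β) * reciprocalSum P) ≤ 2 * r + 1)
    (X : ℕ) :
    ∑ d ∈ range X, sieveWeight α β P d ≤ 2 * X * exp (-((α + β) * reciprocalSum P))
      + (2 * r + 1) * (2 * (#P + 1)) ^ (2 * r) := by
  have hdensity : (α + β) * reciprocalSum P = ∑ q ∈ P, (α + β) / q := by
    simp only [reciprocalSum, mul_sum, mul_one_div]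
  have main_term_le : truncInclExcl (fun q : ℕ => (α + β) / q) P (2 * r)
      ≤ 2 * exp (-∑ q ∈ P, (α + β) / q) := by
    refine truncInclExcl_le_two_mul_exp
      (fun q _ => div_nonneg (add_nonneg hα.1 hβ.1) q.cast_nonneg) (fun q hq => ?_)
      (hdensity ▸ hr)
    have : (2 : ℝ) ≤ q := mod_cast (hP q hq).two_le
    exact (div_le_one (by linarith)).2 (by linarith [hα.2, hβ.2])
  rw [hdensity]
  calc ∑ d ∈ range X, sieveWeight α β P d
      ≤ ∑ d ∈ range X, truncInclExcl (localWeight α β d) P (2 * r) :=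
        sum_le_sum fun d _ => prod_one_sub_le_truncInclExcl
          (fun q hq => (localWeight_mem_Icc hα hβ (hP q hq).ne_one d).1)
          (fun q hq => (localWeight_mem_Icc hα hβ (hP q hq).ne_one d).2) (even_two_mul r)
    _ ≤ X * truncInclExcl (fun q : ℕ => (α + β) / q) P (2 * r)
          + ((2 * r : ℕ) + 1) * (2 * (#P + 1)) ^ (2 * r) :=
        sum_truncInclExcl_localWeight_le hα hβ hP (2 * r) X
    _ ≤ X * (2 * exp (-∑ q ∈ P, (α + β) / q))
          + ((2 * r : ℕ) + 1) * (2 * (#P + 1)) ^ (2 * r) := by gcongr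
    _ = _ := by push_cast; ring

end Sieve

/-! ### Sums over primes -/

lemma sum_one_div_sq_le_one {P : Finset ℕ} (hP : ∀ q ∈ P, 1 < q) :
    ∑ q ∈ P, 1 / (q : ℝ) ^ 2 ≤ 1 := by
  calc ∑ q ∈ P, 1 / (q : ℝ) ^ 2
      ≤ ∑ q ∈ Ioc 1 (P.sup id + 1), 1 / (q : ℝ) ^ 2 :=
        sum_le_sum_of_subset_of_nonneg
          (fun q hq => mem_Ioc.2 ⟨hP q hq, (le_sup (f := id) hq).trans (Nat.le_succ _)⟩)
          fun _ _ _ => by positivity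
    _ ≤ ((1 : ℕ) : ℝ)⁻¹ - ((P.sup id + 1 : ℕ) : ℝ)⁻¹ := by
        simpa only [one_div] using sum_Ioc_inv_sq_le_sub (α := ℝ) one_ne_zero (by omega)
    _ ≤ 1 := by
        rw [Nat.cast_one, inv_one]
        exact sub_le_self _ (by positivity)

lemma sum_Ico_inv_le_prod_primesBelow (N : ℕ) :
    ∑ m ∈ Ico 1 N, (m : ℝ)⁻¹ ≤ ∏ p ∈ N.primesBelow, (1 - (p : ℝ)⁻¹)⁻¹ := by
  let inv : ℕ →* ℝ := (invMonoidWithZeroHom : ℝ →*₀ ℝ).toMonoidHom.comp (Nat.castRingHom ℝ)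
  have norm_inv_lt {p : ℕ} (hp : p.Prime) : ‖inv p‖ < 1 := by
    change ‖(p : ℝ)⁻¹‖ < 1
    rw [norm_inv, norm_natCast]
    exact inv_lt_one_of_one_lt₀ (mod_cast hp.one_lt)
  have euler := (hasSum_subtype_iff_indicator (f := fun m : ℕ => (m : ℝ)⁻¹)).1
    (EulerProduct.summable_and_hasSum_smoothNumbers_prod_primesBelow_geometric norm_inv_lt N).2
  calc ∑ m ∈ Ico 1 N, (m : ℝ)⁻¹
      = ∑ m ∈ Ico 1 N, (N.smoothNumbers).indicator (fun m : ℕ => (m : ℝ)⁻¹) m := by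
        refine sum_congr rfl fun m hm => ?_
        rw [Set.indicator_of_mem]
        exact Nat.mem_smoothNumbers_of_lt (mem_Ico.1 hm).1 (mem_Ico.1 hm).2
    _ ≤ ∏ p ∈ N.primesBelow, (1 - (p : ℝ)⁻¹)⁻¹ :=
        sum_le_hasSum _ (fun m _ => Set.indicator_nonneg (fun _ _ => by positivity) m) euler

lemma one_sub_inv_inv_le_exp {x : ℝ} (hx : 2 ≤ x) :
    (1 - x⁻¹)⁻¹ ≤ exp (1 / x + 2 * (1 / x ^ 2)) := by
  calc (1 - x⁻¹)⁻¹ = 1 / x + 1 / (x * (x - 1)) + 1 := by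
        have : x - 1 ≠ 0 := by linarith
        field_simp
        ring
    _ ≤ 1 / x + 2 * (1 / x ^ 2) + 1 := by
        have : 1 / (x * (x - 1)) ≤ 2 * (1 / x ^ 2) := by
          rw [mul_one_div, div_le_div_iff₀ (by nlinarith) (by positivity)]
          nlinarith
        linarith
    _ ≤ exp (1 / x + 2 * (1 / x ^ 2)) := add_one_le_exp _

/-- The lower half of Mertens' second theorem. -/
lemma log_le_exp_reciprocalSum_primesBelow {N : ℕ} (hN : 1 ≤ N) :
    log N ≤ exp (reciprocalSum N.primesBelow + 2) := by
  have two_le {p : ℕ} (hp : p ∈ N.primesBelow) : 2 ≤ p :=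
    (Nat.prime_of_mem_primesBelow hp).two_le
  calc log N ≤ ∑ m ∈ Ico 1 N, (m : ℝ)⁻¹ := by
        have h := log_add_one_le_harmonic (N - 1)
        rw [Nat.sub_add_cancel hN] at h
        refine h.trans_eq ?_
        rw [harmonic, sum_Ico_eq_sum_range]
        push_cast
        simp only [add_comm]
    _ ≤ ∏ p ∈ N.primesBelow, (1 - (p : ℝ)⁻¹)⁻¹ := sum_Ico_inv_le_prod_primesBelow N
    _ ≤ ∏ p ∈ N.primesBelow, exp (1 / (p : ℝ) + 2 * (1 / (p : ℝ) ^ 2)) := by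
        refine prod_le_prod (fun p _ => ?_)
          fun p hp => one_sub_inv_inv_le_exp (mod_cast two_le hp)
        exact inv_nonneg.2 (sub_nonneg.2 (Nat.cast_inv_le_one p))
    _ = exp (reciprocalSum N.primesBelow + 2 * ∑ p ∈ N.primesBelow, 1 / (p : ℝ) ^ 2) := by
        rw [← exp_sum, sum_add_distrib, ← mul_sum, reciprocalSum]
    _ ≤ exp (reciprocalSum N.primesBelow + 2) := by
        gcongr
        linarith [sum_one_div_sq_le_one fun p hp => two_le hp]

lemma log_sub_three_le_reciprocalSum_primesBelow {W : ℕ} (hW : 1 ≤ W) :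
    log W - 3 ≤ reciprocalSum (2 ^ W).primesBelow := by
  have mertens := log_le_exp_reciprocalSum_primesBelow (N := 2 ^ W) Nat.one_le_two_pow
  have log_two_pos : 0 < log 2 := log_pos one_lt_two
  have hW' : (0 : ℝ) < W := mod_cast hW
  push_cast at mertens
  rw [log_pow, ← log_le_iff_le_exp (by positivity), log_mul hW'.ne' log_two_pos.ne'] at mertens
  have neg_one_le : -1 ≤ log (log 2) := by
    rw [le_log_iff_exp_le log_two_pos, exp_neg, inv_le_comm₀ (exp_pos 1) log_two_pos,
      inv_le_iff_one_le_mul₀ log_two_pos]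
    nlinarith [exp_one_gt_d9, log_two_gt_d9]
  linarith

lemma reciprocalSum_primesBelow_le {W i : ℕ} (hW : W ≤ 2 ^ i) :
    reciprocalSum (2 ^ W).primesBelow ≤ 24 * (i + 1) := by
  have two_le {q : ℕ} (hq : q ∈ (2 ^ W).primesBelow) : 2 ≤ q :=
    (Nat.prime_of_mem_primesBelow hq).two_le
  have pred_injOn : Set.InjOn (fun q : ℕ => q - 1) (2 ^ W).primesBelow := fun p hp q hq h => by
    have := two_le hp
    have := two_le hq
    simp only at h
    omega
  calc reciprocalSum (2 ^ W).primesBelow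
      ≤ ∑ q ∈ (2 ^ W).primesBelow, 1 / ((q - 1 : ℕ) : ℝ) := by
        refine sum_le_sum fun q hq => one_div_le_one_div_of_le ?_ (mod_cast q.sub_le 1)
        exact_mod_cast Nat.sub_pos_of_lt (two_le hq)
    _ = reciprocalSum ((2 ^ W).primesBelow.image fun q => q - 1) := by
        rw [reciprocalSum, sum_image pred_injOn]
    _ ≤ reciprocalSum {d ∈ Ico 1 (2 ^ 2 ^ i) | (d + 1).Prime} := by
        refine sum_le_sum_of_subset_of_nonneg (image_subset_iff.2 fun q hq => ?_)
          fun _ _ _ => by positivity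
        have hle := two_le hq
        have hlt := (Nat.lt_of_mem_primesBelow hq).trans_le (Nat.pow_le_pow_right two_pos hW)
        rw [mem_filter, mem_Ico, Nat.sub_add_cancel (by omega)]
        exact ⟨⟨by omega, by omega⟩, Nat.prime_of_mem_primesBelow hq⟩
    _ ≤ 24 * (i + 1) := reciprocalSum_filter_succ_prime_le i

/-! ### Integers with few prime factors in a given set -/

lemma sum_one_add_pow_card_filter_dvd_le {ι : Type*} {s : Finset ι} {f : ι → ℕ}
    (hf : (s : Set ι).Pairwise (Function.onFun Nat.Coprime f)) {t : ℝ} (ht : 0 ≤ t) (N : ℕ) :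
    ∑ n ∈ Icc 1 N, (1 + t) ^ #{i ∈ s | f i ∣ n} ≤ N * exp (t * ∑ i ∈ s, 1 / (f i : ℝ)) := by
  have expand (n : ℕ) : (1 + t) ^ #{i ∈ s | f i ∣ n}
      = ∑ S ∈ s.powerset, if ∀ i ∈ S, f i ∣ n then t ^ #S else 0 := by
    simp only [← prod_const, ← prod_ite_zero, ← prod_one_add, prod_filter, add_ite, add_zero]
  have card_multiples_le {S : Finset ι} (hS : S ⊆ s) :
      (#{n ∈ Icc 1 N | ∀ i ∈ S, f i ∣ n} : ℝ) ≤ N / (∏ i ∈ S, f i : ℕ) := by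
    have dvd_of_forall {n : ℕ} (h : ∀ i ∈ S, f i ∣ n) : ∏ i ∈ S, f i ∣ n :=
      prod_dvd_of_isRelPrime
        (fun i hi j hj hij => Nat.coprime_iff_isRelPrime.1 (hf (hS hi) (hS hj) hij)) h
    calc (#{n ∈ Icc 1 N | ∀ i ∈ S, f i ∣ n} : ℝ)
        ≤ #{n ∈ Ioc 0 N | ∏ i ∈ S, f i ∣ n} := mod_cast card_le_card
          (monotone_filter_right (Icc 1 N) fun _ _ => dvd_of_forall)
      _ = (N / ∏ i ∈ S, f i : ℕ) := by rw [Nat.Ioc_filter_dvd_card_eq_div]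
      _ ≤ N / (∏ i ∈ S, f i : ℕ) := Nat.cast_div_le
  calc ∑ n ∈ Icc 1 N, (1 + t) ^ #{i ∈ s | f i ∣ n}
      = ∑ S ∈ s.powerset, t ^ #S * #{n ∈ Icc 1 N | ∀ i ∈ S, f i ∣ n} := by
        simp only [expand]
        rw [sum_comm]
        refine sum_congr rfl fun S _ => ?_
        rw [← sum_filter, sum_const, nsmul_eq_mul, mul_comm]
    _ ≤ ∑ S ∈ s.powerset, t ^ #S * (N / (∏ i ∈ S, f i : ℕ)) := by
        gcongr with S hS
        exact card_multiples_le (mem_powerset.1 hS)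
    _ = N * ∏ i ∈ s, (1 + t * (1 / f i)) := by
        rw [prod_one_add, mul_sum]
        refine sum_congr rfl fun S _ => ?_
        rw [prod_mul_distrib, prod_const, prod_div_distrib, prod_const_one]
        push_cast
        ring
    _ ≤ N * exp (t * ∑ i ∈ s, 1 / (f i : ℝ)) := by
        rw [mul_sum]
        gcongr
        exact prod_one_add_le_exp_sum s fun i => by positivity

lemma card_filter_lt_card_filter_dvd_le {ι : Type*} {s : Finset ι} {f : ι → ℕ}
    (hf : (s : Set ι).Pairwise (Function.onFun Nat.Coprime f)) {t : ℝ} (ht : 0 ≤ t) (B : ℝ)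
    (N : ℕ) : (#{n ∈ Icc 1 N | B < #{i ∈ s | f i ∣ n}} : ℝ)
      ≤ N * exp (t * ∑ i ∈ s, 1 / (f i : ℝ) - B * log (1 + t)) := by
  have hlog : 0 ≤ log (1 + t) := log_nonneg (by linarith)
  rw [exp_sub, mul_div_assoc', le_div_iff₀ (exp_pos _), ← nsmul_eq_mul]
  refine le_trans ?_ (sum_one_add_pow_card_filter_dvd_le hf ht N)
  calc #{n ∈ Icc 1 N | B < #{i ∈ s | f i ∣ n}} • exp (B * log (1 + t))
      ≤ ∑ n ∈ Icc 1 N with B < #{i ∈ s | f i ∣ n}, (1 + t) ^ #{i ∈ s | f i ∣ n} := by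
        refine card_nsmul_le_sum _ _ _ fun n hn => ?_
        rw [← rpow_natCast, rpow_def_of_pos (by linarith), mul_comm]
        gcongr
        exact (mem_filter.1 hn).2.le
    _ ≤ ∑ n ∈ Icc 1 N, (1 + t) ^ #{i ∈ s | f i ∣ n} :=
        sum_le_sum_of_subset_of_nonneg (filter_subset _ _) fun _ _ _ => by positivity

/-- `n` is regular for a set `P` of primes if it has not many more prime factors in `P` than
expected, and only few of them divide it twice. -/
def IsRegularFor (P : Finset ℕ) (n : ℕ) : Prop :=
  (#{q ∈ P | q ∣ n} : ℝ) ≤ 9 / 8 * reciprocalSum P ∧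
    (#{q ∈ P | q ^ 2 ∣ n} : ℝ) ≤ 1 / 8 * reciprocalSum P

noncomputable instance (P : Finset ℕ) (n : ℕ) : Decidable (IsRegularFor P n) :=
  inferInstanceAs (Decidable (_ ∧ _))

section Regular

variable {P : Finset ℕ}

lemma card_filter_dvd_add_card_filter_dvd_le (P : Finset ℕ) (d m : ℕ) :
    #{q ∈ P | q ∣ d} + #{q ∈ P | q ∣ m} ≤ #{q ∈ P | q ∣ d * m} + #{q ∈ P | q ^ 2 ∣ d * m} := by
  rw [← card_union_add_card_inter, ← filter_or, ← filter_and]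
  gcongr with q _ q _
  · exact fun h => h.elim (·.mul_right m) (·.mul_left d)
  · exact fun h => pow_two q ▸ mul_dvd_mul h.1 h.2

lemma IsRegularFor.card_filter_dvd_add_card_filter_dvd_le {d m : ℕ} (h : IsRegularFor P (d * m)) :
    (#{q ∈ P | q ∣ d} + #{q ∈ P | q ∣ m} : ℝ) ≤ 5 / 4 * reciprocalSum P := by
  have : (#{q ∈ P | q ∣ d} + #{q ∈ P | q ∣ m} : ℝ)
      ≤ #{q ∈ P | q ∣ d * m} + #{q ∈ P | q ^ 2 ∣ d * m} :=
    mod_cast _root_.card_filter_dvd_add_card_filter_dvd_le P d m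
  linarith [h.1, h.2]

variable (hP : ∀ q ∈ P, q.Prime)
include hP

lemma pairwise_coprime_pow (e : ℕ) :
    (P : Set ℕ).Pairwise (Function.onFun Nat.Coprime fun q => q ^ e) := fun p hp q hq hpq =>
  ((Nat.coprime_primes (hP p hp) (hP q hq)).2 hpq).pow e e

lemma card_filter_many_dvd_le (N : ℕ) :
    (#{n ∈ Icc 1 N | 9 / 8 * reciprocalSum P < #{q ∈ P | q ∣ n}} : ℝ)
      ≤ N * exp (-(7 / 1000) * reciprocalSum P) := by
  have rankin := card_filter_lt_card_filter_dvd_le (pairwise_coprime_pow hP 1)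
    (t := 1 / 8) (by norm_num) (9 / 8 * reciprocalSum P) N
  have hlog : 2 / 17 ≤ log (1 + 1 / 8) := by
    have h := le_log_one_add_of_nonneg (x := 1 / 8) (by norm_num)
    norm_num at h ⊢
    exact h
  simp only [pow_one] at rankin
  refine rankin.trans ?_
  gcongr
  change 1 / 8 * reciprocalSum P - _ ≤ _
  nlinarith [reciprocalSum_nonneg P]

lemma card_filter_many_sq_dvd_le (N : ℕ) :
    (#{n ∈ Icc 1 N | 1 / 8 * reciprocalSum P < #{q ∈ P | q ^ 2 ∣ n}} : ℝ)
      ≤ 3 * N * exp (-(7 / 1000) * reciprocalSum P) := by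
  have rankin := card_filter_lt_card_filter_dvd_le (pairwise_coprime_pow hP 2)
    zero_le_one (1 / 8 * reciprocalSum P) N
  have hsq : ∑ q ∈ P, 1 / ((q ^ 2 : ℕ) : ℝ) ≤ 1 := by
    simpa using sum_one_div_sq_le_one fun q hq => (hP q hq).one_lt
  calc _ ≤ N * exp (1 + -(7 / 1000) * reciprocalSum P) := by
        refine rankin.trans ?_
        gcongr
        rw [one_add_one_eq_two]
        nlinarith [reciprocalSum_nonneg P, log_two_gt_d9]
    _ = exp 1 * N * exp (-(7 / 1000) * reciprocalSum P) := by rw [exp_add]; ring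
    _ ≤ 3 * N * exp (-(7 / 1000) * reciprocalSum P) := by
        gcongr
        exact exp_one_lt_three.le

lemma card_filter_not_isRegularFor_le (N : ℕ) :
    (#{n ∈ Icc 1 N | ¬ IsRegularFor P n} : ℝ) ≤ 4 * N * exp (-(7 / 1000) * reciprocalSum P) := by
  have union_bound : #{n ∈ Icc 1 N | ¬ IsRegularFor P n}
      ≤ #{n ∈ Icc 1 N | 9 / 8 * reciprocalSum P < #{q ∈ P | q ∣ n}}
        + #{n ∈ Icc 1 N | 1 / 8 * reciprocalSum P < #{q ∈ P | q ^ 2 ∣ n}} := by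
    simp only [IsRegularFor, not_and_or, not_le, filter_or]
    exact card_union_le _ _
  have := (Nat.cast_le (α := ℝ)).2 union_bound
  push_cast at this
  linarith [card_filter_many_dvd_le hP N, card_filter_many_sq_dvd_le hP N]

end Regular

/-! ### The sieve at doubly exponential scales -/

/-- The binary logarithm of the sieving level used for integers of size `2 ^ 2 ^ i`. It is a little
smaller than `2 ^ i`, so that the remainder term of the sieve is negligible. -/
def levelExponent (i : ℕ) : ℕ := 2 ^ (i - i / 20)

/-- The primes used to sieve integers of size `2 ^ 2 ^ i`. -/
def sievingPrimes (i : ℕ) : Finset ℕ := (2 ^ levelExponent i).primesBelow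

lemma prime_of_mem_sievingPrimes {i q : ℕ} (hq : q ∈ sievingPrimes i) : q.Prime :=
  Nat.prime_of_mem_primesBelow hq

lemma levelExponent_le (i : ℕ) : levelExponent i ≤ 2 ^ i :=
  Nat.pow_le_pow_right two_pos (Nat.sub_le _ _)

lemma one_le_levelExponent (i : ℕ) : 1 ≤ levelExponent i := Nat.one_le_two_pow

lemma lt_of_mem_sievingPrimes {i q : ℕ} (hq : q ∈ sievingPrimes i) : q < 2 ^ 2 ^ i :=
  (Nat.lt_of_mem_primesBelow hq).trans_le (Nat.pow_le_pow_right two_pos (levelExponent_le i))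

lemma reciprocalSum_sievingPrimes_le (i : ℕ) : reciprocalSum (sievingPrimes i) ≤ 24 * (i + 1) :=
  reciprocalSum_primesBelow_le (levelExponent_le i)

lemma le_reciprocalSum_sievingPrimes (i : ℕ) :
    19 / 20 * (6931 / 10000) * i - 3 ≤ reciprocalSum (sievingPrimes i) := by
  have mertens := log_sub_three_le_reciprocalSum_primesBelow (one_le_levelExponent i)
  have exponent_le : (19 : ℝ) / 20 * i ≤ (i - i / 20 : ℕ) := by
    have : (19 : ℝ) * i ≤ 20 * (i - i / 20 : ℕ) := mod_cast (by omega)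
    linarith
  have log_levelExponent : log (levelExponent i) = (i - i / 20 : ℕ) * log 2 := by
    rw [levelExponent, Nat.cast_pow, log_pow, Nat.cast_ofNat]
  have : 19 / 20 * (6931 / 10000) * i ≤ (i - i / 20 : ℕ) * log 2 := by
    rw [mul_right_comm]
    exact mul_le_mul exponent_le (by linarith [log_two_gt_d9]) (by norm_num) (by positivity)
  rw [log_levelExponent] at mertens
  exact (sub_le_sub_right this 3).trans mertens

lemma card_filter_not_isRegularFor_sievingPrimes_le (i N : ℕ) :
    (#{n ∈ Icc 1 N | ¬ IsRegularFor (sievingPrimes i) n} : ℝ) ≤ 12 * N * exp (-(1 / 250) * i) := by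
  calc (#{n ∈ Icc 1 N | ¬ IsRegularFor (sievingPrimes i) n} : ℝ)
      ≤ 4 * N * exp (-(7 / 1000) * reciprocalSum (sievingPrimes i)) :=
        card_filter_not_isRegularFor_le (fun _ => prime_of_mem_sievingPrimes) N
    _ ≤ 4 * N * exp (1 + -(1 / 250) * i) := by
        gcongr
        linarith [le_reciprocalSum_sievingPrimes i, i.cast_nonneg (α := ℝ)]
    _ = 4 * N * exp 1 * exp (-(1 / 250) * i) := by rw [exp_add]; ring
    _ ≤ 4 * N * 3 * exp (-(1 / 250) * i) := by gcongr; exact exp_one_lt_three.le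
    _ = 12 * N * exp (-(1 / 250) * i) := by ring

lemma mul_levelExponent_le_two_pow {i : ℕ} (hi : 360 ≤ i) :
    369 * (i + 1) * levelExponent i ≤ 2 ^ i := by
  have mul_le_two_pow (j : ℕ) (hj : 18 ≤ j) : 369 * (20 * (j + 1)) ≤ 2 ^ j := by
    induction j, hj using Nat.le_induction with
    | base => norm_num
    | succ j hj ih => rw [pow_succ]; omega
  calc 369 * (i + 1) * levelExponent i
      ≤ 369 * (20 * (i / 20 + 1)) * levelExponent i := by
        gcongr
        omega
    _ ≤ 2 ^ (i / 20) * levelExponent i := by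
        gcongr
        exact mul_le_two_pow _ (by omega)
    _ = 2 ^ i := by
        rw [levelExponent, ← pow_add]
        congr 1
        omega

lemma card_sievingPrimes_lt (i : ℕ) : #(sievingPrimes i) < 2 ^ levelExponent i := by
  have subset : sievingPrimes i ⊆ Ioo 0 (2 ^ levelExponent i) := fun q hq =>
    mem_Ioo.2 ⟨(prime_of_mem_sievingPrimes hq).pos, Nat.lt_of_mem_primesBelow hq⟩
  have := card_le_card subset
  rw [Nat.card_Ioo] at this
  have := Nat.two_pow_pos (levelExponent i)
  omega

lemma sieve_remainder_le {i : ℕ} (hi : 360 ≤ i) {A : ℝ} (hA : A ≤ 36 * (i + 1)) {X : ℕ}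
    (hX : 2 ^ 2 ^ i ≤ X) :
    (2 * (72 * (i + 1) : ℕ) + 1) * (2 * (#(sievingPrimes i) + 1 : ℝ)) ^ (2 * (72 * (i + 1)))
      ≤ exp (-A) * X := by
  have coeff_le : (2 * (72 * (i + 1) : ℕ) + 1 : ℝ) ≤ 2 ^ (9 * (i + 1)) := by
    have bernoulli := one_add_mul_le_pow (a := (511 : ℝ)) (by norm_num) (i + 1)
    rw [pow_mul]
    norm_num at bernoulli ⊢
    linarith
  have card_le : 2 * (#(sievingPrimes i) + 1 : ℝ) ≤ 2 ^ (levelExponent i + 1) := by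
    rw [pow_succ']
    gcongr
    exact_mod_cast card_sievingPrimes_lt i
  have exp_le : exp A ≤ 2 ^ (72 * (i + 1)) := by
    calc exp A ≤ exp ((36 * (i + 1) : ℕ) * 1) := by
          gcongr
          push_cast
          linarith
      _ = exp 1 ^ (36 * (i + 1)) := exp_nat_mul _ _
      _ ≤ (2 ^ 2) ^ (36 * (i + 1)) := by
          gcongr
          linarith [exp_one_lt_three]
      _ = 2 ^ (72 * (i + 1)) := by
          rw [← pow_mul]
          congr 1
          ring
  have exponent_le : 9 * (i + 1) + (levelExponent i + 1) * (2 * (72 * (i + 1))) + 72 * (i + 1)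
      ≤ 2 ^ i := by
    nlinarith [mul_levelExponent_le_two_pow hi,
      Nat.mul_le_mul_left (i + 1) (one_le_levelExponent i)]
  rw [exp_neg, ← div_eq_inv_mul, le_div_iff₀ (exp_pos _)]
  calc _ ≤ (2 : ℝ) ^ (9 * (i + 1)) * (2 ^ (levelExponent i + 1)) ^ (2 * (72 * (i + 1)))
          * 2 ^ (72 * (i + 1)) := by gcongr
    _ = (2 : ℝ) ^ (9 * (i + 1) + (levelExponent i + 1) * (2 * (72 * (i + 1))) + 72 * (i + 1)) := by
        rw [← pow_mul, ← pow_add, ← pow_add]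
    _ ≤ (2 : ℝ) ^ 2 ^ i := pow_le_pow_right₀ one_le_two exponent_le
    _ ≤ X := mod_cast hX

lemma sum_sieveWeight_sievingPrimes_le {i : ℕ} (hi : 360 ≤ i) {β : ℝ} (hβ : β ∈ Set.Icc 0 1)
    {X : ℕ} (hX : 2 ^ 2 ^ i ≤ X) :
    ∑ d ∈ range X, sieveWeight (1 / 2) β (sievingPrimes i) d
      ≤ 3 * exp (-((1 / 2 + β) * reciprocalSum (sievingPrimes i))) * X := by
  have density_le : (1 / 2 + β) * reciprocalSum (sievingPrimes i) ≤ 36 * (i + 1) := by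
    nlinarith [hβ.2, reciprocalSum_nonneg (sievingPrimes i), reciprocalSum_sievingPrimes_le i]
  have sieve := sum_sieveWeight_le (α := 1 / 2) (β := β) (r := 72 * (i + 1)) (by norm_num) hβ
    (fun _ => prime_of_mem_sievingPrimes (i := i)) (by push_cast; linarith) X
  refine (sieve.trans (add_le_add_right (sieve_remainder_le hi density_le hX) _)).trans_eq ?_
  ring

lemma sieveWeight_half_zero (P : Finset ℕ) (m : ℕ) :
    sieveWeight (1 / 2) 0 P m = (1 / 2) ^ #{q ∈ P | q ∣ m} := by
  rw [sieveWeight, ← prod_const, prod_filter]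
  refine prod_congr rfl fun q _ => ?_
  rw [localWeight]
  split_ifs <;> norm_num

lemma sieveWeight_half_one {P : Finset ℕ} {d : ℕ} (hd : ∀ q ∈ P, ¬ q ∣ d + 1) :
    sieveWeight (1 / 2) 1 P d = (1 / 2) ^ #{q ∈ P | q ∣ d} := by
  rw [← sieveWeight_half_zero]
  exact prod_congr rfl fun q hq => by simp [localWeight, hd q hq]

lemma IsRegularFor.one_le_exp_mul_sieveWeight {P : Finset ℕ} {d m : ℕ}
    (h : IsRegularFor P (d * m)) (hd : ∀ q ∈ P, ¬ q ∣ d + 1) :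
    1 ≤ exp (5 / 4 * reciprocalSum P * log 2)
      * (sieveWeight (1 / 2) 1 P d * sieveWeight (1 / 2) 0 P m) := by
  rw [sieveWeight_half_one hd, sieveWeight_half_zero, ← pow_add, one_div, inv_pow,
    ← div_eq_mul_inv, one_le_div (by positivity), ← rpow_natCast, rpow_def_of_pos two_pos, mul_comm]
  have := log_pos one_lt_two
  gcongr
  exact_mod_cast h.card_filter_dvd_add_card_filter_dvd_le

/-! ### Counting pairs `(d, m)` with `d + 1` prime -/

/-- The pairs `(d, m)` of positive integers with `d * m ≤ N` and `d + 1` prime. Those with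
`d * m = n` are counted by `omegaStar n`. -/
def shiftedPrimePairs (N : ℕ) : Finset (ℕ × ℕ) :=
  {p ∈ Icc 1 N ×ˢ Icc 1 N | p.1 * p.2 ≤ N ∧ (p.1 + 1).Prime}

lemma sum_omegaStar_eq_card {N : ℕ} {T : Finset ℕ} (hT : T ⊆ Icc 1 N) :
    ∑ n ∈ T, omegaStar n = #{p ∈ shiftedPrimePairs N | p.1 * p.2 ∈ T} := by
  rw [card_eq_sum_card_fiberwise (s := {p ∈ shiftedPrimePairs N | p.1 * p.2 ∈ T})
    (f := fun p => p.1 * p.2) (t := T) fun p hp => (mem_filter.1 hp).2]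
  refine sum_congr rfl fun n hn => (card_nbij Prod.fst ?_ ?_ ?_).symm
  · rintro ⟨d, m⟩ h
    simp only [shiftedPrimePairs, mem_filter, mem_product, mem_Icc, mem_coe,
      Nat.mem_divisors] at h ⊢
    have := mem_Icc.1 (hT hn)
    exact ⟨⟨⟨m, h.2.symm⟩, by omega⟩, h.1.1.2.2⟩
  · rintro ⟨d, m⟩ h ⟨d', m'⟩ h' (rfl : d = d')
    simp only [shiftedPrimePairs, mem_coe, mem_filter, mem_product, mem_Icc] at h h'
    have : m = m' := Nat.eq_of_mul_eq_mul_left h.1.1.1.1.1 (h.2.trans h'.2.symm)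
    rw [this]
  · intro d hd
    simp only [mem_coe, mem_filter, Nat.mem_divisors] at hd
    obtain ⟨⟨⟨m, rfl⟩, hdm⟩, hprime⟩ := hd
    obtain ⟨hd, hm⟩ : 0 < d ∧ 0 < m := by simpa [Nat.pos_iff_ne_zero] using hdm
    have hN := (mem_Icc.1 (hT hn)).2
    refine ⟨(d, m), ?_, rfl⟩
    simp only [shiftedPrimePairs, mem_coe, mem_filter, mem_product, mem_Icc]
    exact ⟨⟨⟨⟨⟨hd, (Nat.le_mul_of_pos_right d hm).trans hN⟩, hm,
      (Nat.le_mul_of_pos_left m hd).trans hN⟩, hN, hprime⟩, hn⟩, trivial⟩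

lemma sum_product_filter_mul_le {G : ℕ → ℝ} (hG : ∀ n, 0 ≤ G n) {b : ℝ} (hb : 0 ≤ b) {M : ℕ}
    (hM : 0 < M) (hGb : ∀ X : ℕ, M ≤ X → ∑ m ∈ range X, G m ≤ b * X) {D : Finset ℕ}
    (hD : ∀ d ∈ D, 0 < d) (N : ℕ) :
    ∑ p ∈ D ×ˢ Icc M N with p.1 * p.2 ≤ N, G p.2 ≤ 2 * b * N * reciprocalSum D := by
  rw [sum_filter, sum_product, reciprocalSum, mul_sum]
  refine sum_le_sum fun d hd => ?_
  rw [← sum_filter, mul_one_div]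
  exact sum_Icc_filter_mul_le hG hb hM hGb (hD d hd) N

lemma card_filter_fst_lt_le (k N : ℕ) :
    (#{p ∈ shiftedPrimePairs N | p.1 < 2 ^ 2 ^ k} : ℝ) ≤ 48 * (k + 1) * N := by
  set D : Finset ℕ := {d ∈ Ico 1 (2 ^ 2 ^ k) | (d + 1).Prime}
  have subset : {p ∈ shiftedPrimePairs N | p.1 < 2 ^ 2 ^ k}
      ⊆ {p ∈ D ×ˢ Icc 1 N | p.1 * p.2 ≤ N} := by
    intro p
    simp only [shiftedPrimePairs, D, mem_filter, mem_product, mem_Icc, mem_Ico]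
    tauto
  calc (#{p ∈ shiftedPrimePairs N | p.1 < 2 ^ 2 ^ k} : ℝ)
      ≤ #{p ∈ D ×ˢ Icc 1 N | p.1 * p.2 ≤ N} := mod_cast card_le_card subset
    _ = ∑ p ∈ D ×ˢ Icc 1 N with p.1 * p.2 ≤ N, (1 : ℝ) := by simp
    _ ≤ 2 * 1 * N * reciprocalSum D :=
        sum_product_filter_mul_le (G := fun _ => 1) (fun _ => zero_le_one) zero_le_one one_pos
          (fun X _ => by simp) (fun d hd => (mem_Ico.1 (mem_filter.1 hd).1).1) N
    _ ≤ 2 * 1 * N * (24 * (k + 1)) := by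
        gcongr
        exact reciprocalSum_filter_succ_prime_le k
    _ = 48 * (k + 1) * N := by ring

lemma reciprocalSum_Icc_le (n : ℕ) : reciprocalSum (Icc 1 n) ≤ 1 + log n := by
  simpa [reciprocalSum, harmonic_eq_sum_Icc] using harmonic_le_one_add_log n

lemma card_filter_snd_lt_le {Z : ℕ} (hZ : 2 ≤ Z) (N : ℕ) :
    (#{p ∈ shiftedPrimePairs N | Z ≤ p.1 ∧ p.2 < Z} : ℝ) ≤ 48 * N := by
  have one_le_two_mul_log : 1 ≤ 2 * log Z := by
    have : log 2 ≤ log Z := log_le_log two_pos (mod_cast hZ)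
    linarith [log_two_gt_d9]
  have log_pos : 0 < log Z := by linarith
  have chebyshev (X : ℕ) (hX : Z ≤ X) :
      ∑ d ∈ range X, (if (d + 1).Prime then (1 : ℝ) else 0) ≤ 8 / log Z * X := by
    rw [sum_boole, card_filter_range_succ_prime, div_mul_eq_mul_div]
    refine (primeCounting_le (hZ.trans hX)).trans ?_
    gcongr
  set E := {p ∈ Icc 1 Z ×ˢ Icc Z N | p.1 * p.2 ≤ N}
  have subset : ({p ∈ shiftedPrimePairs N | Z ≤ p.1 ∧ p.2 < Z}).image Prod.swap
      ⊆ {p ∈ E | (p.2 + 1).Prime} := by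
    simp only [subset_iff, mem_image, forall_exists_index, and_imp]
    rintro _ ⟨d, m⟩ h rfl
    simp only [shiftedPrimePairs, E, mem_filter, mem_product, mem_Icc, Prod.swap_prod_mk] at h ⊢
    exact ⟨⟨⟨⟨h.1.1.2.1, h.2.2.le⟩, h.2.1, h.1.1.1.2⟩, mul_comm d m ▸ h.1.2.1⟩, h.1.2.2⟩
  rw [← card_image_of_injective _ Prod.swap_injective]
  calc (#(({p ∈ shiftedPrimePairs N | Z ≤ p.1 ∧ p.2 < Z}).image Prod.swap) : ℝ)
      ≤ #{p ∈ E | (p.2 + 1).Prime} := mod_cast card_le_card subset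
    _ = ∑ p ∈ E, (if (p.2 + 1).Prime then (1 : ℝ) else 0) := by rw [sum_boole]
    _ ≤ 2 * (8 / log Z) * N * reciprocalSum (Icc 1 Z) :=
        sum_product_filter_mul_le (G := fun d => if (d + 1).Prime then 1 else 0)
          (fun _ => by positivity) (by positivity) (by omega) chebyshev
          (fun d hd => (mem_Icc.1 hd).1) N
    _ ≤ 2 * (8 / log Z) * N * (2 * log Z + log Z) := by
        gcongr
        exact (reciprocalSum_Icc_le Z).trans (by gcongr)
    _ = 48 * N := by
        field_simp
        ring

/-- The pairs `(d, m)` of `shiftedPrimePairs N` at scale `i`, that is with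
`2 ^ 2 ^ i ≤ min d m < 2 ^ 2 ^ (i + 1)`, whose product is regular at this scale. -/
noncomputable def windowPairs (i N : ℕ) : Finset (ℕ × ℕ) :=
  {p ∈ shiftedPrimePairs N | IsRegularFor (sievingPrimes i) (p.1 * p.2) ∧
    min p.1 p.2 ∈ Ico (2 ^ 2 ^ i) (2 ^ 2 ^ (i + 1))}

lemma one_le_exp_mul_sieveWeight_of_mem_windowPairs {i N : ℕ} {p : ℕ × ℕ}
    (hp : p ∈ windowPairs i N) :
    1 ≤ exp (5 / 4 * reciprocalSum (sievingPrimes i) * log 2)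
      * (sieveWeight (1 / 2) 1 (sievingPrimes i) p.1
        * sieveWeight (1 / 2) 0 (sievingPrimes i) p.2) := by
  simp only [windowPairs, shiftedPrimePairs, mem_filter, mem_Ico, le_min_iff] at hp
  obtain ⟨⟨-, -, hprime⟩, hreg, ⟨hlarge, -⟩, -⟩ := hp
  refine hreg.one_le_exp_mul_sieveWeight fun q hq hdvd => ?_
  have := (Nat.prime_dvd_prime_iff_eq (prime_of_mem_sievingPrimes hq) hprime).1 hdvd
  have := lt_of_mem_sievingPrimes hq
  omega

lemma card_windowPairs_le_exp_reciprocalSum {i : ℕ} (hi : 360 ≤ i) (N : ℕ) :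
    (#(windowPairs i N) : ℝ) ≤ 72 * 2 ^ i * N *
      exp (-2 * reciprocalSum (sievingPrimes i)
        + 5 / 4 * reciprocalSum (sievingPrimes i) * log 2) := by
  set S := reciprocalSum (sievingPrimes i)
  set F := sieveWeight (1 / 2) 1 (sievingPrimes i)
  set G := sieveWeight (1 / 2) 0 (sievingPrimes i)
  have weight_nonneg {β : ℝ} (hβ : β ∈ Set.Icc 0 1) (d : ℕ) :
      0 ≤ sieveWeight (1 / 2) β (sievingPrimes i) d :=
    sieveWeight_nonneg (by norm_num) hβ (fun _ => prime_of_mem_sievingPrimes) d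
  have hF : ∀ d, 0 ≤ F d := weight_nonneg (by norm_num)
  have hG : ∀ d, 0 ≤ G d := weight_nonneg (by norm_num)
  have bilinear := sum_filter_min_mem_Ico_mul_le hF hG
    (by positivity) (by positivity) (Nat.pow_le_pow_right two_pos i.le_succ)
    (fun _ => sum_sieveWeight_sievingPrimes_le hi (by norm_num))
    (fun _ => sum_sieveWeight_sievingPrimes_le hi (by norm_num)) N
  rw [show 2 ^ (i + 1) - 2 ^ i = 2 ^ i by rw [pow_succ]; omega] at bilinear
  calc (#(windowPairs i N) : ℝ) = ∑ _p ∈ windowPairs i N, (1 : ℝ) := by simp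
    _ ≤ ∑ p ∈ windowPairs i N, exp (5 / 4 * S * log 2) * (F p.1 * G p.2) :=
        sum_le_sum fun _ hp => one_le_exp_mul_sieveWeight_of_mem_windowPairs hp
    _ = exp (5 / 4 * S * log 2) * ∑ p ∈ windowPairs i N, F p.1 * G p.2 := by rw [mul_sum]
    _ ≤ exp (5 / 4 * S * log 2) * (8 * (2 ^ i : ℕ) * (3 * exp (-((1 / 2 + 1) * S)))
          * (3 * exp (-((1 / 2 + 0) * S))) * N) := by
        gcongr
        refine (sum_le_sum_of_subset_of_nonneg ?_ fun _ _ _ => mul_nonneg (hF _) (hG _)).trans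
          bilinear
        intro p
        simp only [windowPairs, shiftedPrimePairs, mem_filter]
        tauto
    _ = 72 * 2 ^ i * N * exp (-2 * S + 5 / 4 * S * log 2) := by
        rw [exp_add, show -2 * S = -((1 / 2 + 1) * S) + -((1 / 2 + 0) * S) by ring, exp_add]
        push_cast
        ring

/-- Each unit of `S` saves a factor `exp (2 - (5 / 4) * log 2) > exp 1.133`. As `S` is about
`(19 / 20) * i * log 2`, this outweighs the factor `2 ^ i` coming from the dyadic blocks. -/
lemma card_windowPairs_le {i : ℕ} (hi : 360 ≤ i) (N : ℕ) :
    (#(windowPairs i N) : ℝ) ≤ 6000 * N * exp (-(1 / 250) * i) := by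
  set S := reciprocalSum (sievingPrimes i)
  have hS : 19 / 20 * (6931 / 10000) * i - 3 ≤ S := le_reciprocalSum_sievingPrimes i
  have exponent_le : i * log 2 + (-2 * S + 5 / 4 * S * log 2) ≤ 4 + -(1 / 250) * i := by
    have : -2 * S + 5 / 4 * S * log 2 ≤ -(1133 / 1000) * S := by
      nlinarith [reciprocalSum_nonneg (sievingPrimes i), log_two_lt_d9]
    nlinarith [i.cast_nonneg (α := ℝ), log_two_lt_d9]
  have exp_four_le : exp 4 ≤ 3 ^ 4 := by
    rw [show (4 : ℝ) = (4 : ℕ) * 1 by norm_num, exp_nat_mul]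
    gcongr
    exact exp_one_lt_three.le
  calc (#(windowPairs i N) : ℝ)
      ≤ 72 * 2 ^ i * N * exp (-2 * S + 5 / 4 * S * log 2) :=
        card_windowPairs_le_exp_reciprocalSum hi N
    _ = 72 * N * exp (i * log 2 + (-2 * S + 5 / 4 * S * log 2)) := by
        rw [exp_add (i * log 2), exp_nat_mul, exp_log two_pos]
        ring
    _ ≤ 72 * N * exp (4 + -(1 / 250) * i) := by gcongr
    _ = 72 * N * exp 4 * exp (-(1 / 250) * i) := by rw [exp_add]; ring
    _ ≤ 72 * N * 3 ^ 4 * exp (-(1 / 250) * i) := by gcongr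
    _ ≤ 6000 * N * exp (-(1 / 250) * i) := by
        have : 0 ≤ N * exp (-(1 / 250) * i) := by positivity
        linarith

/-! ### Summing over the scales -/

/-- The positive integers up to `N` that are regular at all scales `i ≥ k`. Scales `i > N` never
arise for factorizations of such integers, so they are left out. -/
noncomputable def regularIntegers (k N : ℕ) : Finset ℕ :=
  {n ∈ Icc 1 N | ∀ i, k ≤ i → i ≤ N → IsRegularFor (sievingPrimes i) n}

lemma sum_Ico_exp_le (k M : ℕ) :
    ∑ i ∈ Ico k M, exp (-(1 / 250) * i) ≤ 251 * exp (-(1 / 250) * k) := by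
  have exp_eq_pow (i : ℕ) : exp (-(1 / 250) * i) = exp (-(1 / 250)) ^ i := by
    rw [mul_comm, exp_nat_mul]
  have ratio_le : exp (-(1 / 250)) ≤ 250 / 251 := by
    rw [exp_neg, inv_le_comm₀ (exp_pos _) (by norm_num)]
    linarith [add_one_le_exp (1 / 250 : ℝ)]
  simp only [exp_eq_pow]
  refine (geom_sum_Ico_le_of_lt_one (exp_pos _).le (by linarith)).trans ?_
  rw [div_le_iff₀ (by linarith)]
  nlinarith [pow_pos (exp_pos (-(1 / 250))) k]

lemma card_sdiff_regularIntegers_le (k N : ℕ) :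
    (#(Icc 1 N \ regularIntegers k N) : ℝ) ≤ 3012 * N * exp (-(1 / 250) * k) := by
  have subset : Icc 1 N \ regularIntegers k N ⊆
      (Ico k (N + 1)).biUnion fun i => {n ∈ Icc 1 N | ¬ IsRegularFor (sievingPrimes i) n} := by
    intro n h
    obtain ⟨hn, hirr⟩ := mem_sdiff.1 h
    simp only [regularIntegers, mem_filter, hn, true_and, not_forall] at hirr
    obtain ⟨i, hki, hiN, hirr⟩ := hirr
    exact mem_biUnion.2 ⟨i, mem_Ico.2 ⟨hki, Nat.lt_succ_of_le hiN⟩, mem_filter.2 ⟨hn, hirr⟩⟩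
  calc (#(Icc 1 N \ regularIntegers k N) : ℝ)
      ≤ ∑ i ∈ Ico k (N + 1), (#{n ∈ Icc 1 N | ¬ IsRegularFor (sievingPrimes i) n} : ℝ) :=
        mod_cast (card_le_card subset).trans card_biUnion_le
    _ ≤ ∑ i ∈ Ico k (N + 1), 12 * N * exp (-(1 / 250) * i) :=
        sum_le_sum fun i _ => card_filter_not_isRegularFor_sievingPrimes_le i N
    _ ≤ 12 * N * (251 * exp (-(1 / 250) * k)) := by
        rw [← mul_sum]
        gcongr
        exact sum_Ico_exp_le k (N + 1)
    _ = 3012 * N * exp (-(1 / 250) * k) := by ring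

lemma exists_mem_Ico_two_pow_two_pow {k n : ℕ} (hn : 2 ^ 2 ^ k ≤ n) :
    ∃ i ∈ Ico k (n + 1), n ∈ Ico (2 ^ 2 ^ i) (2 ^ 2 ^ (i + 1)) := by
  have hlog : 2 ^ k ≤ Nat.log 2 n := Nat.le_log_of_pow_le one_lt_two hn
  have hlog_pos : 0 < Nat.log 2 n := (Nat.two_pow_pos k).trans_le hlog
  have hn_pos : 0 < n := (Nat.two_pow_pos _).trans_le hn
  refine ⟨Nat.log 2 (Nat.log 2 n), mem_Ico.2 ⟨Nat.le_log_of_pow_le one_lt_two hlog, ?_⟩,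
    mem_Ico.2 ⟨?_, ?_⟩⟩
  · exact Nat.lt_succ_of_le ((Nat.log_le_self _ _).trans (Nat.log_le_self _ _))
  · exact (Nat.pow_le_pow_right two_pos (Nat.pow_log_le_self 2 hlog_pos.ne')).trans
      (Nat.pow_log_le_self 2 hn_pos.ne')
  · exact (Nat.lt_pow_succ_log_self one_lt_two n).trans_le
      (Nat.pow_le_pow_right two_pos (Nat.lt_pow_succ_log_self one_lt_two _))

lemma filter_mem_regularIntegers_subset (k N : ℕ) :
    {p ∈ shiftedPrimePairs N | p.1 * p.2 ∈ regularIntegers k N} ⊆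
      {p ∈ shiftedPrimePairs N | p.1 < 2 ^ 2 ^ k} ∪
      {p ∈ shiftedPrimePairs N | 2 ^ 2 ^ k ≤ p.1 ∧ p.2 < 2 ^ 2 ^ k} ∪
      (Ico k (N + 1)).biUnion fun i => windowPairs i N := by
  rintro ⟨d, m⟩ h
  obtain ⟨hpair, hreg⟩ := mem_filter.1 h
  simp only [mem_union, mem_filter, mem_biUnion, windowPairs, hpair, true_and]
  obtain hd | hd := lt_or_ge d (2 ^ 2 ^ k)
  · exact .inl (.inl hd)
  obtain hm | hm := lt_or_ge m (2 ^ 2 ^ k)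
  · exact .inl (.inr ⟨hd, hm⟩)
  obtain ⟨i, hi, hmin⟩ := exists_mem_Ico_two_pow_two_pow (le_min hd hm)
  have hdN : d ≤ N := (mem_Icc.1 (mem_product.1 (mem_filter.1 hpair).1).1).2
  obtain ⟨hki, hid⟩ := mem_Ico.1 hi
  have hiN : i ≤ N := (Nat.le_of_lt_succ hid).trans ((min_le_left d m).trans hdN)
  exact .inr ⟨i, mem_Ico.2 ⟨hki, Nat.lt_succ_of_le hiN⟩,
    (mem_filter.1 hreg).2 i hki hiN, hmin⟩

lemma sum_omegaStar_regularIntegers_le {k : ℕ} (hk : 360 ≤ k) (N : ℕ) :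
    (∑ n ∈ regularIntegers k N, omegaStar n : ℝ) ≤ 5000 * (k + 1) * N := by
  have two_le : 2 ≤ 2 ^ 2 ^ k := Nat.le_self_pow (Nat.two_pow_pos k).ne' 2
  have windows : ∑ i ∈ Ico k (N + 1), (#(windowPairs i N) : ℝ) ≤ 6000 * N * 251 := by
    calc ∑ i ∈ Ico k (N + 1), (#(windowPairs i N) : ℝ)
        ≤ ∑ i ∈ Ico k (N + 1), 6000 * N * exp (-(1 / 250) * i) :=
          sum_le_sum fun i hi => card_windowPairs_le (hk.trans (mem_Ico.1 hi).1) N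
      _ ≤ 6000 * N * (251 * exp (-(1 / 250) * k)) := by
          rw [← mul_sum]
          gcongr
          exact sum_Ico_exp_le k (N + 1)
      _ ≤ 6000 * N * (251 * 1) := by
          gcongr
          rw [exp_le_one_iff]
          linarith [k.cast_nonneg (α := ℝ)]
      _ = 6000 * N * 251 := by ring
  calc (∑ n ∈ regularIntegers k N, omegaStar n : ℝ)
      = #{p ∈ shiftedPrimePairs N | p.1 * p.2 ∈ regularIntegers k N} :=
        mod_cast sum_omegaStar_eq_card (filter_subset _ _)
    _ ≤ #{p ∈ shiftedPrimePairs N | p.1 < 2 ^ 2 ^ k}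
        + #{p ∈ shiftedPrimePairs N | 2 ^ 2 ^ k ≤ p.1 ∧ p.2 < 2 ^ 2 ^ k}
        + ∑ i ∈ Ico k (N + 1), (#(windowPairs i N) : ℝ) := by
        have := card_le_card (filter_mem_regularIntegers_subset k N)
        exact_mod_cast this.trans ((card_union_le _ _).trans
          (add_le_add (card_union_le _ _) card_biUnion_le))
    _ ≤ 48 * (k + 1) * N + 48 * N + 6000 * N * 251 :=
        add_le_add (add_le_add (card_filter_fst_lt_le k N) (card_filter_snd_lt_le two_le N)) windows
    _ ≤ 5000 * (k + 1) * N := by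
        have : (360 : ℝ) ≤ k := mod_cast hk
        nlinarith [N.cast_nonneg (α := ℝ)]

lemma card_filter_le_omegaStar_le {k : ℕ} (hk : 360 ≤ k) (N : ℕ) {y : ℝ} (hy : 0 < y) :
    (#{n ∈ Icc 1 N | y ≤ (omegaStar n : ℝ)} : ℝ)
      ≤ 3012 * N * exp (-(1 / 250) * k) + 5000 * (k + 1) * N / y := by
  set T := {n ∈ regularIntegers k N | y ≤ (omegaStar n : ℝ)}
  have subset : {n ∈ Icc 1 N | y ≤ (omegaStar n : ℝ)} ⊆ (Icc 1 N \ regularIntegers k N) ∪ T := by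
    intro n
    simp only [T, mem_union, Finset.mem_sdiff, mem_filter]
    tauto
  have markov : #T * y ≤ 5000 * (k + 1) * N := by
    calc #T * y = ∑ _n ∈ T, y := by rw [sum_const, nsmul_eq_mul]
      _ ≤ ∑ n ∈ T, (omegaStar n : ℝ) := sum_le_sum fun n hn => (mem_filter.1 hn).2
      _ ≤ ∑ n ∈ regularIntegers k N, (omegaStar n : ℝ) :=
          sum_le_sum_of_subset_of_nonneg (filter_subset _ _) fun _ _ _ => Nat.cast_nonneg _
      _ ≤ 5000 * (k + 1) * N := sum_omegaStar_regularIntegers_le hk N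
  calc (#{n ∈ Icc 1 N | y ≤ (omegaStar n : ℝ)} : ℝ)
      ≤ #(Icc 1 N \ regularIntegers k N) + #T :=
        mod_cast (card_le_card subset).trans (card_union_le _ _)
    _ ≤ 3012 * N * exp (-(1 / 250) * k) + 5000 * (k + 1) * N / y :=
        add_le_add (card_sdiff_regularIntegers_le k N) ((le_div_iff₀ hy).2 markov)

end

theorem N_upper_bound :
    ∃ C : ℝ, C > 0 ∧ ∃ y₀ : ℝ, ∀ x y : ℝ, x ≥ 1 → y ≥ y₀ →
      (((Finset.Icc 1 ⌊x⌋₊).filter (fun n => y ≤ (omegaStar n : ℝ))).card : ℝ)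
        ≤ C * x * Real.log y / y := by
  refine ⟨1300000, by norm_num, exp 2, fun x y hx hy => ?_⟩
  have hy_pos : 0 < y := (exp_pos 2).trans_le hy
  have two_le_log : 2 ≤ log y := (le_log_iff_exp_le hy_pos).2 hy
  obtain ⟨k, hk⟩ : ∃ k, k = ⌈250 * log y⌉₊ := ⟨_, rfl⟩
  have le_k : 250 * log y ≤ k := hk ▸ Nat.le_ceil _
  have k_lt : k < 250 * log y + 1 := hk ▸ Nat.ceil_lt_add_one (by linarith)
  have scale_large : 360 ≤ k := by exact_mod_cast (by linarith : (360 : ℝ) ≤ k)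
  have exp_le : exp (-(1 / 250) * k) ≤ 1 / y := by
    rw [le_one_div (exp_pos _) hy_pos, one_div, ← exp_neg, ← log_le_iff_le_exp hy_pos]
    linarith
  calc _ ≤ 3012 * ⌊x⌋₊ * exp (-(1 / 250) * k) + 5000 * (k + 1) * ⌊x⌋₊ / y :=
        card_filter_le_omegaStar_le scale_large ⌊x⌋₊ hy_pos
    _ ≤ 3012 * x * (1 / y) + 5000 * (251 * log y) * x / y := by
        have floor_le : (⌊x⌋₊ : ℝ) ≤ x := Nat.floor_le (by linarith)
        gcongr
        linarith
    _ = (3012 + 1255000 * log y) * x / y := by ring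
    _ ≤ 1300000 * x * log y / y := by
        rw [mul_right_comm]
        gcongr
        linarith
end

section
/- There is a constant c > 0 and a real number y₀ such that for all x ≥ 1 and all y ≥ y₀, the number N(x,y) of positive integers n ≤ x with ω*(n) ≥ y satisfies N(x,y) ≥ ⌊x / y^{c·log log y}⌋. -/
open Filter Real

/-!
Take `P` to be the primes in the block `(2 ^ v, 2 ^ (v + 3)]` and consider the products `d` of `j`
distinct elements of `P`. If `n = (∏ q ∈ Q, q) * m` with `Q ⊆ P` of size `65 * j`, then each `d`
built from `Q` with `d * m + 1` prime contributes to `ω*(n)`, and `Q` has at least `64 ^ j` such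
products. It therefore suffices to find, on average over `d`, a positive proportion of the expected
number of primes `p ≡ 1 [MOD d]` up to a fixed power of `2 ^ ((v + 3) * j)`: averaging over `Q` and
then over `m = (p - 1) / d` yields an `n` with `ω*(n) ≥ 4 ^ j`, where the rest of `64 ^ j` pays for
the ratio up to `8 ^ j` between the moduli and for a logarithm. Taking `j = 2 ^ k` and `v = 20 * k`
makes `n` of size `2 ^ O(j log j)`, and every multiple of this `n` is then counted.

The mean value over `d` comes from Vaughan's identity. In the bilinear sums, Cauchy–Schwarz leads to
correlations of the progressions `1` modulo `d` and `e`; these cancel when `d` and `e` are coprime,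
and almost all pairs of our moduli are coprime. Because of this, and since only the residue class
`1` occurs, no zero-free region or large sieve is needed.
-/

section

open Finset
open scoped ArithmeticFunction.Moebius ArithmeticFunction.vonMangoldt ArithmeticFunction.zeta

section Progressions

variable {a b d e m k : ℕ}

lemma coprime_of_mul_modEq_one {n : ℕ} (h : m * n ≡ 1 [MOD d]) : m.Coprime d :=
  Nat.Coprime.coprime_mul_right (k := n) (by rw [Nat.Coprime, h.gcd_eq, Nat.gcd_one_left])

lemma exists_mul_modEq_one (hd : 0 < d) (hm : m.Coprime d) : ∃ z, m * z ≡ 1 [MOD d] :=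
  let ⟨z, _, hz⟩ := Nat.exists_mul_mod_eq_of_coprime 1 hm hd.ne'
  ⟨z, hz⟩

lemma mul_modEq_one_iff {z : ℕ} (hz : m * z ≡ 1 [MOD d]) (n : ℕ) :
    m * n ≡ 1 [MOD d] ↔ n ≡ z [MOD d] :=
  ⟨fun h => Nat.ModEq.cancel_left_of_coprime (coprime_of_mul_modEq_one hz).symm (h.trans hz.symm),
    fun h => (h.mul_left m).trans hz⟩

lemma modEq_gcd_of_mul_modEq_one {z : ℕ} (hz : m * z ≡ 1 [MOD d]) (hz' : k * z ≡ 1 [MOD e]) :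
    m ≡ k [MOD d.gcd e] := by
  have hd := hz.of_dvd (Nat.gcd_dvd_left d e)
  have he := hz'.of_dvd (Nat.gcd_dvd_right d e)
  have hcop : z.Coprime (d.gcd e) := coprime_of_mul_modEq_one (mul_comm m z ▸ hd)
  exact Nat.ModEq.cancel_right_of_coprime hcop.symm (hd.trans he.symm)

lemma abs_mul_card_filter_modEq_sub_le (hd : 0 < d) (hab : a ≤ b) (c : ℕ) :
    |(d : ℝ) * #{n ∈ Ioc a b | n ≡ c [MOD d]} - (b - a)| ≤ d := by
  have hd' : (0 : ℚ) < d := mod_cast hd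
  have hmono : ⌊((a : ℚ) - c) / d⌋ ≤ ⌊((b : ℚ) - c) / d⌋ := by
    gcongr
  have hcard := Nat.Ioc_filter_modEq_card a b hd c
  rw [max_eq_left (sub_nonneg.2 hmono)] at hcard
  have hcard' : (#{n ∈ Ioc a b | n ≡ c [MOD d]} : ℚ)
      = ⌊((b : ℚ) - c) / d⌋ - ⌊((a : ℚ) - c) / d⌋ := mod_cast hcard
  have hfloor : |(#{n ∈ Ioc a b | n ≡ c [MOD d]} : ℚ) - (b - a) / d| ≤ 1 := by
    have hsplit : ((b : ℚ) - a) / d = (b - c) / d - (a - c) / d := by ring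
    rw [hcard', hsplit, abs_le]
    constructor <;>
      linarith [Int.floor_le (((b : ℚ) - c) / d), Int.lt_floor_add_one (((b : ℚ) - c) / d),
        Int.floor_le (((a : ℚ) - c) / d), Int.lt_floor_add_one (((a : ℚ) - c) / d)]
  have hmul : |(d : ℚ) * #{n ∈ Ioc a b | n ≡ c [MOD d]} - (b - a)| ≤ d := by
    calc |(d : ℚ) * #{n ∈ Ioc a b | n ≡ c [MOD d]} - (b - a)|
        = |(d : ℚ) * (#{n ∈ Ioc a b | n ≡ c [MOD d]} - (b - a) / d)| := by
          rw [mul_sub, mul_div_cancel₀ _ hd'.ne']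
      _ = d * |(#{n ∈ Ioc a b | n ≡ c [MOD d]} : ℚ) - (b - a) / d| := by
          rw [abs_mul, abs_of_pos hd']
      _ ≤ d := mul_le_of_le_one_right hd'.le hfloor
  exact_mod_cast hmul

lemma abs_mul_card_filter_mul_modEq_one_sub_le (hd : 0 < d) (hab : a ≤ b) (hm : m.Coprime d) :
    |(d : ℝ) * #{n ∈ Ioc a b | m * n ≡ 1 [MOD d]} - (b - a)| ≤ d := by
  obtain ⟨z, hz⟩ := exists_mul_modEq_one hd hm
  simp only [mul_modEq_one_iff hz]
  exact abs_mul_card_filter_modEq_sub_le hd hab z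

lemma abs_mul_card_filter_two_modEq_sub_le (hd : 0 < d) (he : 0 < e) (hab : a ≤ b) {z : ℕ}
    (hz : m * z ≡ 1 [MOD d]) (hz' : k * z ≡ 1 [MOD e]) :
    |(d * e : ℝ) * #{n ∈ Ioc a b | m * n ≡ 1 [MOD d] ∧ k * n ≡ 1 [MOD e]}
      - d.gcd e * (b - a)| ≤ d * e := by
  have hlcm : ∀ n, (m * n ≡ 1 [MOD d] ∧ k * n ≡ 1 [MOD e]) ↔ n ≡ z [MOD d.lcm e] := fun n => by
    rw [mul_modEq_one_iff hz, mul_modEq_one_iff hz']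
    exact ⟨fun h => Nat.mod_lcm h.1 h.2,
      fun h => ⟨h.of_dvd (Nat.dvd_lcm_left d e), h.of_dvd (Nat.dvd_lcm_right d e)⟩⟩
  have hde : (d * e : ℝ) = d.gcd e * d.lcm e := mod_cast (Nat.gcd_mul_lcm d e).symm
  simp only [hlcm]
  rw [hde, mul_assoc, ← mul_sub, abs_mul, Nat.abs_cast]
  gcongr
  exact abs_mul_card_filter_modEq_sub_le (Nat.lcm_pos hd he) hab z

/-- The indicator function of `gcd v d > 1`. -/
noncomputable def nonCoprime (d v : ℕ) : ℝ := if v.Coprime d then 0 else 1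

lemma nonCoprime_of_coprime {v : ℕ} (h : v.Coprime d) : nonCoprime d v = 0 := if_pos h

lemma nonCoprime_of_not_coprime {v : ℕ} (h : ¬ v.Coprime d) : nonCoprime d v = 1 := if_neg h

lemma nonCoprime_nonneg (d v : ℕ) : 0 ≤ nonCoprime d v := by
  unfold nonCoprime; split_ifs <;> simp

lemma nonCoprime_le_one (d v : ℕ) : nonCoprime d v ≤ 1 := by
  unfold nonCoprime; split_ifs <;> simp

/-- The indicator function of the progression `1` modulo `d`, scaled to have mean `1` and then
centred. A prime number theorem for this progression amounts to cancellation in the sum of the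
von Mangoldt function against this weight. -/
noncomputable def progressionWeight (d n : ℕ) : ℝ := (if n ≡ 1 [MOD d] then (d : ℝ) else 0) - 1

lemma progressionWeight_of_not_coprime (hm : ¬ m.Coprime d) (n : ℕ) :
    progressionWeight d (m * n) = -1 := by
  simp [progressionWeight, mt coprime_of_mul_modEq_one hm]

lemma sum_progressionWeight_eq (hab : a ≤ b) :
    ∑ n ∈ Ioc a b, progressionWeight d (m * n)
      = (d : ℝ) * #{n ∈ Ioc a b | m * n ≡ 1 [MOD d]} - (b - a) := by
  simp only [progressionWeight]
  rw [sum_sub_distrib, ← sum_filter]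
  simp [Nat.cast_sub hab, mul_comm]

lemma abs_sum_progressionWeight_le (hd : 0 < d) (hab : a ≤ b) :
    |∑ n ∈ Ioc a b, progressionWeight d (m * n)| ≤ d + (b - a) * nonCoprime d m := by
  by_cases hm : m.Coprime d
  · rw [sum_progressionWeight_eq hab, nonCoprime_of_coprime hm, mul_zero, add_zero]
    exact abs_mul_card_filter_mul_modEq_one_sub_le hd hab hm
  · have hab' : (0 : ℝ) ≤ b - a := sub_nonneg.2 (mod_cast hab)
    simp [nonCoprime_of_not_coprime hm, progressionWeight_of_not_coprime hm, Nat.cast_sub hab,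
      abs_of_nonneg hab', -neg_sub]

lemma sum_progressionWeight_mul_eq (hab : a ≤ b) :
    ∑ n ∈ Ioc a b, progressionWeight d (m * n) * progressionWeight e (k * n)
      = (d * e : ℝ) * #{n ∈ Ioc a b | m * n ≡ 1 [MOD d] ∧ k * n ≡ 1 [MOD e]} - (b - a)
        - ∑ n ∈ Ioc a b, progressionWeight d (m * n)
        - ∑ n ∈ Ioc a b, progressionWeight e (k * n) := by
  have hexpand : ∀ n, progressionWeight d (m * n) * progressionWeight e (k * n)
      = (if m * n ≡ 1 [MOD d] ∧ k * n ≡ 1 [MOD e] then (d * e : ℝ) else 0) - 1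
        - progressionWeight d (m * n) - progressionWeight e (k * n) := by
    intro n
    simp only [progressionWeight]
    by_cases hm : m * n ≡ 1 [MOD d] <;> by_cases hk : k * n ≡ 1 [MOD e] <;> simp [hm, hk] <;> ring
  simp only [hexpand]
  rw [sum_sub_distrib, sum_sub_distrib, sum_sub_distrib, ← sum_filter]
  simp [Nat.cast_sub hab, mul_comm]

/-- Majorant for the mean of the correlation of the weights `progressionWeight d (m * ·)` and
`progressionWeight e (k * ·)`: it vanishes unless `d`, `e` have a common factor, or both `m`, `d`
and `k`, `e` do. -/
noncomputable def correlationBound (d e m k : ℕ) : ℝ :=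
  nonCoprime e d * ((if m ≡ k [MOD d.gcd e] then (d.gcd e : ℝ) else 0) + 3)
    + nonCoprime d m * nonCoprime e k

lemma cast_le_cast_mul_cast (he : 0 < e) : (d : ℝ) ≤ d * e :=
  le_mul_of_one_le_right d.cast_nonneg (Nat.one_le_cast.2 he)

lemma abs_correlation_le_of_coprime_of_coprime (hd : 0 < d) (he : 0 < e) (hab : a ≤ b)
    (hde : d.Coprime e) (hm : m.Coprime d) (hk : k.Coprime e) :
    |∑ n ∈ Ioc a b, progressionWeight d (m * n) * progressionWeight e (k * n)| ≤ 3 * (d * e) := by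
  obtain ⟨z₁, hz₁⟩ := exists_mul_modEq_one hd hm
  obtain ⟨z₂, hz₂⟩ := exists_mul_modEq_one he hk
  obtain ⟨z, hzd, hze⟩ := Nat.chineseRemainder hde z₁ z₂
  have hjoint := abs_mul_card_filter_two_modEq_sub_le hd he hab
    ((mul_modEq_one_iff hz₁ z).2 hzd) ((mul_modEq_one_iff hz₂ z).2 hze)
  have hsumd := abs_sum_progressionWeight_le (m := m) hd hab
  have hsume := abs_sum_progressionWeight_le (m := k) he hab
  rw [hde.gcd_eq_one, Nat.cast_one, one_mul] at hjoint
  rw [nonCoprime_of_coprime hm, mul_zero, add_zero] at hsumd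
  rw [nonCoprime_of_coprime hk, mul_zero, add_zero] at hsume
  have hle : (d : ℝ) ≤ d * e := cast_le_cast_mul_cast he
  have hle' : (e : ℝ) ≤ d * e := mul_comm (d : ℝ) e ▸ cast_le_cast_mul_cast hd
  rw [sum_progressionWeight_mul_eq hab]
  rw [abs_le] at *
  constructor <;> linarith

lemma mul_card_filter_two_modEq_le (hd : 0 < d) (he : 0 < e) (hab : a ≤ b) :
    (d * e : ℝ) * #{n ∈ Ioc a b | m * n ≡ 1 [MOD d] ∧ k * n ≡ 1 [MOD e]}
      ≤ d * e + (b - a) * (if m ≡ k [MOD d.gcd e] then (d.gcd e : ℝ) else 0) := by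
  have hab' : (0 : ℝ) ≤ b - a := sub_nonneg.2 (mod_cast hab)
  rcases Finset.eq_empty_or_nonempty {n ∈ Ioc a b | m * n ≡ 1 [MOD d] ∧ k * n ≡ 1 [MOD e]}
    with hempty | ⟨z, hz⟩
  · rw [hempty, card_empty, Nat.cast_zero, mul_zero]
    split_ifs <;> positivity
  · obtain ⟨-, hzd, hze⟩ := mem_filter.1 hz
    rw [if_pos (modEq_gcd_of_mul_modEq_one hzd hze)]
    linarith [(abs_le.1 (abs_mul_card_filter_two_modEq_sub_le hd he hab hzd hze)).2]

lemma abs_correlation_le_of_not_coprime (hd : 0 < d) (he : 0 < e) (hab : a ≤ b) :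
    |∑ n ∈ Ioc a b, progressionWeight d (m * n) * progressionWeight e (k * n)| ≤ 3 * (d * e)
      + (b - a) * ((if m ≡ k [MOD d.gcd e] then (d.gcd e : ℝ) else 0) + 3) := by
  have hab' : (0 : ℝ) ≤ b - a := sub_nonneg.2 (mod_cast hab)
  have hle : (d : ℝ) ≤ d * e := cast_le_cast_mul_cast he
  have hle' : (e : ℝ) ≤ d * e := mul_comm (d : ℝ) e ▸ cast_le_cast_mul_cast hd
  have hsumd := (abs_sum_progressionWeight_le (m := m) hd hab).trans
    (add_le_add_right (mul_le_of_le_one_right hab' (nonCoprime_le_one d m)) _)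
  have hsume := (abs_sum_progressionWeight_le (m := k) he hab).trans
    (add_le_add_right (mul_le_of_le_one_right hab' (nonCoprime_le_one e k)) _)
  have hjoint := mul_card_filter_two_modEq_le (m := m) (k := k) hd he hab
  have hjoint₀ : 0 ≤ (d * e : ℝ) * #{n ∈ Ioc a b | m * n ≡ 1 [MOD d] ∧ k * n ≡ 1 [MOD e]} := by
    positivity
  have hgcd : 0 ≤ (b - a : ℝ) * (if m ≡ k [MOD d.gcd e] then (d.gcd e : ℝ) else 0) :=
    mul_nonneg hab' (by split_ifs <;> positivity)
  rw [sum_progressionWeight_mul_eq hab, mul_add]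
  rw [abs_le] at *
  constructor <;> linarith

lemma abs_correlation_le (hd : 0 < d) (he : 0 < e) (hab : a ≤ b) :
    |∑ n ∈ Ioc a b, progressionWeight d (m * n) * progressionWeight e (k * n)|
      ≤ 3 * (d * e) + (b - a) * correlationBound d e m k := by
  have hab' : (0 : ℝ) ≤ b - a := sub_nonneg.2 (mod_cast hab)
  have hle : (d : ℝ) ≤ d * e := cast_le_cast_mul_cast he
  have hle' : (e : ℝ) ≤ d * e := mul_comm (d : ℝ) e ▸ cast_le_cast_mul_cast hd
  have hnc : 0 ≤ (b - a : ℝ) * (nonCoprime d m * nonCoprime e k) :=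
    mul_nonneg hab' (mul_nonneg (nonCoprime_nonneg d m) (nonCoprime_nonneg e k))
  rw [correlationBound, mul_add]
  by_cases hde : d.Coprime e
  · rw [nonCoprime_of_coprime hde, zero_mul, mul_zero, zero_add]
    by_cases hm : m.Coprime d
    · by_cases hk : k.Coprime e
      · linarith [abs_correlation_le_of_coprime_of_coprime hd he hab hde hm hk]
      · have hsum := abs_sum_progressionWeight_le (m := m) hd hab
        rw [nonCoprime_of_coprime hm, mul_zero, add_zero] at hsum
        simp_rw [progressionWeight_of_not_coprime hk]
        rw [← sum_mul, mul_neg_one, abs_neg]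
        linarith
    · have hsum := abs_sum_progressionWeight_le (m := k) he hab
      simp_rw [progressionWeight_of_not_coprime hm]
      rw [← mul_sum, neg_one_mul, abs_neg, nonCoprime_of_not_coprime hm, one_mul]
      linarith
  · rw [nonCoprime_of_not_coprime hde, one_mul]
    linarith [abs_correlation_le_of_not_coprime (m := m) (k := k) hd he hab]

end Progressions

section SummationByParts

lemma harmonic_eq_sum_Ioc (N : ℕ) : (harmonic N : ℝ) = ∑ n ∈ Ioc 0 N, (n : ℝ)⁻¹ := by
  rw [harmonic_eq_sum_Icc]
  push_cast
  rfl

lemma harmonic_mono : Monotone fun N => (harmonic N : ℝ) := fun M N hMN => by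
  simp only [harmonic_eq_sum_Ioc]
  exact sum_le_sum_of_subset_of_nonneg (Ioc_subset_Ioc_right hMN) fun _ _ _ => by positivity

lemma harmonic_nonneg (N : ℕ) : (0 : ℝ) ≤ harmonic N := by
  rw [harmonic_eq_sum_Ioc]
  positivity

lemma mul_sum_le_sum_mul_of_antitoneOn {c w : ℕ → ℝ} (hw : AntitoneOn w (Set.Ici 1))
    (hc : ∀ N, 0 ≤ ∑ n ∈ Ioc 0 N, c n) (N : ℕ) :
    w N * ∑ n ∈ Ioc 0 N, c n ≤ ∑ n ∈ Ioc 0 N, c n * w n := by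
  induction N with
  | zero => simp
  | succ N ih =>
    rw [sum_Ioc_succ_top N.zero_le, sum_Ioc_succ_top N.zero_le]
    rcases N.eq_zero_or_pos with rfl | hN
    · simp [mul_comm]
    · nlinarith [hw hN (Nat.le_add_left 1 N) N.le_succ, hc N]

lemma sum_div_le_mul_harmonic {c : ℕ → ℝ} {δ : ℝ} (hc : ∀ N : ℕ, ∑ n ∈ Ioc 0 N, c n ≤ δ * N)
    (N : ℕ) : ∑ n ∈ Ioc 0 N, c n / n ≤ δ * harmonic N := by
  have hpartial : ∀ M, 0 ≤ ∑ n ∈ Ioc 0 M, (δ - c n) := fun M => by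
    simpa [sum_sub_distrib, mul_comm] using hc M
  have hanti : AntitoneOn (fun n : ℕ => (n : ℝ)⁻¹) (Set.Ici 1) := fun m hm n _ hmn =>
    inv_anti₀ (Nat.cast_pos.2 hm) (Nat.cast_le.2 hmn)
  have habel := (mul_nonneg (by positivity) (hpartial N)).trans
    (mul_sum_le_sum_mul_of_antitoneOn hanti hpartial N)
  simp_rw [sub_mul, sum_sub_distrib, ← mul_sum, ← harmonic_eq_sum_Ioc] at habel
  simpa only [div_eq_mul_inv, sub_nonneg] using habel

lemma abs_sum_mul_le_of_monotone {c f : ℕ → ℝ} {B : ℝ} {N : ℕ} (hf : Monotone f) (hf₀ : 0 ≤ f 0)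
    (hc : ∀ t ≤ N, |∑ k ∈ Ioc 0 t, c k| ≤ B) : |∑ k ∈ Ioc 0 N, f k * c k| ≤ 2 * f N * B := by
  have hdiff : ∀ t ≤ N,
      |∑ k ∈ Ioc 0 t, f k * c k - f t * ∑ k ∈ Ioc 0 t, c k| ≤ f t * B := by
    intro t
    induction t with
    | zero => simpa using mul_nonneg hf₀ ((abs_nonneg _).trans (hc 0 N.zero_le))
    | succ t ih =>
      intro ht
      have hstep : 0 ≤ f (t + 1) - f t := sub_nonneg.2 (hf t.le_succ)
      rw [sum_Ioc_succ_top t.zero_le, sum_Ioc_succ_top t.zero_le]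
      calc _ = |(∑ k ∈ Ioc 0 t, f k * c k - f t * ∑ k ∈ Ioc 0 t, c k)
              - (f (t + 1) - f t) * ∑ k ∈ Ioc 0 t, c k| := by congr 1; ring
        _ ≤ f t * B + (f (t + 1) - f t) * B := by
          refine (abs_sub _ _).trans (add_le_add (ih (by lia)) ?_)
          rw [abs_mul, abs_of_nonneg hstep]
          exact mul_le_mul_of_nonneg_left (hc t (by lia)) hstep
        _ = f (t + 1) * B := by ring
  have hmain : |f N * ∑ k ∈ Ioc 0 N, c k| ≤ f N * B := by
    rw [abs_mul, abs_of_nonneg (hf₀.trans (hf N.zero_le))]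
    exact mul_le_mul_of_nonneg_left (hc N le_rfl) (hf₀.trans (hf N.zero_le))
  calc |∑ k ∈ Ioc 0 N, f k * c k|
      = |(∑ k ∈ Ioc 0 N, f k * c k - f N * ∑ k ∈ Ioc 0 N, c k) + f N * ∑ k ∈ Ioc 0 N, c k| := by
        rw [sub_add_cancel]
    _ ≤ f N * B + f N * B := (abs_add_le _ _).trans (add_le_add (hdiff N le_rfl) hmain)
    _ = 2 * f N * B := by ring

end SummationByParts

section Convolution

lemma sum_mul_apply_mul (f g : ArithmeticFunction ℝ) (N : ℕ) (c : ℕ → ℝ) :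
    ∑ n ∈ Ioc 0 N, (f * g) n * c n
      = ∑ a ∈ Ioc 0 N, ∑ b ∈ Ioc 0 (N / a), f a * g b * c (a * b) := by
  have hconv : ∀ n ∈ Ioc 0 N, (f * g) n * c n
      = ∑ x ∈ Ioc 0 N ×ˢ Ioc 0 N with x.1 * x.2 = n, f x.1 * g x.2 * c (x.1 * x.2) := by
    intro n hn
    obtain ⟨hn₀, hnN⟩ := mem_Ioc.1 hn
    rw [ArithmeticFunction.mul_apply, Nat.divisorsAntidiagonal_eq_prod_filter_of_le hn₀.ne' hnN,
      sum_mul]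
    exact sum_congr rfl fun x hx => by rw [(mem_filter.1 hx).2]
  have hdiv : ∀ a ∈ Ioc 0 N, {b ∈ Ioc 0 N | a * b ∈ Ioc 0 N} = Ioc 0 (N / a) := by
    intro a ha
    obtain ⟨ha₀, -⟩ := mem_Ioc.1 ha
    ext b
    simp only [mem_filter, mem_Ioc, Nat.le_div_iff_mul_le ha₀, mul_comm b a]
    exact ⟨fun h => ⟨h.1.1, h.2.2⟩, fun h =>
      ⟨⟨h.1, (Nat.le_mul_of_pos_left b ha₀).trans h.2⟩, Nat.mul_pos ha₀ h.1, h.2⟩⟩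
  simp_rw [sum_congr rfl hconv, sum_filter]
  rw [sum_comm, sum_product]
  simp only [sum_ite_eq]
  exact sum_congr rfl fun a ha => by rw [← hdiv a ha, sum_filter]

lemma sum_card_divisors_mul (N : ℕ) (c : ℕ → ℝ) :
    ∑ n ∈ Ioc 0 N, (#n.divisors : ℝ) * c n = ∑ a ∈ Ioc 0 N, ∑ b ∈ Ioc 0 (N / a), c (a * b) := by
  have hconv := sum_mul_apply_mul (ζ : ArithmeticFunction ℝ) (ζ : ArithmeticFunction ℝ) N c
  have hzeta : ∀ {M n : ℕ}, n ∈ Ioc 0 M → (ζ : ArithmeticFunction ℝ) n = 1 := fun hn => by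
    simp [(mem_Ioc.1 hn).1.ne']
  calc _ = _ := sum_congr rfl fun n _ => by
        rw [ArithmeticFunction.coe_mul_zeta_apply, sum_congr rfl fun d hd => by
          rw [ArithmeticFunction.natCoe_apply, ArithmeticFunction.zeta_apply_ne
            (Nat.pos_of_mem_divisors hd).ne']]
        simp
    _ = _ := hconv
    _ = _ := sum_congr rfl fun a ha => sum_congr rfl fun b hb => by
        rw [hzeta ha, hzeta hb, one_mul, one_mul]

lemma sum_card_divisors_le (N : ℕ) : ∑ n ∈ Ioc 0 N, (#n.divisors : ℝ) ≤ N * harmonic N := by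
  calc ∑ n ∈ Ioc 0 N, (#n.divisors : ℝ) = ∑ a ∈ Ioc 0 N, ((N / a : ℕ) : ℝ) := by
        simpa using sum_card_divisors_mul N 1
    _ ≤ ∑ a ∈ Ioc 0 N, (N : ℝ) * (a : ℝ)⁻¹ := sum_le_sum fun a _ => Nat.cast_div_le
    _ = N * harmonic N := by rw [harmonic_eq_sum_Ioc, mul_sum]

lemma sum_card_divisors_mul_inv_le (N : ℕ) :
    ∑ n ∈ Ioc 0 N, (#n.divisors : ℝ) * (n : ℝ)⁻¹ ≤ (harmonic N : ℝ) ^ 2 := by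
  rw [sum_card_divisors_mul N fun n => (n : ℝ)⁻¹]
  calc _ = ∑ a ∈ Ioc 0 N, (a : ℝ)⁻¹ * harmonic (N / a) := by
        simp only [Nat.cast_mul, mul_inv, ← mul_sum, ← harmonic_eq_sum_Ioc]
    _ ≤ ∑ a ∈ Ioc 0 N, (a : ℝ)⁻¹ * harmonic N := sum_le_sum fun a _ =>
        mul_le_mul_of_nonneg_left (harmonic_mono (N.div_le_self a)) (by positivity)
    _ = (harmonic N : ℝ) ^ 2 := by rw [← sum_mul, ← harmonic_eq_sum_Ioc, sq]

lemma card_divisors_mul_le (a b : ℕ) : #(a * b).divisors ≤ #a.divisors * #b.divisors := by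
  open scoped Pointwise in
  rw [Nat.divisors_mul]
  exact card_mul_le

lemma sum_card_divisors_sq_le (N : ℕ) :
    ∑ n ∈ Ioc 0 N, (#n.divisors : ℝ) ^ 2 ≤ N * (harmonic N : ℝ) ^ 3 := by
  simp only [sq]
  rw [sum_card_divisors_mul N fun n => (#n.divisors : ℝ)]
  calc ∑ a ∈ Ioc 0 N, ∑ b ∈ Ioc 0 (N / a), (#(a * b).divisors : ℝ)
      ≤ ∑ a ∈ Ioc 0 N, (#a.divisors : ℝ) * ∑ b ∈ Ioc 0 (N / a), (#b.divisors : ℝ) := by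
        simp only [mul_sum]
        exact sum_le_sum fun a _ => sum_le_sum fun b _ => mod_cast card_divisors_mul_le a b
    _ ≤ ∑ a ∈ Ioc 0 N, (#a.divisors : ℝ) * (N * (a : ℝ)⁻¹ * harmonic N) := by
        refine sum_le_sum fun a _ => mul_le_mul_of_nonneg_left ?_ (Nat.cast_nonneg _)
        exact (sum_card_divisors_le _).trans (mul_le_mul Nat.cast_div_le
          (harmonic_mono (N.div_le_self a)) (harmonic_nonneg _) (by positivity))
    _ = N * harmonic N * ∑ a ∈ Ioc 0 N, (#a.divisors : ℝ) * (a : ℝ)⁻¹ := by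
        rw [mul_sum]
        exact sum_congr rfl fun a _ => by ring
    _ ≤ N * harmonic N * (harmonic N : ℝ) ^ 2 := mul_le_mul_of_nonneg_left
        (sum_card_divisors_mul_inv_le N) (mul_nonneg N.cast_nonneg (harmonic_nonneg N))
    _ = N * (harmonic N : ℝ) ^ 3 := by ring

end Convolution

section VaughanIdentity

/-- The restriction of `f` to the integers up to `U`. -/
noncomputable def truncate (U : ℕ) (f : ArithmeticFunction ℝ) : ArithmeticFunction ℝ :=
  ⟨fun n => if n ≤ U then f n else 0, by simp⟩

lemma truncate_apply (U : ℕ) (f : ArithmeticFunction ℝ) (n : ℕ) :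
    truncate U f n = if n ≤ U then f n else 0 := rfl

lemma sub_truncate_apply (U : ℕ) (f : ArithmeticFunction ℝ) (n : ℕ) :
    (f - truncate U f) n = if n ≤ U then 0 else f n := by
  rw [sub_eq_add_neg, ArithmeticFunction.add_apply, ArithmeticFunction.neg_apply, truncate_apply]
  split_ifs <;> simp

lemma abs_truncate_le (U : ℕ) (f : ArithmeticFunction ℝ) (n : ℕ) : |truncate U f n| ≤ |f n| := by
  rw [truncate_apply]
  split_ifs <;> simp

/-- The coefficients `∑ μ(e)`, over divisors `e > V` of `n`, of the bilinear term in Vaughan's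
identity. -/
noncomputable def vaughanCoeff (V : ℕ) : ArithmeticFunction ℝ :=
  ((μ : ArithmeticFunction ℝ) - truncate V (μ : ArithmeticFunction ℝ)) * (ζ : ArithmeticFunction ℝ)

lemma vaughan_identity (A : ArithmeticFunction ℝ) (V : ℕ) :
    Λ - A = truncate V (μ : ArithmeticFunction ℝ) * ArithmeticFunction.log
      - truncate V (μ : ArithmeticFunction ℝ) * A * (ζ : ArithmeticFunction ℝ)
      + vaughanCoeff V * (Λ - A) := by
  rw [vaughanCoeff, sub_mul _ _ (ζ : ArithmeticFunction ℝ),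
    ArithmeticFunction.coe_moebius_mul_coe_zeta, ← ArithmeticFunction.vonMangoldt_mul_zeta]
  ring

lemma vaughanCoeff_eq_zero {V n : ℕ} (hn : n ≤ V) : vaughanCoeff V n = 0 := by
  rw [vaughanCoeff, ArithmeticFunction.coe_mul_zeta_apply]
  refine sum_eq_zero fun e he => ?_
  rw [sub_truncate_apply, if_pos ((Nat.divisor_le he).trans hn)]

lemma abs_moebius_cast_le (n : ℕ) : |(μ : ArithmeticFunction ℝ) n| ≤ 1 := by
  rw [ArithmeticFunction.intCoe_apply]
  exact_mod_cast ArithmeticFunction.abs_moebius_le_one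

lemma abs_vaughanCoeff_le (V n : ℕ) : |vaughanCoeff V n| ≤ #n.divisors := by
  rw [vaughanCoeff, ArithmeticFunction.coe_mul_zeta_apply]
  calc _ ≤ ∑ e ∈ n.divisors, |((μ : ArithmeticFunction ℝ)
            - truncate V (μ : ArithmeticFunction ℝ)) e| := abs_sum_le_sum_abs _ _
    _ ≤ ∑ _e ∈ n.divisors, (1 : ℝ) := by
        refine sum_le_sum fun e _ => ?_
        rw [sub_truncate_apply]
        split_ifs
        · simp
        · exact abs_moebius_cast_le e
    _ = #n.divisors := by simp

lemma abs_truncate_moebius_mul_truncate_vonMangoldt_le (U V n : ℕ) :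
    |(truncate V (μ : ArithmeticFunction ℝ) * truncate U Λ) n| ≤ Real.log n := by
  rw [ArithmeticFunction.mul_apply, ← ArithmeticFunction.vonMangoldt_sum,
    ← Nat.sum_divisorsAntidiagonal' fun _ e => Λ e]
  refine (abs_sum_le_sum_abs _ _).trans (sum_le_sum fun p _ => ?_)
  rw [abs_mul, ← one_mul (Λ p.2)]
  exact mul_le_mul ((abs_truncate_le _ _ _).trans (abs_moebius_cast_le _))
    ((abs_truncate_le _ _ _).trans_eq (abs_of_nonneg ArithmeticFunction.vonMangoldt_nonneg))
    (abs_nonneg _) zero_le_one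

lemma truncate_mul_truncate_eq_zero {U V n : ℕ} (f g : ArithmeticFunction ℝ) (hn : V * U < n) :
    (truncate V f * truncate U g) n = 0 := by
  rw [ArithmeticFunction.mul_apply]
  refine sum_eq_zero fun p hp => ?_
  rw [truncate_apply, truncate_apply]
  split_ifs with h₁ h₂
  · have := Nat.mul_le_mul h₁ h₂
    rw [(Nat.mem_divisorsAntidiagonal.1 hp).1] at this
    lia
  all_goals simp

end VaughanIdentity

section TypeI

variable {d V x : ℕ} {δ h L : ℝ} {a f : ArithmeticFunction ℝ}

lemma sum_ite_le_const_le {c : ℝ} (hc : 0 ≤ c) (V x : ℕ) :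
    ∑ v ∈ Ioc 0 x, (if v ≤ V then c else 0) ≤ V * c := by
  rw [← sum_filter, sum_const, nsmul_eq_mul]
  refine mul_le_mul_of_nonneg_right (Nat.cast_le.2 ?_) hc
  calc _ ≤ #(Ioc 0 V) := card_le_card fun v hv =>
        mem_Ioc.2 ⟨(mem_Ioc.1 (mem_filter.1 hv).1).1, (mem_filter.1 hv).2⟩
    _ = V := by simp

lemma abs_sum_mul_progressionWeight_le (hd : 0 < d) (hf : Monotone f) (hfh : f x ≤ h) (v : ℕ) :
    |∑ k ∈ Ioc 0 (x / v), f k * progressionWeight d (v * k)|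
      ≤ 2 * h * (d + x * (nonCoprime d v / v)) := by
  have hnc := nonCoprime_nonneg d v
  calc _ ≤ 2 * f (x / v) * (d + (x / v : ℕ) * nonCoprime d v) := by
        refine abs_sum_mul_le_of_monotone hf f.map_zero.ge fun t ht => ?_
        refine (abs_sum_progressionWeight_le hd t.zero_le).trans ?_
        rw [Nat.cast_zero, sub_zero]
        gcongr
    _ ≤ 2 * h * (d + x / v * nonCoprime d v) := by
        gcongr
        · exact mul_nonneg zero_le_two (f.map_zero.ge.trans ((hf x.zero_le).trans hfh))
        · exact (hf (x.div_le_self v)).trans hfh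
        · exact Nat.cast_div_le
    _ = 2 * h * (d + x * (nonCoprime d v / v)) := by ring

lemma abs_sum_mul_progressionWeight_le_of_support (hd : 0 < d)
    (hδ : ∀ N : ℕ, ∑ n ∈ Ioc 0 N, nonCoprime d n ≤ δ * N) (hf : Monotone f) (hfh : f x ≤ h)
    (ha : ∀ v ≤ x, |a v| ≤ L) (haV : ∀ v, V < v → a v = 0) :
    |∑ n ∈ Ioc 0 x, (a * f) n * progressionWeight d n|
      ≤ 2 * h * L * (V * d + x * (δ * harmonic x)) := by
  have hh : 0 ≤ h := f.map_zero.ge.trans ((hf x.zero_le).trans hfh)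
  have hL : 0 ≤ L := (abs_nonneg _).trans (ha 0 x.zero_le)
  have hinner : ∀ v ∈ Ioc 0 x, |∑ k ∈ Ioc 0 (x / v), a v * f k * progressionWeight d (v * k)|
      ≤ 2 * h * L * ((if v ≤ V then (d : ℝ) else 0) + x * (nonCoprime d v / v)) := by
    intro v hv
    have hnc : 0 ≤ x * (nonCoprime d v / v) :=
      mul_nonneg x.cast_nonneg (div_nonneg (nonCoprime_nonneg d v) v.cast_nonneg)
    split_ifs with hvV
    · simp only [mul_assoc (a v), ← mul_sum]
      rw [abs_mul]
      linarith [mul_le_mul (ha v (mem_Ioc.1 hv).2)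
        (abs_sum_mul_progressionWeight_le hd hf hfh v) (abs_nonneg _) hL]
    · simp only [haV v (not_le.1 hvV), zero_mul, sum_const_zero, abs_zero, zero_add]
      positivity
  rw [sum_mul_apply_mul]
  calc _ ≤ ∑ v ∈ Ioc 0 x, 2 * h * L * ((if v ≤ V then (d : ℝ) else 0)
            + x * (nonCoprime d v / v)) := (abs_sum_le_sum_abs _ _).trans (sum_le_sum hinner)
    _ = 2 * h * L * (∑ v ∈ Ioc 0 x, (if v ≤ V then (d : ℝ) else 0)
            + x * ∑ v ∈ Ioc 0 x, nonCoprime d v / v) := by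
        rw [← mul_sum, sum_add_distrib, ← mul_sum]
    _ ≤ 2 * h * L * (V * d + x * (δ * harmonic x)) := by
        gcongr
        · exact sum_ite_le_const_le d.cast_nonneg V x
        · exact sum_div_le_mul_harmonic hδ x

end TypeI

section NearlyCoprimeFamilies

variable {ι : Type*} {D : Finset ι} {d : ι → ℕ} {F N x : ℕ} {δ : ℝ}

/-- A finite family of moduli up to `F`, in which each modulus is coprime to all but a proportion
`δ` of the integers, and all but a proportion `δ` of the pairs of moduli are coprime. -/
structure NearlyCoprimeFamily (D : Finset ι) (d : ι → ℕ) (F : ℕ) (δ : ℝ) : Prop where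
  pos : ∀ i ∈ D, 0 < d i
  le : ∀ i ∈ D, d i ≤ F
  sum_nonCoprime_le : ∀ i ∈ D, ∀ N : ℕ, ∑ n ∈ Ioc 0 N, nonCoprime (d i) n ≤ δ * N
  sum_sum_nonCoprime_le : ∑ i ∈ D, ∑ j ∈ D, nonCoprime (d j) (d i) ≤ δ * #D ^ 2

/-- The sum of the weights of the progressions `1` modulo `d i`. -/
noncomputable def familyWeight (D : Finset ι) (d : ι → ℕ) (n : ℕ) : ℝ :=
  ∑ i ∈ D, progressionWeight (d i) n

lemma correlationBound_nonneg (d e m k : ℕ) : 0 ≤ correlationBound d e m k := by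
  have := nonCoprime_nonneg e d
  have := nonCoprime_nonneg d m
  have := nonCoprime_nonneg e k
  unfold correlationBound
  split_ifs <;> positivity

lemma abs_sum_filter_correlation_le {d e m k : ℕ} (hd : 0 < d) (he : 0 < e) (hdF : d ≤ F)
    (heF : e ≤ F) (hm : 0 < m) (hk : 0 < k) :
    |∑ n ∈ Ioc N (2 * N) with m * n ≤ x ∧ k * n ≤ x,
        progressionWeight d (m * n) * progressionWeight e (k * n)|
      ≤ 3 * (F : ℝ) ^ 2 + N * correlationBound d e m k := by
  have hρ := correlationBound_nonneg d e m k
  have hinterval : {n ∈ Ioc N (2 * N) | m * n ≤ x ∧ k * n ≤ x}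
      = Ioc N (min (2 * N) (min (x / m) (x / k))) := by
    ext n
    simp only [mem_filter, mem_Ioc, le_min_iff, Nat.le_div_iff_mul_le hm,
      Nat.le_div_iff_mul_le hk, mul_comm n]
    tauto
  rw [hinterval]
  rcases le_or_gt N (min (2 * N) (min (x / m) (x / k))) with hN | hN
  · refine (abs_correlation_le hd he hN).trans ?_
    have hlen : ((min (2 * N) (min (x / m) (x / k)) : ℕ) : ℝ) - N ≤ N := by
      have : ((min (2 * N) (min (x / m) (x / k)) : ℕ) : ℝ) ≤ (2 * N : ℕ) :=
        Nat.cast_le.2 (min_le_left _ _)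
      push_cast at this ⊢
      linarith
    rw [sq]
    gcongr
  · rw [Ioc_eq_empty hN.not_gt, sum_empty, abs_zero]
    positivity

lemma sum_sum_ite_modEq_le {g M : ℕ} (hg : 0 < g) (hgM : g ≤ M) :
    ∑ m ∈ Ioc 0 M, ∑ k ∈ Ioc 0 M, (if m ≡ k [MOD g] then (g : ℝ) else 0) ≤ 2 * (M : ℝ) ^ 2 := by
  calc _ ≤ ∑ m ∈ Ioc 0 M, 2 * (M : ℝ) := by
        refine sum_le_sum fun m _ => ?_
        simp only [Nat.ModEq.comm (a := m)]
        rw [← sum_filter, sum_const, nsmul_eq_mul, mul_comm]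
        have hcard := (abs_le.1 (abs_mul_card_filter_modEq_sub_le hg M.zero_le m)).2
        have hgM' : (g : ℝ) ≤ M := Nat.cast_le.2 hgM
        rw [Nat.cast_zero] at hcard
        linarith
    _ = 2 * (M : ℝ) ^ 2 := by
        rw [sum_const, Nat.card_Ioc, nsmul_eq_mul, Nat.sub_zero]
        ring

lemma sum_sum_correlationBound_le {d e M : ℕ} (hd : 0 < d) (hdM : d ≤ M)
    (hdδ : ∑ n ∈ Ioc 0 M, nonCoprime d n ≤ δ * M) (heδ : ∑ n ∈ Ioc 0 M, nonCoprime e n ≤ δ * M) :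
    ∑ m ∈ Ioc 0 M, ∑ k ∈ Ioc 0 M, correlationBound d e m k
      ≤ (M : ℝ) ^ 2 * (5 * nonCoprime e d + δ ^ 2) := by
  have hprod : (∑ m ∈ Ioc 0 M, nonCoprime d m) * ∑ k ∈ Ioc 0 M, nonCoprime e k
      ≤ (M : ℝ) ^ 2 * δ ^ 2 := by
    have hd₀ : 0 ≤ ∑ n ∈ Ioc 0 M, nonCoprime d n := sum_nonneg fun n _ => nonCoprime_nonneg d n
    have he₀ : 0 ≤ ∑ n ∈ Ioc 0 M, nonCoprime e n := sum_nonneg fun n _ => nonCoprime_nonneg e n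
    exact (mul_le_mul hdδ heδ he₀ (hd₀.trans hdδ)).trans_eq (by ring)
  have hgcd := sum_sum_ite_modEq_le (Nat.gcd_pos_of_pos_left e hd)
    ((Nat.gcd_le_left e hd).trans hdM)
  have hconst : ∑ _m ∈ Ioc 0 M, ∑ _k ∈ Ioc 0 M, (3 : ℝ) = 3 * (M : ℝ) ^ 2 := by
    simp only [sum_const, Nat.card_Ioc, nsmul_eq_mul, Nat.sub_zero]
    ring
  unfold correlationBound
  simp only [sum_add_distrib, ← mul_sum, ← sum_mul]
  rw [hconst]
  nlinarith [mul_le_mul_of_nonneg_left hgcd (nonCoprime_nonneg e d)]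

namespace NearlyCoprimeFamily

lemma sum_correlationBound_le (hD : NearlyCoprimeFamily D d F δ) {M : ℕ} (hFM : F ≤ M) :
    ∑ i ∈ D, ∑ j ∈ D, ∑ m ∈ Ioc 0 M, ∑ k ∈ Ioc 0 M, correlationBound (d i) (d j) m k
      ≤ (#D : ℝ) ^ 2 * (M : ℝ) ^ 2 * (5 * δ + δ ^ 2) := by
  calc _ ≤ ∑ i ∈ D, ∑ j ∈ D, (M : ℝ) ^ 2 * (5 * nonCoprime (d j) (d i) + δ ^ 2) :=
        sum_le_sum fun i hi => sum_le_sum fun j hj => sum_sum_correlationBound_le (hD.pos i hi)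
          ((hD.le i hi).trans hFM) (hD.sum_nonCoprime_le i hi M) (hD.sum_nonCoprime_le j hj M)
    _ = (M : ℝ) ^ 2 * (5 * ∑ i ∈ D, ∑ j ∈ D, nonCoprime (d j) (d i) + #D ^ 2 * δ ^ 2) := by
        simp only [← mul_sum, sum_add_distrib, sum_const, nsmul_eq_mul]
        ring
    _ ≤ (M : ℝ) ^ 2 * (5 * (δ * #D ^ 2) + #D ^ 2 * δ ^ 2) := by
        gcongr
        exact hD.sum_sum_nonCoprime_le
    _ = (#D : ℝ) ^ 2 * (M : ℝ) ^ 2 * (5 * δ + δ ^ 2) := by ring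

end NearlyCoprimeFamily

end NearlyCoprimeFamilies

section TypeII

variable {ι : Type*} {D : Finset ι} {d : ι → ℕ} {F N V x : ℕ} {δ h : ℝ}

lemma sum_sq_sum_mul_le {κ ν : Type*} {P : Finset κ} {c : κ → ℝ} (hc : ∀ p ∈ P, |c p| ≤ h)
    (S : Finset ν) (K : κ → ν → ℝ) :
    ∑ n ∈ S, (∑ p ∈ P, c p * K p n) ^ 2
      ≤ h ^ 2 * ∑ p ∈ P, ∑ q ∈ P, |∑ n ∈ S, K p n * K q n| := by
  calc _ = ∑ p ∈ P, ∑ q ∈ P, c p * c q * ∑ n ∈ S, K p n * K q n := by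
        simp only [sq, sum_mul_sum]
        simp only [mul_sum]
        rw [sum_comm]
        refine sum_congr rfl fun p _ => ?_
        rw [sum_comm]
        exact sum_congr rfl fun q _ => sum_congr rfl fun n _ => by ring
    _ ≤ ∑ p ∈ P, ∑ q ∈ P, h ^ 2 * |∑ n ∈ S, K p n * K q n| := by
        refine sum_le_sum fun p hp => sum_le_sum fun q hq => (le_abs_self _).trans ?_
        rw [abs_mul, abs_mul, sq]
        gcongr
        exacts [(abs_nonneg _).trans (hc p hp), hc p hp, hc q hq]
    _ = h ^ 2 * ∑ p ∈ P, ∑ q ∈ P, |∑ n ∈ S, K p n * K q n| := by simp only [mul_sum]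

lemma sum_mul_familyWeight_eq (α : ℕ → ℝ) {n : ℕ} (hN : 0 < N) (hn : N < n) :
    ∑ m ∈ Ioc 0 (x / n), α m * familyWeight D d (m * n)
      = ∑ p ∈ D ×ˢ Ioc 0 (x / N),
          α p.2 * if p.2 * n ≤ x then progressionWeight (d p.1) (p.2 * n) else 0 := by
  have hrange : Ioc 0 (x / n) = {m ∈ Ioc 0 (x / N) | m * n ≤ x} := by
    ext m
    have := Nat.div_le_div_left (a := x) hn.le hN
    simp only [mem_filter, mem_Ioc, ← Nat.le_div_iff_mul_le (hN.trans hn)]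
    omega
  rw [hrange, sum_filter, sum_product_right]
  refine sum_congr rfl fun m _ => ?_
  split_ifs <;> simp [familyWeight, mul_sum]

lemma NearlyCoprimeFamily.sum_abs_correlation_le (hD : NearlyCoprimeFamily D d F δ)
    {M : ℕ} (hFM : F ≤ M) :
    ∑ p ∈ D ×ˢ Ioc 0 M, ∑ q ∈ D ×ˢ Ioc 0 M,
      |∑ n ∈ Ioc N (2 * N) with p.2 * n ≤ x ∧ q.2 * n ≤ x,
        progressionWeight (d p.1) (p.2 * n) * progressionWeight (d q.1) (q.2 * n)|
      ≤ (#D : ℝ) ^ 2 * (M : ℝ) ^ 2 * (3 * (F : ℝ) ^ 2 + N * (5 * δ + δ ^ 2)) := by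
  calc _ ≤ ∑ p ∈ D ×ˢ Ioc 0 M, ∑ q ∈ D ×ˢ Ioc 0 M,
          (3 * (F : ℝ) ^ 2 + N * correlationBound (d p.1) (d q.1) p.2 q.2) := by
        refine sum_le_sum fun p hp => sum_le_sum fun q hq => ?_
        obtain ⟨hi, hm⟩ := mem_product.1 hp
        obtain ⟨hj, hk⟩ := mem_product.1 hq
        exact abs_sum_filter_correlation_le (hD.pos _ hi) (hD.pos _ hj) (hD.le _ hi) (hD.le _ hj)
          (mem_Ioc.1 hm).1 (mem_Ioc.1 hk).1
    _ = (#D : ℝ) ^ 2 * (M : ℝ) ^ 2 * (3 * (F : ℝ) ^ 2) + N * ∑ i ∈ D, ∑ j ∈ D,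
          ∑ m ∈ Ioc 0 M, ∑ k ∈ Ioc 0 M, correlationBound (d i) (d j) m k := by
        simp only [sum_add_distrib, ← mul_sum, sum_const, card_product, Nat.card_Ioc, nsmul_eq_mul,
          Nat.cast_mul, Nat.sub_zero, sum_product]
        rw [sum_congr rfl fun i _ => sum_comm]
        ring
    _ ≤ (#D : ℝ) ^ 2 * (M : ℝ) ^ 2 * (3 * (F : ℝ) ^ 2)
          + N * ((#D : ℝ) ^ 2 * (M : ℝ) ^ 2 * (5 * δ + δ ^ 2)) := by
        gcongr
        exact hD.sum_correlationBound_le hFM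
    _ = _ := by ring

lemma NearlyCoprimeFamily.sum_sq_sum_mul_familyWeight_le (hD : NearlyCoprimeFamily D d F δ)
    {α : ℕ → ℝ} (hα : ∀ m ≤ x, |α m| ≤ h) (hN : 0 < N) (hF : F ≤ x / N) :
    ∑ n ∈ Ioc N (2 * N), (∑ m ∈ Ioc 0 (x / n), α m * familyWeight D d (m * n)) ^ 2
      ≤ h ^ 2 * ((#D : ℝ) ^ 2 * ((x / N : ℕ) : ℝ) ^ 2
        * (3 * (F : ℝ) ^ 2 + N * (5 * δ + δ ^ 2))) := by
  rw [sum_congr rfl fun n hn => by rw [sum_mul_familyWeight_eq α hN (mem_Ioc.1 hn).1]]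
  refine (sum_sq_sum_mul_le (fun p hp => hα p.2 ?_) _ _).trans ?_
  · exact (mem_Ioc.1 (mem_product.1 hp).2).2.trans (x.div_le_self N)
  · gcongr
    refine le_of_eq_of_le ?_ (hD.sum_abs_correlation_le (N := N) (x := x) hF)
    simp only [ite_zero_mul_ite_zero, ← sum_filter]

lemma sum_sq_le_of_abs_le_card_divisors {β : ℕ → ℝ} (hβ : ∀ n, |β n| ≤ #n.divisors)
    (hN : harmonic (2 * N) ≤ h) : ∑ n ∈ Ioc N (2 * N), β n ^ 2 ≤ 2 * N * h ^ 3 := by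
  calc _ ≤ ∑ n ∈ Ioc 0 (2 * N), (#n.divisors : ℝ) ^ 2 := by
        refine (sum_le_sum fun n _ => ?_).trans (sum_le_sum_of_subset_of_nonneg
          (Ioc_subset_Ioc_left N.zero_le) fun _ _ _ => sq_nonneg _)
        exact sq_le_sq.2 ((hβ n).trans (le_abs_self _))
    _ ≤ (2 * N : ℕ) * (harmonic (2 * N) : ℝ) ^ 3 := sum_card_divisors_sq_le _
    _ ≤ 2 * N * h ^ 3 := by
        have := harmonic_nonneg (2 * N)
        push_cast
        gcongr

lemma NearlyCoprimeFamily.sq_dyadic_sum_le (hD : NearlyCoprimeFamily D d F δ) (hδ : 0 ≤ δ)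
    {α β : ℕ → ℝ} (hβ : ∀ n, |β n| ≤ #n.divisors) (hα : ∀ m ≤ x, |α m| ≤ h)
    (hh : harmonic x ≤ h) (hV : 0 < V) (hVN : V ≤ N) (hF : F ≤ x / N) (h2N : 2 * N ≤ x) :
    (∑ n ∈ Ioc N (2 * N), β n * ∑ m ∈ Ioc 0 (x / n), α m * familyWeight D d (m * n)) ^ 2
      ≤ (2 * h ^ 5 * (3 * (F : ℝ) ^ 2 / V + 5 * δ + δ ^ 2)) * (#D * x) ^ 2 := by
  have hN : 0 < N := hV.trans_le hVN
  have : (0 : ℝ) < N := Nat.cast_pos.2 hN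
  have hh₀ : 0 ≤ h := (harmonic_nonneg x).trans hh
  have hMN : ((x / N : ℕ) : ℝ) * N ≤ x := mod_cast Nat.div_mul_le_self x N
  calc _ ≤ 2 * N * h ^ 3 * (h ^ 2 * ((#D : ℝ) ^ 2 * ((x / N : ℕ) : ℝ) ^ 2
          * (3 * (F : ℝ) ^ 2 + N * (5 * δ + δ ^ 2)))) :=
        (sum_mul_sq_le_sq_mul_sq _ _ _).trans (mul_le_mul
          (sum_sq_le_of_abs_le_card_divisors hβ ((harmonic_mono h2N).trans hh))
          (hD.sum_sq_sum_mul_familyWeight_le hα hN hF)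
          (sum_nonneg fun _ _ => sq_nonneg _) (by positivity))
    _ = 2 * h ^ 5 * (#D : ℝ) ^ 2 * (((x / N : ℕ) : ℝ) * N) ^ 2
          * (3 * (F : ℝ) ^ 2 / N + 5 * δ + δ ^ 2) := by
        field_simp
        ring
    _ ≤ 2 * h ^ 5 * (#D : ℝ) ^ 2 * (x : ℝ) ^ 2 * (3 * (F : ℝ) ^ 2 / V + 5 * δ + δ ^ 2) := by
        gcongr
    _ = _ := by ring

lemma NearlyCoprimeFamily.abs_dyadic_sum_le (hD : NearlyCoprimeFamily D d F δ) (hδ : 0 ≤ δ)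
    {α β : ℕ → ℝ} (hβ : ∀ n, |β n| ≤ #n.divisors) (hF : 0 < F) (hα₀ : ∀ m ≤ F, α m = 0)
    (hα : ∀ m ≤ x, |α m| ≤ h) (hh : harmonic x ≤ h) (hV : 0 < V) (hVN : V ≤ N) :
    |∑ n ∈ Ioc N (2 * N), β n * ∑ m ∈ Ioc 0 (x / n), α m * familyWeight D d (m * n)|
      ≤ √(2 * h ^ 5 * (3 * (F : ℝ) ^ 2 / V + 5 * δ + δ ^ 2)) * #D * x := by
  have hN : 0 < N := hV.trans_le hVN
  have hh₀ : 0 ≤ h := (harmonic_nonneg x).trans hh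
  rcases le_or_gt (x / N) F with hM | hM
  · rw [sum_eq_zero, abs_zero]
    · positivity
    · intro n hn
      rw [sum_eq_zero, mul_zero]
      intro m hm
      rw [hα₀ m ((mem_Ioc.1 hm).2.trans ((Nat.div_le_div_left (mem_Ioc.1 hn).1.le hN).trans hM)),
        zero_mul]
  · have h2N : 2 * N ≤ x :=
      (Nat.mul_le_mul_right N (by omega : 2 ≤ x / N)).trans (Nat.div_mul_le_self x N)
    refine (Real.abs_le_sqrt (hD.sq_dyadic_sum_le hδ hβ hα hh hV hVN hM.le h2N)).trans_eq ?_
    rw [Real.sqrt_mul (by positivity), Real.sqrt_sq (by positivity), ← mul_assoc]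

lemma NearlyCoprimeFamily.abs_bilinear_sum_le (hD : NearlyCoprimeFamily D d F δ) (hδ : 0 ≤ δ)
    {α β : ArithmeticFunction ℝ} (hβ : ∀ n, |β n| ≤ #n.divisors) (hβ₀ : ∀ n ≤ V, β n = 0)
    (hF : 0 < F) (hα₀ : ∀ m ≤ F, α m = 0) (hα : ∀ m ≤ x, |α m| ≤ h) (hh : harmonic x ≤ h)
    (hV : 0 < V) {I : ℕ} (hx : x = 2 ^ I * V) :
    |∑ n ∈ Ioc 0 x, (β * α) n * familyWeight D d n|
      ≤ I * (√(2 * h ^ 5 * (3 * (F : ℝ) ^ 2 / V + 5 * δ + δ ^ 2)) * #D * x) := by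
  set f : ℕ → ℝ := fun n => β n * ∑ m ∈ Ioc 0 (x / n), α m * familyWeight D d (m * n) with hf
  have hsum : ∑ n ∈ Ioc 0 x, (β * α) n * familyWeight D d n = ∑ n ∈ Ioc 0 x, f n := by
    rw [sum_mul_apply_mul]
    refine sum_congr rfl fun n _ => ?_
    simp only [hf, mul_sum, mul_assoc, mul_comm n]
  have hdyadic : ∀ i : ℕ, |∑ n ∈ Ioc 0 (2 ^ i * V), f n|
      ≤ i * (√(2 * h ^ 5 * (3 * (F : ℝ) ^ 2 / V + 5 * δ + δ ^ 2)) * #D * x) := by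
    intro i
    induction i with
    | zero =>
      rw [sum_eq_zero]
      · simp
      · intro n hn
        simp only [hf, hβ₀ n (by simpa using (mem_Ioc.1 hn).2), zero_mul]
    | succ i ih =>
      rw [pow_succ', mul_assoc, ← sum_Ioc_consecutive f (2 ^ i * V).zero_le
        (Nat.le_mul_of_pos_left _ two_pos)]
      refine (abs_add_le _ _).trans ((add_le_add ih (hD.abs_dyadic_sum_le hδ hβ hF hα₀ hα hh hV
        (Nat.le_mul_of_pos_left V (by positivity)))).trans_eq ?_)
      push_cast
      ring
  rw [hsum]
  simpa only [← hx] using hdyadic I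

end TypeII

section PrimesInProgressions

variable {ι : Type*} {D : Finset ι} {d : ι → ℕ} {A F I V x : ℕ} {δ h : ℝ}

lemma sum_mul_familyWeight (c : ℕ → ℝ) (S : Finset ℕ) :
    ∑ n ∈ S, c n * familyWeight D d n
      = ∑ i ∈ D, (d i : ℝ) * ∑ n ∈ S with n ≡ 1 [MOD d i], c n - #D * ∑ n ∈ S, c n := by
  have hi : ∀ i ∈ D, ∑ n ∈ S, c n * progressionWeight (d i) n
      = (d i : ℝ) * ∑ n ∈ S with n ≡ 1 [MOD d i], c n - ∑ n ∈ S, c n := fun i _ => by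
    simp only [progressionWeight, sub_mul, one_mul, ite_mul, zero_mul, sum_sub_distrib, sum_filter,
      mul_sum, mul_ite, mul_zero, mul_comm (c _)]
  simp only [familyWeight, mul_sum (s := D)]
  rw [sum_comm, sum_congr rfl hi, sum_sub_distrib, sum_const, nsmul_eq_mul]

lemma monotone_arithmeticFunction_log : Monotone ArithmeticFunction.log := by
  intro m n hmn
  rcases m.eq_zero_or_pos with rfl | hm
  · simpa using Real.log_natCast_nonneg n
  · exact Real.log_le_log (Nat.cast_pos.2 hm) (Nat.cast_le.2 hmn)

lemma monotone_zeta : Monotone (ζ : ArithmeticFunction ℝ) := by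
  intro m n hmn
  simp only [ArithmeticFunction.natCoe_apply, ArithmeticFunction.zeta_apply, Nat.cast_ite]
  split_ifs with hm hn <;> first | omega | simp

lemma abs_vonMangoldt_sub_truncate_le {n : ℕ} (hn : n ≤ x) (U : ℕ) :
    |(Λ - truncate U Λ) n| ≤ Real.log x := by
  rw [sub_truncate_apply]
  split_ifs with hU
  · simpa using Real.log_natCast_nonneg x
  · rw [abs_of_nonneg ArithmeticFunction.vonMangoldt_nonneg]
    refine ArithmeticFunction.vonMangoldt_le_log.trans (Real.log_le_log ?_ (Nat.cast_le.2 hn))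
    exact Nat.cast_pos.2 (by omega)

namespace NearlyCoprimeFamily

lemma abs_sum_mul_familyWeight_le (hD : NearlyCoprimeFamily D d F δ) (hδ : 0 ≤ δ)
    {a f : ArithmeticFunction ℝ} {L H : ℝ} (hf : Monotone f) (hfH : f x ≤ H)
    (ha : ∀ v ≤ x, |a v| ≤ L) (haV : ∀ v, V < v → a v = 0) (hh : harmonic x ≤ h) :
    |∑ n ∈ Ioc 0 x, (a * f) n * familyWeight D d n|
      ≤ #D * (2 * H * L * (V * F + x * (δ * h))) := by
  have hH : 0 ≤ H := (f.map_zero.ge.trans (hf x.zero_le)).trans hfH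
  have hL : 0 ≤ L := (abs_nonneg _).trans (ha x le_rfl)
  simp only [familyWeight, mul_sum (s := D)]
  rw [sum_comm, ← nsmul_eq_mul]
  refine (abs_sum_le_sum_abs _ _).trans (sum_le_card_nsmul _ _ _ fun i hi => ?_)
  have hdF := hD.le i hi
  refine (abs_sum_mul_progressionWeight_le_of_support (hD.pos i hi) (hD.sum_nonCoprime_le i hi)
    hf hfH ha haV).trans ?_
  gcongr

lemma abs_sum_vonMangoldt_mul_familyWeight_le (hD : NearlyCoprimeFamily D d F δ) (hδ : 0 ≤ δ)
    (hF : 0 < F) (hV : 0 < V) (hx : x = 2 ^ I * V) (hh : 1 + Real.log x ≤ h) :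
    |∑ n ∈ Ioc 0 x, (Λ - truncate F Λ) n * familyWeight D d n|
      ≤ #D * (4 * h * (V * F ^ 2 + x * (δ * h)))
        + I * (√(2 * h ^ 5 * (3 * (F : ℝ) ^ 2 / V + 5 * δ + δ ^ 2)) * #D * x) := by
  have hlog : Real.log x ≤ h := by linarith
  have hharm : (harmonic x : ℝ) ≤ h := (harmonic_le_one_add_log x).trans hh
  have hlog₀ : ∀ v ≤ x, Real.log v ≤ h := fun v hv =>
    (monotone_arithmeticFunction_log hv).trans hlog
  have : 0 ≤ h := (Real.log_natCast_nonneg x).trans hlog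
  have hlogTerm := hD.abs_sum_mul_familyWeight_le (V := V * F) hδ monotone_arithmeticFunction_log
    hlog (a := truncate V (μ : ArithmeticFunction ℝ)) (L := 1)
    (fun v _ => (abs_truncate_le _ _ _).trans (abs_moebius_cast_le v))
    (fun v hv => by
      rw [truncate_apply, if_neg ((Nat.le_mul_of_pos_right V hF).trans_lt hv).not_ge]) hharm
  have hzetaTerm := hD.abs_sum_mul_familyWeight_le (H := 1) hδ monotone_zeta
    (by rw [ArithmeticFunction.natCoe_apply, ArithmeticFunction.zeta_apply]; split_ifs <;> simp)
    (fun v hv => (abs_truncate_moebius_mul_truncate_vonMangoldt_le F V v).trans (hlog₀ v hv))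
    (fun v => truncate_mul_truncate_eq_zero _ _) hharm
  have hbilinear := hD.abs_bilinear_sum_le hδ (abs_vaughanCoeff_le V)
    (fun n => vaughanCoeff_eq_zero) hF (fun m hm => by rw [sub_truncate_apply, if_pos hm])
    (fun m hm => (abs_vonMangoldt_sub_truncate_le hm F).trans hlog) hharm hV hx
  rw [vaughan_identity (truncate F Λ) V]
  simp only [ArithmeticFunction.add_apply, sub_eq_add_neg (_ * _), ArithmeticFunction.neg_apply,
    add_mul, neg_mul, sum_add_distrib, sum_neg_distrib]
  rw [Nat.cast_mul] at hlogTerm hzetaTerm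
  rw [abs_le] at hlogTerm hzetaTerm hbilinear ⊢
  constructor <;> linarith

end NearlyCoprimeFamily

lemma one_add_log_le (hA : 0 < A) : 1 + Real.log (((2 ^ A) ^ 6 : ℕ) : ℝ) ≤ 6 * A := by
  have hlog := Real.log_two_lt_d9
  have hA' : (1 : ℝ) ≤ A := mod_cast hA
  push_cast
  rw [← pow_mul, Real.log_pow]
  push_cast
  nlinarith

lemma delta_mul_pow_le (hh : 1 ≤ h) (hδ : 0 ≤ δ) (hδh : 1800 * δ * h ^ 7 ≤ 1) {k : ℕ}
    (hk : k ≤ 7) : δ * h ^ k ≤ 1 / 1800 := by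
  have := mul_le_mul_of_nonneg_left (pow_le_pow_right₀ hh hk) hδ
  linarith

lemma typeI_error_le (hF : 0 < F) (hh : 1 ≤ h) (hδF : 1 ≤ δ * F) (hδh : 1800 * δ * h ^ 7 ≤ 1) :
    4 * h * ((F : ℝ) ^ 3 * F ^ 2 + F ^ 6 * (δ * h)) ≤ 1 / 20 * (F : ℝ) ^ 6 := by
  have hF' : (0 : ℝ) < F := Nat.cast_pos.2 hF
  have hδ : 0 ≤ δ := (pos_of_mul_pos_left (zero_lt_one.trans_le hδF) hF'.le).le
  calc _ = 4 * h * ((F : ℝ) ^ 5 * 1 + F ^ 6 * (δ * h)) := by ring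
    _ ≤ 4 * h * ((F : ℝ) ^ 5 * (δ * F) + F ^ 6 * (δ * h)) := by gcongr
    _ = (4 * (δ * h ^ 1) + 4 * (δ * h ^ 2)) * (F : ℝ) ^ 6 := by ring
    _ ≤ (4 * (1 / 1800) + 4 * (1 / 1800)) * (F : ℝ) ^ 6 := by
        gcongr <;> exact delta_mul_pow_le hh hδ hδh (by norm_num)
    _ ≤ 1 / 20 * (F : ℝ) ^ 6 := by gcongr; norm_num

lemma typeII_error_le (hF : 0 < F) (hh : 1 ≤ h) (hδF : 1 ≤ δ * F) (hδh : 1800 * δ * h ^ 7 ≤ 1) :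
    h / 2 * √(2 * h ^ 5 * (3 * (F : ℝ) ^ 2 / (F : ℝ) ^ 3 + 5 * δ + δ ^ 2)) ≤ 1 / 20 := by
  have hF' : (0 : ℝ) < F := Nat.cast_pos.2 hF
  have hδ : 0 ≤ δ := (pos_of_mul_pos_left (zero_lt_one.trans_le hδF) hF'.le).le
  have hδ₁ := delta_mul_pow_le hh hδ hδh (k := 0) (by norm_num)
  have hinv : 3 * (F : ℝ) ^ 2 / (F : ℝ) ^ 3 ≤ 3 * δ := by
    rw [div_le_iff₀ (by positivity)]
    nlinarith [mul_le_mul_of_nonneg_left hδF (sq_nonneg (F : ℝ))]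
  rw [← Real.sqrt_sq (show 0 ≤ h / 2 by linarith), ← Real.sqrt_mul (sq_nonneg _)]
  refine Real.sqrt_le_iff.2 ⟨by norm_num, ?_⟩
  calc _ ≤ (h / 2) ^ 2 * (2 * h ^ 5 * (3 * δ + 5 * δ + δ * 1)) := by
        rw [sq δ]
        gcongr
        linarith
    _ = 9 / 2 * (δ * h ^ 7) := by ring
    _ ≤ (1 / 20) ^ 2 := by linarith

lemma NearlyCoprimeFamily.abs_discrepancy_le (hD : NearlyCoprimeFamily D d (2 ^ A) δ) (hA : 0 < A)
    (hδA : 1 ≤ δ * 2 ^ A) (hδh : 1800 * δ * (6 * A : ℝ) ^ 7 ≤ 1) :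
    |∑ n ∈ Ioc 0 ((2 ^ A) ^ 6), (Λ - truncate (2 ^ A) Λ) n * familyWeight D d n|
      ≤ 1 / 10 * (#D * ((2 : ℝ) ^ A) ^ 6) := by
  have hF : 0 < 2 ^ A := by positivity
  have hδ : 0 ≤ δ := (pos_of_mul_pos_left (zero_lt_one.trans_le hδA) (by positivity)).le
  have hh : (1 : ℝ) ≤ 6 * A := by
    have : (1 : ℝ) ≤ A := mod_cast hA
    linarith
  have hbound := hD.abs_sum_vonMangoldt_mul_familyWeight_le (V := (2 ^ A) ^ 3) (I := 3 * A) hδ hF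
    (by positivity) (by ring) (one_add_log_le hA)
  have hI := typeI_error_le hF hh (by exact_mod_cast hδA) hδh
  have hII := typeII_error_le hF hh (by exact_mod_cast hδA) hδh
  push_cast at hbound hI hII
  have hI' := mul_le_mul_of_nonneg_left hI (#D).cast_nonneg
  have hII' := mul_le_mul_of_nonneg_right hII
    (show (0 : ℝ) ≤ #D * ((2 : ℝ) ^ A) ^ 6 by positivity)
  linarith

/-- The primes up to `x` that are `1` modulo `m`. -/
def primesOneMod (x m : ℕ) : Finset ℕ := {p ∈ Ioc 0 x | p.Prime ∧ p ≡ 1 [MOD m]}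

lemma sum_modEq_vonMangoldt_sub_truncate_le (U m x : ℕ) :
    ∑ n ∈ Ioc 0 x with n ≡ 1 [MOD m], (Λ - truncate U Λ) n
      ≤ Real.log x * #(primesOneMod x m) + (Chebyshev.psi x - Chebyshev.theta x) := by
  have hle : ∀ n, (Λ - truncate U Λ) n ≤ Λ n := fun n => by
    rw [sub_truncate_apply]
    split_ifs
    exacts [ArithmeticFunction.vonMangoldt_nonneg, le_rfl]
  rw [Chebyshev.psi_sub_theta_eq_sum_not_prime, Nat.floor_natCast,
    ← sum_filter_add_sum_filter_not _ (fun n => n.Prime), filter_filter, filter_filter]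
  gcongr ?_ + ?_
  · rw [mul_comm, ← nsmul_eq_mul]
    simp only [primesOneMod, and_comm (b := _ ≡ _ [MOD m])]
    refine sum_le_card_nsmul _ _ _ fun n hn => ?_
    exact (le_abs_self _).trans (abs_vonMangoldt_sub_truncate_le
      (mem_Ioc.1 (mem_filter.1 hn).1).2 U)
  · exact (sum_le_sum fun n _ => hle n).trans (sum_le_sum_of_subset_of_nonneg
      (monotone_filter_right _ fun n _ hn => hn.2)
      fun _ _ _ => ArithmeticFunction.vonMangoldt_nonneg)

lemma sum_vonMangoldt_sub_truncate (hF : F ≤ x) :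
    ∑ n ∈ Ioc 0 x, (Λ - truncate F Λ) n = Chebyshev.psi x - Chebyshev.psi F := by
  rw [Chebyshev.psi, Chebyshev.psi, Nat.floor_natCast, Nat.floor_natCast,
    ← sum_Ioc_consecutive _ F.zero_le hF, ← sum_Ioc_consecutive _ F.zero_le hF,
    add_sub_cancel_left, sum_eq_zero fun n hn => by
      rw [sub_truncate_apply, if_pos (mem_Ioc.1 hn).2], zero_add]
  exact sum_congr rfl fun n hn => by rw [sub_truncate_apply, if_neg (mem_Ioc.1 hn).1.not_ge]

lemma psi_pow_six_sub_psi_ge (hh : 1 + Real.log ((F ^ 6 : ℕ) : ℝ) ≤ h) (hhF : 1800 * h ≤ F) :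
    6 / 10 * (F : ℝ) ^ 6 ≤ Chebyshev.psi ((F ^ 6 : ℕ) : ℝ) - Chebyshev.psi F := by
  have hlog₂ := Real.log_two_gt_d9
  have hlog₂' := Real.log_two_lt_d9
  have hlog₄ : Real.log 4 ≤ 2 := by
    rw [show (4 : ℝ) = 2 ^ 2 by norm_num, Real.log_pow]
    push_cast
    linarith
  have hF : (1800 : ℝ) ≤ F := by linarith [Real.log_natCast_nonneg (F ^ 6)]
  have hx : (F : ℝ) * 1800 ≤ F ^ 6 := by
    calc (F : ℝ) * 1800 ≤ F * F := by gcongr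
      _ = F ^ 2 := (sq _).symm
      _ ≤ F ^ 6 := pow_le_pow_right₀ (by linarith) (by norm_num)
  have hlogx : Real.log (((F ^ 6 : ℕ) : ℝ) + 1) ≤ F := by
    have hx₁ : (1 : ℝ) ≤ (F ^ 6 : ℕ) := by
      push_cast
      linarith
    have hmono := Real.log_le_log (by linarith) (show ((F ^ 6 : ℕ) : ℝ) + 1 ≤ 2 * (F ^ 6 : ℕ) by
      linarith)
    rw [Real.log_mul two_ne_zero (by positivity)] at hmono
    linarith
  have hlower := Chebyshev.psi_ge (F ^ 6)
  have hupper := Chebyshev.psi_le_const_mul_self F.cast_nonneg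
  push_cast at hlower hlogx ⊢
  nlinarith

lemma psi_sub_theta_pow_six_le (hF : 0 < F) (hh : Real.log ((F ^ 6 : ℕ) : ℝ) ≤ h) :
    Chebyshev.psi ((F ^ 6 : ℕ) : ℝ) - Chebyshev.theta ((F ^ 6 : ℕ) : ℝ) ≤ 2 * (F : ℝ) ^ 3 * h := by
  refine (Chebyshev.psi_sub_theta_le (Nat.one_le_cast.2 (Nat.pow_pos hF))).trans ?_
  have hsqrt : √((F ^ 6 : ℕ) : ℝ) = (F : ℝ) ^ 3 := by
    rw [Nat.cast_pow, show (F : ℝ) ^ 6 = (F ^ 3) ^ 2 by ring, Real.sqrt_sq (by positivity)]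
  rw [hsqrt]
  gcongr

namespace NearlyCoprimeFamily

lemma sum_mul_sum_modEq_le (hD : NearlyCoprimeFamily D d F δ) (hF : 0 < F)
    (hh : Real.log ((F ^ 6 : ℕ) : ℝ) ≤ h) (hhF : 1800 * h ≤ F) :
    ∑ i ∈ D, (d i : ℝ) * ∑ n ∈ Ioc 0 (F ^ 6) with n ≡ 1 [MOD d i], (Λ - truncate F Λ) n
      ≤ h * ∑ i ∈ D, (d i : ℝ) * #(primesOneMod (F ^ 6) (d i)) + 1 / 10 * (#D * (F : ℝ) ^ 6) := by
  have : 0 ≤ h := (Real.log_natCast_nonneg _).trans hh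
  have hF₁ : (1 : ℝ) ≤ F := Nat.one_le_cast.2 hF
  have hprimePowers : (F : ℝ) * (2 * (F : ℝ) ^ 3 * h) ≤ 1 / 10 * (F : ℝ) ^ 6 := by
    calc _ = (F : ℝ) ^ 4 * (2 * h) := by ring
      _ ≤ (F : ℝ) ^ 4 * (1 / 10 * (F : ℝ) ^ 2) := by
          refine mul_le_mul_of_nonneg_left ?_ (by positivity)
          nlinarith
      _ = _ := by ring
  calc _ ≤ ∑ i ∈ D, ((d i : ℝ) * (h * #(primesOneMod (F ^ 6) (d i))) + 1 / 10 * (F : ℝ) ^ 6) := by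
        refine sum_le_sum fun i hi => ?_
        refine (mul_le_mul_of_nonneg_left (sum_modEq_vonMangoldt_sub_truncate_le F (d i) (F ^ 6))
          (d i).cast_nonneg).trans ?_
        rw [mul_add]
        refine add_le_add (by gcongr) (le_trans ?_ hprimePowers)
        exact mul_le_mul (Nat.cast_le.2 (hD.le i hi)) (psi_sub_theta_pow_six_le hF hh)
          (sub_nonneg.2 (Chebyshev.theta_le_psi _)) F.cast_nonneg
    _ = _ := by
        rw [sum_add_distrib, mul_sum, sum_const, nsmul_eq_mul]
        congr 1
        · exact sum_congr rfl fun i _ => by ring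
        · ring

theorem le_sum_mul_card_primesOneMod (hD : NearlyCoprimeFamily D d (2 ^ A) δ) (hA : 0 < A)
    (hδA : 1 ≤ δ * 2 ^ A) (hδh : 1800 * δ * (6 * A : ℝ) ^ 7 ≤ 1) :
    3 / 10 * (#D * ((2 : ℝ) ^ A) ^ 6)
      ≤ 6 * A * ∑ i ∈ D, (d i : ℝ) * #(primesOneMod ((2 ^ A) ^ 6) (d i)) := by
  have hA' : (1 : ℝ) ≤ 6 * A := by
    have : (1 : ℝ) ≤ A := mod_cast hA
    linarith
  have hlog := one_add_log_le hA
  have hhF : 1800 * (6 * A : ℝ) ≤ ((2 ^ A : ℕ) : ℝ) := by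
    push_cast
    calc 1800 * (6 * A : ℝ) ≤ 1800 * (6 * A : ℝ) ^ 7 * 1 := by
          rw [mul_one]
          gcongr
          exact le_self_pow₀ hA' (by norm_num)
      _ ≤ 1800 * (6 * A : ℝ) ^ 7 * (δ * 2 ^ A) := by gcongr
      _ = 1800 * δ * (6 * A : ℝ) ^ 7 * 2 ^ A := by ring
      _ ≤ 2 ^ A := mul_le_of_le_one_left (by positivity) hδh
  have hdisc := (abs_le.1 (hD.abs_discrepancy_le hA hδA hδh)).1
  have hupper := hD.sum_mul_sum_modEq_le (by positivity) (by linarith) hhF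
  have hlower := psi_pow_six_sub_psi_ge hlog hhF
  rw [sum_mul_familyWeight, sum_vonMangoldt_sub_truncate (Nat.le_self_pow (by norm_num) _)] at hdisc
  have hlower' := mul_le_mul_of_nonneg_left hlower (#D).cast_nonneg
  have hsize : 0 ≤ #D * ((2 : ℝ) ^ A) ^ 6 := by positivity
  push_cast at hupper hlower' hdisc
  linarith

end NearlyCoprimeFamily

end PrimesInProgressions

section ProductsOfPrimes

variable {P Q s : Finset ℕ} {j K w W x : ℕ} {δ : ℝ}

lemma nonCoprime_prod_le (hs : ∀ q ∈ s, q.Prime) (v : ℕ) :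
    nonCoprime (∏ q ∈ s, q) v ≤ #{q ∈ s | q ∣ v} := by
  by_cases hv : v.Coprime (∏ q ∈ s, q)
  · rw [nonCoprime_of_coprime hv]
    positivity
  · obtain ⟨q, hq, hqv⟩ : ∃ q ∈ s, ¬ v.Coprime q := by
      simpa [Nat.coprime_prod_right_iff] using hv
    rw [Nat.coprime_comm, (hs q hq).coprime_iff_not_dvd, not_not] at hqv
    rw [nonCoprime_of_not_coprime hv, Nat.one_le_cast, Nat.one_le_iff_ne_zero, card_ne_zero]
    exact ⟨q, mem_filter.2 ⟨hq, hqv⟩⟩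

lemma sum_nonCoprime_prod_le (hs : ∀ q ∈ s, q.Prime) (hw : 0 < w) (hsw : ∀ q ∈ s, w ≤ q) (N : ℕ) :
    ∑ v ∈ Ioc 0 N, nonCoprime (∏ q ∈ s, q) v ≤ #s / w * N := by
  calc _ ≤ ∑ v ∈ Ioc 0 N, (#{q ∈ s | q ∣ v} : ℝ) := sum_le_sum fun v _ => nonCoprime_prod_le hs v
    _ = ∑ q ∈ s, (#{v ∈ Ioc 0 N | q ∣ v} : ℝ) :=
        mod_cast sum_card_bipartiteAbove_eq_sum_card_bipartiteBelow _
    _ ≤ ∑ _q ∈ s, (N / w : ℝ) := by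
        refine sum_le_sum fun q hq => ?_
        rw [Nat.Ioc_filter_dvd_card_eq_div]
        refine Nat.cast_div_le.trans ?_
        have := hsw q hq
        gcongr
    _ = #s / w * N := by
        rw [sum_const, nsmul_eq_mul]
        ring

lemma prime_dvd_prod_primes_iff {q : ℕ} (hq : q.Prime) (hs : ∀ p ∈ s, p.Prime) :
    q ∣ ∏ p ∈ s, p ↔ q ∈ s := by
  refine ⟨fun h => ?_, fun h => dvd_prod_of_mem _ h⟩
  obtain ⟨p, hp, hqp⟩ := (hq.prime.dvd_finsetProd_iff _).1 h
  rwa [(Nat.prime_dvd_prime_iff_eq hq (hs p hp)).1 hqp]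

lemma card_mul_card_filter_mem_powersetCard {q : ℕ} (hq : q ∈ P) (j : ℕ) :
    #P * #{t ∈ P.powersetCard j | q ∈ t} = j * #(P.powersetCard j) := by
  cases j with
  | zero => simp
  | succ j =>
    have hcard := card_filter_powersetCard_subset {q} P (j + 1) (singleton_subset_iff.2 hq)
      (by simp)
    have hP := Nat.sub_add_cancel (card_pos.2 ⟨q, hq⟩)
    have hchoose := Nat.add_one_mul_choose_eq (#P - 1) j
    simp only [singleton_subset_iff, card_singleton, Nat.add_sub_cancel] at hcard
    rw [hP] at hchoose
    rw [hcard, card_powersetCard, hchoose, mul_comm]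

lemma card_mul_sum_card_filter_mem_powersetCard {t : Finset ℕ} (ht : t ∈ P.powersetCard j) :
    #P * ∑ s ∈ P.powersetCard j, (#{q ∈ t | q ∈ s} : ℝ) = (j : ℝ) ^ 2 * #(P.powersetCard j) := by
  obtain ⟨htP, htj⟩ := mem_powersetCard.1 ht
  norm_cast
  calc _ = #P * ∑ q ∈ t, #{s ∈ P.powersetCard j | q ∈ s} := by
        congr 1
        exact sum_card_bipartiteAbove_eq_sum_card_bipartiteBelow (fun s q => q ∈ s)
    _ = ∑ _q ∈ t, j * #(P.powersetCard j) := by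
        rw [mul_sum]
        exact sum_congr rfl fun q hq => card_mul_card_filter_mem_powersetCard (htP hq) j
    _ = j ^ 2 * #(P.powersetCard j) := by
        rw [sum_const, htj, smul_eq_mul]
        ring

lemma card_mul_sum_sum_nonCoprime_prod_le (hP : ∀ q ∈ P, q.Prime) (j : ℕ) :
    #P * ∑ s ∈ P.powersetCard j, ∑ t ∈ P.powersetCard j, nonCoprime (∏ q ∈ t, q) (∏ q ∈ s, q)
      ≤ (j : ℝ) ^ 2 * #(P.powersetCard j) ^ 2 := by
  have hprimes : ∀ s ∈ P.powersetCard j, ∀ q ∈ s, q.Prime := fun s hs q hq =>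
    hP q ((mem_powersetCard.1 hs).1 hq)
  have hcommon : ∀ t ∈ P.powersetCard j, ∀ s ∈ P.powersetCard j,
      nonCoprime (∏ q ∈ t, q) (∏ q ∈ s, q) ≤ #{q ∈ t | q ∈ s} := fun t ht s hs => by
    refine (nonCoprime_prod_le (hprimes t ht) _).trans_eq ?_
    rw [filter_congr fun q hq => prime_dvd_prod_primes_iff (hprimes t ht q hq) (hprimes s hs)]
  calc _ ≤ #P * ∑ t ∈ P.powersetCard j, ∑ s ∈ P.powersetCard j, (#{q ∈ t | q ∈ s} : ℝ) := by
        rw [sum_comm]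
        gcongr with t ht s hs
        exact hcommon t ht s hs
    _ = (j : ℝ) ^ 2 * #(P.powersetCard j) ^ 2 := by
        rw [mul_sum, sum_congr rfl fun t ht => card_mul_sum_card_filter_mem_powersetCard ht,
          sum_const, nsmul_eq_mul]
        ring

theorem nearlyCoprimeFamily_powersetCard (hP : ∀ q ∈ P, q.Prime) (hne : P.Nonempty) (hw : 0 < w)
    (hwP : ∀ q ∈ P, w ≤ q) (hPW : ∀ q ∈ P, q ≤ W) (hjw : j / w ≤ δ) (hjP : (j : ℝ) ^ 2 ≤ δ * #P) :
    NearlyCoprimeFamily (P.powersetCard j) (fun s => ∏ q ∈ s, q) (W ^ j) δ where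
  pos s hs := prod_pos fun q hq => (hP q ((mem_powersetCard.1 hs).1 hq)).pos
  le s hs := by
    obtain ⟨hsP, hsj⟩ := mem_powersetCard.1 hs
    exact hsj ▸ prod_le_pow_card _ _ _ fun q hq => hPW q (hsP hq)
  sum_nonCoprime_le s hs N := by
    obtain ⟨hsP, hsj⟩ := mem_powersetCard.1 hs
    refine (sum_nonCoprime_prod_le (fun q hq => hP q (hsP hq)) hw
      (fun q hq => hwP q (hsP hq)) N).trans ?_
    rw [hsj]
    gcongr
  sum_sum_nonCoprime_le := by
    refine le_of_mul_le_mul_left ((card_mul_sum_sum_nonCoprime_prod_le hP j).trans ?_)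
      (Nat.cast_pos.2 (card_pos.2 hne))
    calc (j : ℝ) ^ 2 * #(P.powersetCard j) ^ 2 ≤ δ * #P * #(P.powersetCard j) ^ 2 := by gcongr
      _ = #P * (δ * #(P.powersetCard j) ^ 2) := by ring

lemma sum_powersetCard_sum_powersetCard (hjK : j ≤ K) (f : Finset ℕ → ℝ) :
    ∑ Q ∈ P.powersetCard K, ∑ s ∈ Q.powersetCard j, f s
      = ((#P - j).choose (K - j) : ℝ) * ∑ s ∈ P.powersetCard j, f s := by
  have hsubset : ∀ Q ∈ P.powersetCard K,
      Q.powersetCard j = {s ∈ P.powersetCard j | s ⊆ Q} := fun Q hQ => by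
    ext s
    simp only [mem_filter, mem_powersetCard]
    exact ⟨fun h => ⟨⟨h.1.trans (mem_powersetCard.1 hQ).1, h.2⟩, h.1⟩, fun h => ⟨h.2, h.1.2⟩⟩
  rw [sum_congr rfl fun Q hQ => by rw [hsubset Q hQ, sum_filter], sum_comm, mul_sum]
  refine sum_congr rfl fun s hs => ?_
  obtain ⟨hsP, hsj⟩ := mem_powersetCard.1 hs
  rw [← sum_filter, sum_const, nsmul_eq_mul,
    card_filter_powersetCard_subset s P K hsP (hsj.le.trans hjK), hsj]

lemma exists_powersetCard_le_sum (hjK : j ≤ K) (hK : K ≤ #P) {f : Finset ℕ → ℝ} {c : ℝ}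
    (hf : c * #(P.powersetCard j) ≤ ∑ s ∈ P.powersetCard j, f s) :
    ∃ Q ∈ P.powersetCard K, c * K.choose j ≤ ∑ s ∈ Q.powersetCard j, f s := by
  refine exists_le_of_sum_le (powersetCard_nonempty.2 hK) ?_
  have hchoose : ((#P).choose K : ℝ) * K.choose j = (#P).choose j * (#P - j).choose (K - j) :=
    mod_cast Nat.choose_mul hjK
  rw [sum_powersetCard_sum_powersetCard hjK, sum_const, nsmul_eq_mul, card_powersetCard]
  rw [card_powersetCard] at hf
  calc ((#P).choose K : ℝ) * (c * K.choose j)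
      = (#P - j).choose (K - j) * (c * (#P).choose j) := by linear_combination c * hchoose
    _ ≤ _ := by gcongr

lemma card_filter_prime_powersetCard_le_omegaStar (hQ : ∀ q ∈ Q, q.Prime) (j : ℕ) {m : ℕ}
    (hm : 0 < m) :
    #{s ∈ Q.powersetCard j | ((∏ q ∈ s, q) * m + 1).Prime} ≤ omegaStar ((∏ q ∈ Q, q) * m) := by
  have hpos : 0 < ∏ q ∈ Q, q := prod_pos fun q hq => (hQ q hq).pos
  refine card_le_card_of_injOn (fun s => (∏ q ∈ s, q) * m) (fun s hs => ?_)
    fun s hs t ht hst => ?_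
  · simp only [coe_filter, mem_powersetCard, Set.mem_ofPred_eq] at hs
    simp only [coe_filter, Nat.mem_divisors, Set.mem_ofPred_eq]
    exact ⟨⟨Nat.mul_dvd_mul_right (prod_dvd_prod_of_subset _ _ _ hs.1.1) m, by positivity⟩, hs.2⟩
  · simp only [coe_filter, mem_powersetCard, Set.mem_ofPred_eq] at hs ht
    rw [← Nat.primeFactors_prod fun p hp => hQ p (hs.1.1 hp),
      ← Nat.primeFactors_prod fun p hp => hQ p (ht.1.1 hp), Nat.eq_of_mul_eq_mul_right hm hst]

lemma card_primesOneMod_le {d : ℕ} (hd : 0 < d) :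
    #(primesOneMod x d) ≤ #{m ∈ Ioc 0 (x / d) | (d * m + 1).Prime} := by
  refine card_le_card_of_surjOn (fun m => d * m + 1) fun p hp => ?_
  simp only [primesOneMod, coe_filter, mem_Ioc, Set.mem_ofPred_eq] at hp
  obtain ⟨⟨-, hpx⟩, hprime, hmod⟩ := hp
  obtain ⟨m, hm⟩ := (Nat.modEq_iff_dvd' hprime.one_lt.le).1 hmod.symm
  have hpm : d * m + 1 = p := by have := hprime.one_lt; omega
  refine ⟨m, ?_, hpm⟩
  simp only [coe_filter, mem_Ioc, Set.mem_ofPred_eq, hpm, Nat.le_div_iff_mul_le hd]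
  refine ⟨⟨Nat.pos_of_ne_zero ?_, by rw [mul_comm]; omega⟩, hprime⟩
  rintro rfl
  exact hprime.one_lt.ne' (by omega)

lemma exists_le_card_filter_mul_add_one_prime {ι : Type*} {D : Finset ι} {d : ι → ℕ} {L U : ℕ}
    {y : ℝ} (hL : 0 < L) (hU : 0 < U) (hLx : L ≤ x) (hLd : ∀ i ∈ D, L ≤ d i)
    (hdU : ∀ i ∈ D, d i ≤ U)
    (hy : y * (U * (x / L : ℕ)) ≤ ∑ i ∈ D, (d i : ℝ) * #(primesOneMod x (d i))) :
    ∃ m ∈ Ioc 0 (x / L), y ≤ #{i ∈ D | (d i * m + 1).Prime} := by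
  have hnonempty : (Ioc 0 (x / L)).Nonempty := nonempty_Ioc.2 (Nat.div_pos hLx hL)
  refine exists_le_of_sum_le hnonempty (le_of_mul_le_mul_left ?_ (Nat.cast_pos.2 hU : (0 : ℝ) < U))
  calc (U : ℝ) * ∑ _m ∈ Ioc 0 (x / L), y = y * (U * (x / L : ℕ)) := by
        rw [sum_const, Nat.card_Ioc, nsmul_eq_mul, Nat.sub_zero]
        ring
    _ ≤ ∑ i ∈ D, (d i : ℝ) * #(primesOneMod x (d i)) := hy
    _ ≤ ∑ i ∈ D, (U : ℝ) * #{m ∈ Ioc 0 (x / L) | (d i * m + 1).Prime} := by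
        refine sum_le_sum fun i hi => ?_
        have hdi := hLd i hi
        have hcard : #(primesOneMod x (d i)) ≤ #{m ∈ Ioc 0 (x / L) | (d i * m + 1).Prime} :=
          (card_primesOneMod_le (hL.trans_le hdi)).trans (by gcongr)
        have hdiU := hdU i hi
        gcongr
    _ = U * ∑ m ∈ Ioc 0 (x / L), (#{i ∈ D | (d i * m + 1).Prime} : ℝ) := by
        rw [← mul_sum]
        congr 1
        exact mod_cast sum_card_bipartiteAbove_eq_sum_card_bipartiteBelow
          (fun i m => (d i * m + 1).Prime)

lemma exists_le_omegaStar_of_le_sum {y : ℝ} (hQ : ∀ q ∈ Q, q.Prime) (hw : 0 < w) (hW : 0 < W)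
    (hwQ : ∀ q ∈ Q, w ≤ q) (hQW : ∀ q ∈ Q, q ≤ W) (hx : w ^ j ≤ x)
    (hy : y * ((W ^ j : ℕ) * (x / w ^ j : ℕ))
      ≤ ∑ s ∈ Q.powersetCard j, ((∏ q ∈ s, q : ℕ) : ℝ) * #(primesOneMod x (∏ q ∈ s, q))) :
    ∃ n, 0 < n ∧ n ≤ W ^ #Q * x ∧ y ≤ omegaStar n := by
  have hwpow : ∀ s ∈ Q.powersetCard j, w ^ j ≤ ∏ q ∈ s, q := fun s hs => by
    obtain ⟨hsQ, hsj⟩ := mem_powersetCard.1 hs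
    exact hsj ▸ pow_card_le_prod _ _ _ fun q hq => hwQ q (hsQ hq)
  have hWpow : ∀ s ∈ Q.powersetCard j, ∏ q ∈ s, q ≤ W ^ j := fun s hs => by
    obtain ⟨hsQ, hsj⟩ := mem_powersetCard.1 hs
    exact hsj ▸ prod_le_pow_card _ _ _ fun q hq => hQW q (hsQ hq)
  obtain ⟨m, hm, hym⟩ := exists_le_card_filter_mul_add_one_prime (Nat.pow_pos hw) (Nat.pow_pos hW)
    hx hwpow hWpow hy
  obtain ⟨hm₀, hmx⟩ := mem_Ioc.1 hm
  refine ⟨(∏ q ∈ Q, q) * m, Nat.mul_pos (prod_pos fun q hq => (hQ q hq).pos) hm₀, ?_,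
    hym.trans (Nat.cast_le.2 (card_filter_prime_powersetCard_le_omegaStar hQ j hm₀))⟩
  exact Nat.mul_le_mul (prod_le_pow_card _ _ _ hQW) (hmx.trans (Nat.div_le_self _ _))

end ProductsOfPrimes

section Conclusion

variable {P : Finset ℕ} {A j k v : ℕ}

lemma theta_sub_theta_le {M N : ℕ} (hMN : M ≤ N) :
    Chebyshev.theta N - Chebyshev.theta M ≤ Real.log N * #{q ∈ Ioc M N | q.Prime} := by
  rw [Chebyshev.theta, Chebyshev.theta, Nat.floor_natCast, Nat.floor_natCast, sum_filter,
    sum_filter, ← sum_Ioc_consecutive _ M.zero_le hMN, add_sub_cancel_left, ← sum_filter, mul_comm,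
    ← nsmul_eq_mul]
  refine sum_le_card_nsmul _ _ _ fun q hq => ?_
  obtain ⟨hqI, hq⟩ := mem_filter.1 hq
  exact Real.log_le_log (Nat.cast_pos.2 hq.pos) (Nat.cast_le.2 (mem_Ioc.1 hqI).2)

lemma eventually_le_theta_eight_mul_sub_theta :
    ∀ᶠ t : ℕ in atTop, (t : ℝ) ≤ Chebyshev.theta (8 * t : ℕ) - Chebyshev.theta t := by
  have hlog := (isLittleO_log_rpow_atTop (r := 1 / 2) (by norm_num)).bound
    (show (0 : ℝ) < 1 / 16 by norm_num)
  have htendsto : Tendsto (fun t : ℕ => (8 * t : ℝ)) atTop atTop :=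
    tendsto_natCast_atTop_atTop.const_mul_atTop (by norm_num)
  filter_upwards [htendsto.eventually hlog, eventually_ge_atTop 4] with t ht ht₄
  have ht₄' : (4 : ℝ) ≤ t := mod_cast ht₄
  rw [← Real.sqrt_eq_rpow, Real.norm_of_nonneg (Real.log_nonneg (by linarith)),
    Real.norm_of_nonneg (Real.sqrt_nonneg _)] at ht
  have hsqrt : √(8 * t : ℝ) * √(8 * t) = 8 * t := Real.mul_self_sqrt (by linarith)
  have hsqrtlog : 2 * √(8 * t : ℝ) * Real.log (8 * t) ≤ t := by
    have := mul_le_mul_of_nonneg_left ht (Real.sqrt_nonneg (8 * t))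
    linarith
  have hlogsucc : Real.log (8 * t + 1 : ℝ) ≤ 1 + t / 2 := by
    have hdouble : Real.log (8 * t + 1 : ℝ) ≤ Real.log (2 * (8 * t)) :=
      Real.log_le_log (by positivity) (by linarith)
    rw [Real.log_mul (by norm_num) (by linarith)] at hdouble
    have : √(8 * t : ℝ) ≤ 8 * t := Real.sqrt_le_iff.2 ⟨by linarith, by nlinarith⟩
    linarith [Real.log_two_lt_d9]
  have hlower := Chebyshev.theta_ge (8 * t)
  have hupper := Chebyshev.theta_le_log4_mul_x (x := t) t.cast_nonneg
  rw [show (4 : ℝ) = 2 ^ 2 by norm_num, Real.log_pow] at hupper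
  push_cast at hlower hupper ⊢
  nlinarith [Real.log_two_gt_d9]

lemma eventually_two_pow_le_mul_card_primes :
    ∀ᶠ v : ℕ in atTop, (2 : ℝ) ^ v ≤ (v + 3) * #{q ∈ Ioc (2 ^ v) (2 ^ (v + 3)) | q.Prime} := by
  filter_upwards [(tendsto_pow_atTop_atTop_of_one_lt (one_lt_two (α := ℕ))).eventually
    eventually_le_theta_eight_mul_sub_theta] with v hv
  rw [show 8 * 2 ^ v = 2 ^ (v + 3) by ring] at hv
  have htheta := hv.trans (theta_sub_theta_le (Nat.pow_le_pow_right two_pos (by omega)))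
  have hlog : Real.log ((2 ^ (v + 3) : ℕ) : ℝ) ≤ v + 3 := by
    push_cast
    rw [Real.log_pow]
    push_cast
    exact mul_le_of_le_one_right (by positivity) (by linarith [Real.log_two_lt_d9])
  rw [Nat.cast_pow, Nat.cast_ofNat] at htheta
  exact htheta.trans (mul_le_mul_of_nonneg_right hlog (Nat.cast_nonneg _))

lemma sixtyFour_pow_le_choose (j : ℕ) : (64 : ℝ) ^ j ≤ (65 * j).choose j := by
  refine le_trans ?_ (Nat.pow_le_choose (α := ℝ) j (65 * j))
  rw [le_div_iff₀ (Nat.cast_pos.2 j.factorial_pos)]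
  calc (64 : ℝ) ^ j * j.factorial ≤ 64 ^ j * (j : ℝ) ^ j := by
        gcongr
        exact mod_cast j.factorial_le_pow
    _ = (64 * j) ^ j := (mul_pow _ _ _).symm
    _ ≤ _ := by
        gcongr
        exact mod_cast (show 64 * j ≤ 65 * j + 1 - j by omega)

lemma four_pow_mul_div_le (hA : 0 < A) (hAj : 20 * (A : ℝ) ≤ 2 ^ j) (w x : ℕ) :
    (4 : ℝ) ^ j * (((8 * w) ^ j : ℕ) * (x / w ^ j : ℕ))
      ≤ 3 / 10 * x / (6 * A) * (65 * j).choose j := by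
  have hdiv : ((w ^ j : ℕ) : ℝ) * (x / w ^ j : ℕ) ≤ x := mod_cast Nat.mul_div_le x (w ^ j)
  calc _ = (32 : ℝ) ^ j * ((w ^ j : ℕ) * (x / w ^ j : ℕ)) := by
        rw [mul_pow, show (32 : ℝ) = 4 * 8 by norm_num, mul_pow]
        push_cast
        ring
    _ ≤ 32 ^ j * x := by gcongr
    _ ≤ 3 / 10 * x / (6 * A) * (32 ^ j * 2 ^ j) := by
        rw [div_mul_eq_mul_div, le_div_iff₀ (by positivity)]
        nlinarith [mul_le_mul_of_nonneg_left hAj (show (0 : ℝ) ≤ 32 ^ j * x by positivity)]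
    _ ≤ _ := by
        rw [← mul_pow]
        norm_num1
        gcongr
        exact sixtyFour_pow_le_choose j

lemma le_sum_mul_card_primesOneMod_powersetCard (hj : 0 < j) (hP : ∀ q ∈ P, q.Prime)
    (hvP : ∀ q ∈ P, 2 ^ v ≤ q) (hPv : ∀ q ∈ P, q ≤ 2 ^ (v + 3))
    (hcard : (2 : ℝ) ^ v ≤ (v + 3) * #P)
    (hvj : (v + 3) * (j : ℝ) ^ 2 * (1800 * (6 * ((v + 3) * j)) ^ 7) ≤ 2 ^ v) :
    3 / 10 * ((2 ^ ((v + 3) * j)) ^ 6 : ℕ) / (6 * ((v + 3) * j : ℕ)) * #(P.powersetCard j)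
      ≤ ∑ s ∈ P.powersetCard j,
        ((∏ q ∈ s, q : ℕ) : ℝ) * #(primesOneMod ((2 ^ ((v + 3) * j)) ^ 6) (∏ q ∈ s, q)) := by
  have hj₁ : (1 : ℝ) ≤ j := Nat.one_le_cast.2 hj
  have hj₂ : (j : ℝ) ≤ (j : ℝ) ^ 2 := le_self_pow₀ hj₁ two_ne_zero
  have hne : P.Nonempty := nonempty_iff_ne_empty.2 fun h => by
    rw [h, card_empty, Nat.cast_zero, mul_zero] at hcard
    exact hcard.not_gt (by positivity)
  have hfamily : NearlyCoprimeFamily (P.powersetCard j) (fun s => ∏ q ∈ s, q)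
      (2 ^ ((v + 3) * j)) ((v + 3) * (j : ℝ) ^ 2 / 2 ^ v) := by
    rw [pow_mul]
    refine nearlyCoprimeFamily_powersetCard hP hne (by positivity) hvP hPv ?_ ?_
    · push_cast
      gcongr
      nlinarith [v.cast_nonneg (α := ℝ)]
    · rw [div_mul_eq_mul_div, le_div_iff₀ (by positivity)]
      nlinarith [mul_le_mul_of_nonneg_left hcard (sq_nonneg (j : ℝ))]
  rw [div_mul_eq_mul_div, div_le_iff₀ (by positivity), mul_comm _ (6 * _), Nat.cast_pow,
    Nat.cast_pow, Nat.cast_ofNat, mul_assoc, mul_comm (_ ^ 6)]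
  refine hfamily.le_sum_mul_card_primesOneMod (by positivity) ?_ ?_
  · rw [div_mul_eq_mul_div, one_le_div₀ (by positivity)]
    have hpow : (2 : ℝ) ^ v ≤ 2 ^ ((v + 3) * j) := pow_le_pow_right₀ one_le_two (by nlinarith)
    refine hpow.trans (le_mul_of_one_le_left (by positivity) ?_)
    nlinarith [v.cast_nonneg (α := ℝ)]
  · rw [mul_div_assoc', div_mul_eq_mul_div, div_le_one (by positivity)]
    push_cast
    linarith

lemma sixtyFive_mul_le_card (hj : 0 < j) (hcard : (2 : ℝ) ^ v ≤ (v + 3) * #P)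
    (hvj : (v + 3) * (j : ℝ) ^ 2 * (1800 * (6 * ((v + 3) * j)) ^ 7) ≤ 2 ^ v) : 65 * j ≤ #P := by
  have hj₁ : (1 : ℝ) ≤ j := Nat.one_le_cast.2 hj
  have hpow : (1 : ℝ) ≤ (6 * ((v + 3) * j)) ^ 7 :=
    one_le_pow₀ (by nlinarith [v.cast_nonneg (α := ℝ)])
  have hle : (v + 3 : ℝ) * (65 * j) ≤ (v + 3) * #P := by
    calc (v + 3 : ℝ) * (65 * j) ≤ (v + 3) * (j ^ 2 * (1800 * 1)) := by
          refine mul_le_mul_of_nonneg_left ?_ (by positivity)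
          nlinarith
      _ ≤ (v + 3) * (j ^ 2 * (1800 * (6 * ((v + 3) * j)) ^ 7)) := by gcongr
      _ ≤ (v + 3) * #P := by linarith
  exact_mod_cast le_of_mul_le_mul_left hle (by positivity)

lemma exists_four_pow_le_omegaStar_of_primes (hj : 0 < j) (hP : ∀ q ∈ P, q.Prime)
    (hvP : ∀ q ∈ P, 2 ^ v ≤ q) (hPv : ∀ q ∈ P, q ≤ 2 ^ (v + 3))
    (hcard : (2 : ℝ) ^ v ≤ (v + 3) * #P)
    (hvj : (v + 3) * (j : ℝ) ^ 2 * (1800 * (6 * ((v + 3) * j)) ^ 7) ≤ 2 ^ v)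
    (hj₂ : 20 * ((v + 3) * j : ℝ) ≤ 2 ^ j) :
    ∃ n, 0 < n ∧ n ≤ 2 ^ (71 * (v + 3) * j) ∧ (4 : ℝ) ^ j ≤ omegaStar n := by
  obtain ⟨Q, hQ, hsum⟩ := exists_powersetCard_le_sum (by omega)
    (sixtyFive_mul_le_card hj hcard hvj)
    (le_sum_mul_card_primesOneMod_powersetCard hj hP hvP hPv hcard hvj)
  obtain ⟨hQP, hQcard⟩ := mem_powersetCard.1 hQ
  obtain ⟨n, hn₀, hn, hω⟩ := exists_le_omegaStar_of_le_sum (w := 2 ^ v) (W := 8 * 2 ^ v) (j := j)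
    (fun q hq => hP q (hQP hq)) (by positivity) (by positivity) (fun q hq => hvP q (hQP hq))
    (fun q hq => (hPv q (hQP hq)).trans_eq (by ring))
    (by
      rw [← pow_mul, ← pow_mul]
      exact Nat.pow_le_pow_right two_pos (by nlinarith))
    ((four_pow_mul_div_le (by positivity) (by exact_mod_cast hj₂) _ _).trans hsum)
  refine ⟨n, hn₀, hn.trans_eq ?_, hω⟩
  rw [hQcard, show 8 * 2 ^ v = 2 ^ (v + 3) by ring, ← pow_mul, ← pow_mul, ← pow_add]
  congr 1; ring

lemma twentyThree_mul_le_two_pow (hk : 10 ≤ k) : 23 * k ≤ 2 ^ k := by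
  induction k, hk using Nat.le_induction with
  | base => norm_num
  | succ k hk ih => rw [pow_succ]; omega

lemma eventually_exists_four_pow_le_omegaStar :
    ∀ᶠ k : ℕ in atTop,
      ∃ n, 0 < n ∧ n ≤ 2 ^ (1633 * k * 2 ^ k) ∧ (4 : ℝ) ^ 2 ^ k ≤ omegaStar n := by
  have hprimes := (tendsto_id.const_mul_atTop' (show 0 < 20 by norm_num)).eventually
    eventually_two_pow_le_mul_card_primes
  filter_upwards [hprimes, eventually_ge_atTop 10] with k hcard hk
  have hlin := twentyThree_mul_le_two_pow hk
  have hv : (((20 * k : ℕ) : ℝ) + 3) ≤ 2 ^ k := mod_cast (show 20 * k + 3 ≤ 2 ^ k by omega)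
  obtain ⟨n, hn₀, hn, hω⟩ := exists_four_pow_le_omegaStar_of_primes (v := 20 * k) (j := 2 ^ k)
    (by positivity) (fun q hq => (mem_filter.1 hq).2)
    (fun q hq => (mem_Ioc.1 (mem_filter.1 hq).1).1.le)
    (fun q hq => (mem_Ioc.1 (mem_filter.1 hq).1).2) hcard
    (by
      rw [Nat.cast_pow, Nat.cast_ofNat]
      calc _ ≤ 2 ^ k * ((2 : ℝ) ^ k) ^ 2 * (1800 * (6 * (2 ^ k * 2 ^ k)) ^ 7) := by gcongr
        _ = 503884800 * (2 : ℝ) ^ (17 * k) := by ring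
        _ ≤ 2 ^ 30 * (2 : ℝ) ^ (17 * k) := by gcongr; norm_num
        _ = 2 ^ (30 + 17 * k) := (pow_add _ _ _).symm
        _ ≤ 2 ^ (20 * k) := pow_le_pow_right₀ one_le_two (by omega))
    (by
      rw [Nat.cast_pow, Nat.cast_ofNat]
      calc _ ≤ 2 ^ 5 * (2 ^ k * (2 : ℝ) ^ k) := by gcongr; norm_num
        _ = 2 ^ (5 + (k + k)) := by rw [pow_add, pow_add]
        _ ≤ 2 ^ 2 ^ k := pow_le_pow_right₀ one_le_two (by omega))
  refine ⟨n, hn₀, hn.trans (Nat.pow_le_pow_right two_pos ?_), hω⟩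
  exact Nat.mul_le_mul_right _ (show 71 * (20 * k + 3) ≤ 1633 * k by omega)

lemma omegaStar_le_of_dvd {m n : ℕ} (h : n ∣ m) (hm : m ≠ 0) : omegaStar n ≤ omegaStar m :=
  card_le_card (filter_subset_filter _ (Nat.divisors_subset_of_dvd hm h))

lemma floor_div_le_card_of_le_omegaStar {n : ℕ} (hn : 0 < n) {x y Y : ℝ} (hx : 0 ≤ x)
    (hnY : (n : ℝ) ≤ Y) (hy : y ≤ omegaStar n) :
    ⌊x / Y⌋₊ ≤ #{n ∈ Icc 1 ⌊x⌋₊ | y ≤ (omegaStar n : ℝ)} := by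
  have hY : 0 < Y := (Nat.cast_pos.2 hn).trans_le hnY
  calc ⌊x / Y⌋₊ = #(Icc 1 ⌊x / Y⌋₊) := by simp
    _ ≤ _ := card_le_card_of_injOn (n * ·) (fun i hi => ?_)
        fun a _ b _ => Nat.eq_of_mul_eq_mul_left hn
  obtain ⟨hi₁, hi⟩ := mem_Icc.1 hi
  rw [Nat.le_floor_iff (by positivity), le_div_iff₀ hY] at hi
  have hpos : 0 < n * i := Nat.mul_pos hn hi₁
  refine mem_filter.2 ⟨mem_Icc.2 ⟨hpos, Nat.le_floor ?_⟩, hy.trans (Nat.cast_le.2 ?_)⟩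
  · rw [Nat.cast_mul, mul_comm]
    exact (by gcongr : (i : ℝ) * n ≤ i * Y).trans hi
  · exact omegaStar_le_of_dvd (Nat.dvd_mul_right n i) hpos.ne'

lemma exists_two_pow_near {L : ℝ} (hL : 2 ≤ L) :
    ∃ k : ℕ, L ≤ 2 ^ k ∧ (2 : ℝ) ^ k ≤ 2 * L ∧ k ≤ 3 * Real.log L := by
  obtain ⟨k, hkL, hLk⟩ := exists_nat_pow_near (show 1 ≤ L by linarith) one_lt_two
  have hpow : (2 : ℝ) ^ (k + 1) ≤ 2 * L := by rw [pow_succ']; gcongr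
  refine ⟨k + 1, hLk.le, hpow, ?_⟩
  have hlog := Real.log_le_log (by positivity) hpow
  have hlog₂ := Real.log_le_log two_pos hL
  rw [Real.log_pow, Real.log_mul two_ne_zero (by linarith)] at hlog
  nlinarith [Real.log_two_gt_d9, (k + 1).cast_nonneg (α := ℝ)]

lemma two_pow_le_rpow_log_log {y : ℝ} (hy : 0 < y) (hlog : 1 ≤ Real.log y)
    (hky : (2 : ℝ) ^ k ≤ 2 * Real.log y) (hk : k ≤ 3 * Real.log (Real.log y)) :
    (2 : ℝ) ^ (1633 * k * 2 ^ k) ≤ y ^ (10000 * Real.log (Real.log y)) := by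
  have hloglog := Real.log_nonneg hlog
  calc (2 : ℝ) ^ (1633 * k * 2 ^ k) ≤ Real.exp 1 ^ (1633 * k * 2 ^ k) := by
        gcongr
        linarith [Real.exp_one_gt_d9]
    _ = Real.exp (1633 * k * 2 ^ k) := by
        rw [← Real.exp_nat_mul, mul_one]
        push_cast
        rfl
    _ ≤ Real.exp (Real.log y * (10000 * Real.log (Real.log y))) := by
        refine Real.exp_le_exp.2 ?_
        calc 1633 * (k : ℝ) * 2 ^ k
            ≤ 1633 * (3 * Real.log (Real.log y)) * (2 * Real.log y) := by gcongr
          _ ≤ Real.log y * (10000 * Real.log (Real.log y)) := by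
            nlinarith [mul_nonneg (zero_le_one.trans hlog) hloglog]
    _ = _ := (Real.rpow_def_of_pos hy _).symm

lemma le_four_pow_of_log_le {y : ℝ} (hy : 0 < y) {m : ℕ} (hm : Real.log y ≤ m) : y ≤ 4 ^ m := by
  calc y = Real.exp (Real.log y) := (Real.exp_log hy).symm
    _ ≤ Real.exp m := Real.exp_le_exp.2 hm
    _ = Real.exp 1 ^ m := by rw [← Real.exp_nat_mul, mul_one]
    _ ≤ 4 ^ m := by
        gcongr
        linarith [Real.exp_one_lt_d9]

end Conclusion

end

theorem N_lower_bound :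
    ∃ c : ℝ, c > 0 ∧ ∃ y₀ : ℝ, ∀ x y : ℝ, x ≥ 1 → y ≥ y₀ →
      (⌊x / y ^ (c * Real.log (Real.log y))⌋₊ : ℝ)
        ≤ (((Finset.Icc 1 ⌊x⌋₊).filter (fun n => y ≤ (omegaStar n : ℝ))).card : ℝ) := by
  obtain ⟨K, hK⟩ := eventually_atTop.1 eventually_exists_four_pow_le_omegaStar
  refine ⟨10000, by norm_num, Real.exp (2 ^ (K + 1)), fun x y hx hy => ?_⟩
  have hy₀ : 0 < y := (Real.exp_pos _).trans_le hy
  have hlog : (2 : ℝ) ^ (K + 1) ≤ Real.log y := (Real.le_log_iff_exp_le hy₀).2 hy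
  have hlog₂ : 2 ≤ Real.log y := (le_self_pow₀ one_le_two K.succ_ne_zero).trans hlog
  obtain ⟨k, hyk, hky, hk⟩ := exists_two_pow_near hlog₂
  have hKk : K + 1 ≤ k := (pow_le_pow_iff_right₀ one_lt_two).1 (hlog.trans hyk)
  obtain ⟨n, hn₀, hn, hω⟩ := hK k (by omega)
  refine Nat.cast_le.2 (floor_div_le_card_of_le_omegaStar hn₀ (by linarith) ?_ ?_)
  · exact (mod_cast hn : (n : ℝ) ≤ 2 ^ (1633 * k * 2 ^ k)).trans
      (two_pow_le_rpow_log_log hy₀ (by linarith) hky hk)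
  · exact (le_four_pow_of_log_le hy₀ (by exact_mod_cast hyk)).trans hω
end
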